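/- Let X = L ∪ J ∪ R be a continuum in the class 𝒞 such that R is a singleton, L is nondegenerate, R ⊆ L, and L is a local dendrite. Then M ⊆ X belongs to 𝓜(X) if and only if exactly one of the following conditions holds: (1) M is a nonempty finite set; (2) M is a union of finitely many pairwise disjoint circles; (3) M is a cantoroid and M ⊆ L ∪ A for some arc A with R ⊆ A ⊆ R ∪ J and A ≠ R ∪ J. -/

import Mathlib

/-!
The hypotheses say that `J` is a ray `η` issuing from the point `r` of `L`, where `R = {r}`, and
winding down to all of `L` (`exists_tail`). A continuous image of a compact locally connected space
cannot follow the ray to infinity (`Tail.bounded`), since the ray comes close to two distinct points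
of `L` again and again. Hence a self-map of `X` preserves `L` or has range in some `L ∪ η [0, c]`, and
in either case a minimal set `M` lies in such a set (`Tail.minimal_bounded`), which is a Peano
continuum `Y` with finitely many circles. This is where the arc `A` comes from.

Minimal sets are cantoroids or unions of circles (`cantoroid_or_circles`). Subcontinua of `Y` are
locally connected, and a closed subset of `Y` has only countably many nondegenerate components, as
otherwise two of them close to each other would produce arbitrarily many small circles. If the
degenerate components of an infinite minimal set are not dense, then by the Baire category theorem
some component is open. Its images are finitely many open components, and an iterate of the map is
minimal on each of them, which is a Peano continuum `K` with finitely many circles. Such a `K` is a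
circle (`circle_of_minimal`): a fixed point free self-map forces circles in every part into which a
point separates `K` (`exists_circle_of_fixedPointFree`, `exists_circle_part`). As there are only
finitely many circles, some part of `K` is a free arc. Since minimal maps are irreducible, free points
have free preimages, so by minimality all points are free and `K` is a circle.

Conversely, each kind of set is minimal. Finite sets are permuted cyclically. A cantoroid
carries a minimal map constant on components, a limit of locally constant maps climbing finer and
finer clopen towers (`exists_minimal_of_cantoroid`). This map factors through a compact subset of
the line, and continuous maps from such sets into a Peano continuum extend by filling the gaps with
small paths, so it extends to `X` (`Tail.exists_extension`). For disjoint circles parametrised by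
`k i`, the inverse of `k i` extends to a circle-valued map `v i` of `X` trivial away from the circle:
near a point of the circle `L` is cut into two sides, which gives a map winding once around
(`exists_winding`), and a real-valued correction makes it inverse to `k i`. With these maps
the rotation `k i q ↦ k (i + 1) (q + √2)` extends to `X` (`Tail.mspace_of_circles`). All circles lie
in `L`, because a circle through the ray would contain all of it.

The three conditions exclude one another by cardinality and by their components.
-/

open Set Topology

/-- A topological space has no isolated points if no singleton is open. -/
def NoIsolatedPoints (Y : Type*) [TopologicalSpace Y] : Prop :=
  ∀ y : Y, ¬ IsOpen ({y} : Set Y)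

/-- `(M, f|_M)` is a minimal dynamical system with `f(M) = M`:
`M` is nonempty, `f(M) = M`, and `M` has no nonempty proper closed subset
invariant under `f|_M`. -/
def MinimalSystemOn {Y : Type*} [TopologicalSpace Y] (f : Y → Y) (M : Set Y) : Prop :=
  M.Nonempty ∧ f '' M = M ∧
    ∀ N, N ⊆ M → N.Nonempty → IsClosed N → f '' N ⊆ N → N = M

/-- The system `𝓜(Y)` of all compact sets `M ⊆ Y` such that there is a continuous
`f : Y → Y` with `f(M) = M` and `(M, f|_M)` a minimal dynamical system. -/
def MSpace (Y : Type*) [TopologicalSpace Y] : Set (Set Y) :=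
  {M | IsCompact M ∧ ∃ f : Y → Y, Continuous f ∧ MinimalSystemOn f M}

/-- `𝓜(Z)` for a subspace `Z ⊆ X` (carrying the subspace topology),
viewed as a system of subsets of `X`. -/
def MSetIn {X : Type*} [TopologicalSpace X] (Z : Set X) : Set (Set X) :=
  {M | ∃ M' ∈ MSpace (↥Z), M = Subtype.val '' M'}

/-- `𝓜*(L; R)`: members of `𝓜(L ∪ R)` (`= 𝓜(L ⊔ R)` for disjoint `L, R`) such that
`M ∩ L` and `M ∩ R` have the same cardinality. -/
def MStarIn {X : Type*} [TopologicalSpace X] (L R : Set X) : Set (Set X) :=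
  {M | M ∈ MSetIn (L ∪ R) ∧ Cardinal.mk ↥(M ∩ L) = Cardinal.mk ↥(M ∩ R)}

/-- An arc: a set homeomorphic to `[0,1]`. -/
def IsArc {X : Type*} [TopologicalSpace X] (A : Set X) : Prop :=
  Nonempty (↥A ≃ₜ ↥(Set.Icc (0:ℝ) 1))

/-- A ray: a set homeomorphic to `[0,∞)`. -/
def IsRaySet {X : Type*} [TopologicalSpace X] (A : Set X) : Prop :=
  Nonempty (↥A ≃ₜ ↥(Set.Ici (0:ℝ)))

/-- A Cantor set: nonempty, compact, totally disconnected, without isolated points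
(metrizability is inherited from the ambient space). -/
def IsCantorSet {X : Type*} [TopologicalSpace X] (M : Set X) : Prop :=
  M.Nonempty ∧ IsCompact M ∧ IsTotallyDisconnected M ∧ NoIsolatedPoints ↥M

/-- A circle: a set homeomorphic to the unit circle `S¹ ⊆ ℂ`. -/
def IsCircleSet {X : Type*} [TopologicalSpace X] (C : Set X) : Prop :=
  Nonempty (↥C ≃ₜ ↥(Metric.sphere (0:ℂ) 1))

/-- A cantoroid: a nonempty compact (metrizable) set without isolated points in which
the union of the degenerate (singleton) connected components is dense. -/
def IsCantoroid {X : Type*} [TopologicalSpace X] (M : Set X) : Prop :=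
  M.Nonempty ∧ IsCompact M ∧ NoIsolatedPoints ↥M ∧
    Dense {x : ↥M | connectedComponent x = {x}}

/-- A union of finitely many (at least one) pairwise disjoint circles. -/
def FinUnionDisjCircles {X : Type*} [TopologicalSpace X] (M : Set X) : Prop :=
  ∃ (n : ℕ) (C : Fin n → Set X), 0 < n ∧ (∀ i, IsCircleSet (C i)) ∧
    Pairwise (Function.onFun Disjoint C) ∧ M = ⋃ i, C i

/-- A local dendrite: a locally connected continuum containing only finitely many circles. -/
def IsLocalDendrite {X : Type*} [TopologicalSpace X] (L : Set X) : Prop :=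
  IsCompact L ∧ IsConnected L ∧ LocallyConnectedSpace ↥L ∧
    {C : Set X | C ⊆ L ∧ IsCircleSet C}.Finite

/-- The decomposition `X = L ∪ J ∪ R` witnessing that the continuum `X` belongs to the
class `𝒞`: `J` is a free interval dense in `X`; `L` and `R` are locally connected
subcontinua of `X` disjoint from `J`; and there are rays `J_L, J_R` with
`J = J_L ∪ J_R` such that `L ∪ J_L` is a compactification of `J_L` and `R ∪ J_R` is a
compactification of `J_R`. -/
structure ClassC {X : Type*} [TopologicalSpace X] (L J R : Set X) : Prop where
  union_eq : L ∪ J ∪ R = Set.univ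
  openJ : IsOpen J
  freeJ : Nonempty (↥J ≃ₜ ↥(Set.Ioo (0:ℝ) 1))
  denseJ : Dense J
  compactL : IsCompact L
  connL : IsConnected L
  locConnL : LocallyConnectedSpace ↥L
  compactR : IsCompact R
  connR : IsConnected R
  locConnR : LocallyConnectedSpace ↥R
  disjLJ : Disjoint L J
  disjRJ : Disjoint R J
  rays : ∃ JL JR : Set X, JL ∪ JR = J ∧ IsRaySet JL ∧ IsRaySet JR ∧
    IsCompact (L ∪ JL) ∧ L ∪ JL ⊆ closure JL ∧
    IsCompact (R ∪ JR) ∧ R ∪ JR ⊆ closure JR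

/-! ### Peano continua are locally path connected -/

lemma exists_chain {Y : Type*} [MetricSpace Y] {C : Set Y} (hC : IsPreconnected C)
    {x y : Y} (hx : x ∈ C) (hy : y ∈ C) {δ : ℝ} (hδ : 0 < δ) :
    ∃ (m : ℕ) (w : ℕ → Y), w 0 = x ∧ (∀ j, m ≤ j → w j = y) ∧ (∀ j, w j ∈ C) ∧
      ∀ j, dist (w j) (w (j + 1)) < δ := by
  have key : Relation.ReflTransGen (fun a b => a ∈ C ∧ b ∈ C ∧ dist a b < δ) x y := by
    refine hC.induction₂ (fun a b => Relation.ReflTransGen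
      (fun a b => a ∈ C ∧ b ∈ C ∧ dist a b < δ) a b) ?_ ?_ ?_ hx hy
    · intro a ha
      filter_upwards [self_mem_nhdsWithin, mem_nhdsWithin_of_mem_nhds (Metric.ball_mem_nhds a hδ)]
        with b hb hb'
      exact Relation.ReflTransGen.single ⟨ha, hb, by rwa [dist_comm]⟩
    · intro a b c _ _ _ h1 h2
      exact h1.trans h2
    · intro a b _ _ h
      have : Std.Symm (fun a b => a ∈ C ∧ b ∈ C ∧ dist a b < δ) :=
        ⟨fun u v ⟨h1, h2, h3⟩ => ⟨h2, h1, by rwa [dist_comm]⟩⟩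
      exact Relation.ReflTransGen.stdSymm.symm _ _ h
  induction key using Relation.ReflTransGen.head_induction_on with
  | refl => exact ⟨0, fun _ => y, rfl, fun _ _ => rfl, fun _ => hy, fun _ => by simpa⟩
  | head h _ ih =>
    rename_i a c _
    obtain ⟨m, w, h0, h1, h2, h3⟩ := ih h.2.1
    refine ⟨m + 1, fun j => if j = 0 then a else w (j - 1), by simp, ?_, ?_, ?_⟩
    · intro j hj
      simp only [if_neg (show j ≠ 0 by omega)]
      exact h1 _ (by omega)
    · intro j
      dsimp only
      split_ifs
      exacts [h.1, h2 _]
    · intro j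
      rcases j with _ | j
      · simpa [h0] using h.2.2
      · simpa using h3 j

lemma exists_conn_of_dist_lt (Y : Type*) [MetricSpace Y] [CompactSpace Y]
    [LocallyConnectedSpace Y] {ε : ℝ} (hε : 0 < ε) :
    ∃ δ > 0, ∀ x y : Y, dist x y < δ →
      ∃ C : Set Y, IsOpen C ∧ IsPreconnected C ∧ x ∈ C ∧ y ∈ C ∧ C ⊆ Metric.ball x ε := by
  have h : ∀ z : Y, ∃ C : Set Y, C ⊆ Metric.ball z (ε / 2) ∧ IsOpen C ∧ z ∈ C ∧ IsConnected C :=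
    fun z => locallyConnectedSpace_iff_subsets_isOpen_isConnected.1 inferInstance z _
      (Metric.ball_mem_nhds z (half_pos hε))
  choose C hC1 hC2 hC3 hC4 using h
  obtain ⟨δ, hδ, H⟩ := lebesgue_number_lemma_of_metric (isCompact_univ (X := Y)) hC2
    (fun z _ => mem_iUnion.2 ⟨z, hC3 z⟩)
  refine ⟨δ, hδ, fun x y hxy => ?_⟩
  obtain ⟨z, hz⟩ := H x trivial
  have hx := hz (Metric.mem_ball_self hδ)
  refine ⟨C z, hC2 z, (hC4 z).isPreconnected, hx,
    hz (by rwa [Metric.mem_ball, dist_comm]), fun u hu => ?_⟩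
  have h1 := hC1 z hu
  have h2 := hC1 z hx
  rw [Metric.mem_ball] at *
  linarith [dist_triangle_right u x z]

lemma refine_chain {Y : Type*} [MetricSpace Y] {δ ε δ' : ℝ} (hδ' : 0 < δ') (hε : 0 < ε)
    (H : ∀ x y : Y, dist x y < δ →
      ∃ C : Set Y, IsOpen C ∧ IsPreconnected C ∧ x ∈ C ∧ y ∈ C ∧ C ⊆ Metric.ball x ε)
    (K : ℕ) (Z : ℕ → Y) (y : Y) (hK : ∀ j, K ≤ j → Z j = y)
    (hZ : ∀ j, dist (Z j) (Z (j + 1)) < δ) :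
    ∃ (m : ℕ) (Z' : ℕ → Y), 0 < m ∧ Z' 0 = Z 0 ∧ (∀ j, K * m ≤ j → Z' j = y) ∧
      (∀ j, dist (Z' j) (Z' (j + 1)) < δ') ∧ ∀ j, dist (Z' j) (Z (j / m)) < ε := by
  have h : ∀ i, ∃ (m : ℕ) (w : ℕ → Y), w 0 = Z i ∧ (∀ j, m ≤ j → w j = Z (i + 1)) ∧
      (∀ j, w j ∈ Metric.ball (Z i) ε) ∧ (∀ j, dist (w j) (w (j + 1)) < δ') ∧
      (K ≤ i → ∀ j, w j = y) := by
    intro i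
    by_cases hi : K ≤ i
    · exact ⟨0, fun _ => y, (hK i hi).symm, fun _ _ => (hK _ (by omega)).symm,
        fun _ => by rw [hK i hi]; exact Metric.mem_ball_self hε, fun _ => by simpa, fun _ _ => rfl⟩
    · obtain ⟨C, _, hC, h1, h2, h3⟩ := H _ _ (hZ i)
      obtain ⟨m, w, a, b, c, d⟩ := exists_chain hC h1 h2 hδ'
      exact ⟨m, w, a, b, fun j => h3 (c j), d, fun h => absurd h hi⟩
  choose m w h0 h1 h2 h3 h4 using h
  set M := (Finset.range K).sup m + 1 with hM
  have hmM : ∀ i, i < K → m i ≤ M := fun i hi =>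
    (Finset.le_sup (f := m) (Finset.mem_range.2 hi)).trans (Nat.le_succ _)
  have hend : ∀ i, w i M = Z (i + 1) := by
    intro i
    by_cases hi : i < K
    · exact h1 i _ (hmM i hi)
    · rw [h4 i (by omega), hK _ (by omega)]
  have hMpos : 0 < M := Nat.succ_pos _
  refine ⟨M, fun j => w (j / M) (j % M), hMpos, by simp [h0], ?_, ?_, fun j => h2 _ _⟩
  · intro j hj
    exact h4 _ ((Nat.le_div_iff_mul_le hMpos).2 hj) _
  · intro j
    have hj := Nat.div_add_mod j M
    have hlt := Nat.mod_lt j hMpos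
    by_cases hc : j % M + 1 = M
    · have e : j + 1 = M * (j / M + 1) := by rw [mul_add]; omega
      have e1 : (j + 1) / M = j / M + 1 := by rw [e, Nat.mul_div_cancel_left _ hMpos]
      have e2 : (j + 1) % M = 0 := by rw [e, Nat.mul_mod_right]
      dsimp only
      have := h3 (j / M) (j % M)
      rw [e1, e2, h0]
      rwa [hc, hend] at this
    · have e : j + 1 = (j % M + 1) + M * (j / M) := by omega
      have e1 : (j + 1) / M = j / M := by
        rw [e, Nat.add_mul_div_left _ _ hMpos, Nat.div_eq_of_lt (by omega), zero_add]
      have e2 : (j + 1) % M = j % M + 1 := by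
        rw [e, Nat.add_mul_mod_self_left, Nat.mod_eq_of_lt (by omega)]
      dsimp only
      rw [e1, e2]
      exact h3 _ _

lemma floor_adj {s t : ℝ} (h : |s - t| < 1) :
    ⌊s⌋₊ = ⌊t⌋₊ ∨ ⌊s⌋₊ = ⌊t⌋₊ + 1 ∨ ⌊t⌋₊ = ⌊s⌋₊ + 1 := by
  rw [abs_lt] at h
  have h1 : ⌊s⌋₊ ≤ ⌊t⌋₊ + 1 := by
    have := Nat.floor_mono (show s ≤ max t 0 + 1 by linarith [le_max_left t 0])
    rw [Nat.floor_add_one (le_max_right _ _)] at this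
    rcases le_total t 0 with h0 | h0
    · rw [max_eq_right h0] at this; rw [Nat.floor_of_nonpos h0]; simpa using this
    · rwa [max_eq_left h0] at this
  have h2 : ⌊t⌋₊ ≤ ⌊s⌋₊ + 1 := by
    have := Nat.floor_mono (show t ≤ max s 0 + 1 by linarith [le_max_left s 0])
    rw [Nat.floor_add_one (le_max_right _ _)] at this
    rcases le_total s 0 with h0 | h0
    · rw [max_eq_right h0] at this; rw [Nat.floor_of_nonpos h0]; simpa using this
    · rwa [max_eq_left h0] at this
  omega

/-- In a compact locally connected metric space, nearby points are joined by small paths: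
successively finer chains of points converge uniformly to a path. -/
theorem exists_small_path (Y : Type*) [MetricSpace Y] [CompactSpace Y]
    [LocallyConnectedSpace Y] {ε : ℝ} (hε : 0 < ε) :
    ∃ δ > 0, ∀ x y : Y, dist x y < δ → JoinedIn (Metric.ball x ε) x y := by
  obtain ⟨e, he⟩ : ∃ e : ℕ → ℝ, e = fun n => (ε / 8) / 2 ^ n := ⟨_, rfl⟩
  have epos : ∀ n, 0 < e n := fun n => by rw [he]; positivity
  have hδ : ∀ n, ∃ δ > 0, δ ≤ e n ∧ ∀ x y : Y, dist x y < δ →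
      ∃ C : Set Y, IsOpen C ∧ IsPreconnected C ∧ x ∈ C ∧ y ∈ C ∧ C ⊆ Metric.ball x (e n) := by
    intro n
    obtain ⟨δ, h1, h2⟩ := exists_conn_of_dist_lt Y (epos n)
    exact ⟨min δ (e n), lt_min h1 (epos n), min_le_right _ _,
      fun x y h => h2 x y (h.trans_le (min_le_left _ _))⟩
  choose δ δpos δle hδ using hδ
  refine ⟨δ 0, δpos 0, fun x y hxy => ?_⟩
  let S : ℕ → Type _ := fun n => {p : ℕ × (ℕ → Y) // 0 < p.1 ∧ p.2 0 = x ∧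
    (∀ j, p.1 ≤ j → p.2 j = y) ∧ ∀ j, dist (p.2 j) (p.2 (j + 1)) < δ n}
  have step : ∀ n (p : S n), ∃ (m : ℕ) (q : S (n + 1)), 0 < m ∧ q.1.1 = p.1.1 * m ∧
      ∀ j, dist (q.1.2 j) (p.1.2 (j / m)) < e n := by
    rintro n ⟨⟨K, Z⟩, h0, h1, h2, h3⟩
    obtain ⟨m, Z', a, b, c, d, f⟩ := refine_chain (δpos (n + 1)) (epos n) (hδ n) K Z y h2 h3
    exact ⟨m, ⟨⟨K * m, Z'⟩, Nat.mul_pos h0 a, b.trans h1, c, d⟩, a, rfl, f⟩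
  choose m q hm hq1 hq2 using step
  let p0 : S 0 := ⟨⟨1, fun j => if j = 0 then x else y⟩, one_pos, rfl,
    fun j hj => if_neg (by omega), fun j => by
      rcases j with _ | j
      · simpa using hxy
      · simpa using δpos 0⟩
  let p : ∀ n, S n := fun n => Nat.rec p0 (fun n r => q n r) n
  have hp : ∀ n, p (n + 1) = q n (p n) := fun n => rfl
  let F : ℕ → ℝ → Y := fun n t => (p n).1.2 ⌊t * (p n).1.1⌋₊
  have hF : ∀ n t, dist (F n t) (F (n + 1) t) < e n := by
    intro n t
    have h1 := hq2 n (p n) ⌊t * (p (n+1)).1.1⌋₊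
    have h2 : ⌊t * (p (n+1)).1.1⌋₊ / m n (p n) = ⌊t * (p n).1.1⌋₊ := by
      rw [← Nat.floor_div_natCast, hp, hq1]
      congr 1
      have : (m n (p n) : ℝ) ≠ 0 := by exact_mod_cast (hm n (p n)).ne'
      push_cast
      field_simp
    rw [h2] at h1
    rw [dist_comm]
    exact h1
  have hF' : ∀ n t, dist (F n t) (F (n + 1) t) ≤ (ε / 4) / 2 / 2 ^ n := by
    intro n t
    refine (hF n t).le.trans_eq ?_
    rw [he]; ring
  have hlim : ∀ t, ∃ z, Filter.Tendsto (fun n => F n t) Filter.atTop (𝓝 z) := fun t =>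
    cauchySeq_tendsto_of_complete (cauchySeq_of_le_geometric_two (fun n => hF' n t))
  choose f hf using hlim
  have hd : ∀ n t, dist (F n t) (f t) ≤ 2 * e n := by
    intro n t
    refine (dist_le_of_le_geometric_two_of_tendsto (fun n => hF' n t) (hf t) n).trans_eq ?_
    rw [he]; ring
  have hFδ : ∀ n (s t : ℝ), |s - t| < 1 / ((p n).1.1 : ℝ) → dist (F n s) (F n t) < δ n := by
    intro n s t hst
    have hK : (0:ℝ) < (p n).1.1 := by exact_mod_cast (p n).2.1
    have h1 : |s * (p n).1.1 - t * (p n).1.1| < 1 := by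
      rw [← sub_mul, abs_mul, abs_of_pos hK]
      rwa [lt_div_iff₀ hK] at hst
    rcases floor_adj h1 with h | h | h
    · simp only [F]; rw [h, dist_self]; exact δpos n
    · simp only [F]; rw [h, dist_comm]; exact (p n).2.2.2.2 _
    · simp only [F]; rw [h]; exact (p n).2.2.2.2 _
  have hcont : Continuous f := by
    rw [Metric.continuous_iff]
    intro t r hr
    obtain ⟨n, hn⟩ : ∃ n, 5 * e n < r := by
      have : Filter.Tendsto (fun n : ℕ => 5 * ((ε / 8) / 2 ^ n)) Filter.atTop (𝓝 0) := by
        have h := (tendsto_pow_atTop_nhds_zero_of_lt_one (r := (1/2:ℝ)) (by norm_num)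
          (by norm_num)).const_mul (5 * (ε / 8))
        simp only [mul_zero] at h
        refine h.congr fun n => ?_
        rw [one_div, inv_pow]; ring
      rw [he]
      exact (this.eventually (gt_mem_nhds hr)).exists
    have hK : (0:ℝ) < (p n).1.1 := by exact_mod_cast (p n).2.1
    refine ⟨1 / (p n).1.1, by positivity, fun s hs => ?_⟩
    have h1 := hFδ n s t hs
    have h2 := hd n s
    have h3 := hd n t
    have := dist_triangle4 (f s) (F n s) (F n t) (f t)
    rw [dist_comm (f s) (F n s)] at this
    linarith [δle n]
  have hf0 : f 0 = x := by
    refine tendsto_nhds_unique (hf 0) ?_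
    refine tendsto_const_nhds.congr fun n => ?_
    simp only [F, zero_mul, Nat.floor_zero]
    exact (p n).2.2.1.symm
  have hf1 : f 1 = y := by
    refine tendsto_nhds_unique (hf 1) ?_
    refine tendsto_const_nhds.congr fun n => ?_
    simp only [F, one_mul, Nat.floor_natCast]
    exact ((p n).2.2.2.1 _ le_rfl).symm
  refine JoinedIn.ofLine hcont.continuousOn hf0 hf1 ?_
  rintro _ ⟨t, -, rfl⟩
  have h1 := hd 0 t
  have h2 : dist (F 0 t) x < δ 0 := by
    change dist (if ⌊t * ((1:ℕ):ℝ)⌋₊ = 0 then x else y) x < δ 0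
    split_ifs
    · simpa using δpos 0
    · rwa [dist_comm]
  have h3 : e 0 = ε / 8 := by rw [he]; simp
  rw [Metric.mem_ball]
  have := dist_triangle_left (f t) x (F 0 t)
  linarith [δle 0]

theorem locPath_of_peano (Y : Type*) [MetricSpace Y] [CompactSpace Y]
    [LocallyConnectedSpace Y] : LocallyPathConnectedSpace Y := by
  rw [locallyPathConnectedSpace_iff_pathComponentIn_mem_nhds]
  intro x u hu hxu
  obtain ⟨ε, hε, h⟩ := Metric.isOpen_iff.1 hu x hxu
  obtain ⟨δ, hδ, H⟩ := exists_small_path Y hε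
  refine Filter.mem_of_superset (Metric.ball_mem_nhds x hδ) fun y hy => ?_
  exact (H x y (by rwa [dist_comm])).mono h

/-! ### Gaps of closed subsets of the line -/

/-- The last point of `F` at or before `t` (used only when there is one). -/
noncomputable def gapL (F : Set ℝ) (t : ℝ) : ℝ := sSup (F ∩ Iic t)

/-- The first point of `F` at or after `t` (used only when there is one). -/
noncomputable def gapR (F : Set ℝ) (t : ℝ) : ℝ := sInf (F ∩ Ici t)

lemma gapL_mem {F : Set ℝ} (hF : IsClosed F) {t : ℝ} (h : (F ∩ Iic t).Nonempty) :
    gapL F t ∈ F ∧ gapL F t ≤ t :=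
  (hF.inter isClosed_Iic).csSup_mem h ⟨t, fun _ h => h.2⟩

lemma gapR_mem {F : Set ℝ} (hF : IsClosed F) {t : ℝ} (h : (F ∩ Ici t).Nonempty) :
    gapR F t ∈ F ∧ t ≤ gapR F t :=
  (hF.inter isClosed_Ici).csInf_mem h ⟨t, fun _ h => h.2⟩

lemma le_gapL {F : Set ℝ} {s t : ℝ} (hs : s ∈ F) (h : s ≤ t) : s ≤ gapL F t :=
  le_csSup ⟨t, fun _ h => h.2⟩ ⟨hs, h⟩

lemma gapR_le {F : Set ℝ} {s t : ℝ} (hs : s ∈ F) (h : t ≤ s) : gapR F t ≤ s :=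
  csInf_le ⟨t, fun _ h => h.2⟩ ⟨hs, h⟩

lemma gap_empty {F : Set ℝ} {t u : ℝ} (hu : u ∈ F) (h1 : gapL F t < u) (h2 : u < gapR F t) :
    False := by
  rcases le_total u t with h | h
  · exact (le_gapL hu h).not_gt h1
  · exact (gapR_le hu h).not_gt h2

lemma gapL_self {F : Set ℝ} {t : ℝ} (h : t ∈ F) : gapL F t = t :=
  le_antisymm (csSup_le ⟨t, h, self_mem_Iic⟩ fun _ h => h.2) (le_gapL h le_rfl)

lemma gapR_self {F : Set ℝ} {t : ℝ} (h : t ∈ F) : gapR F t = t :=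
  le_antisymm (gapR_le h le_rfl) (le_csInf ⟨t, h, self_mem_Ici⟩ fun _ h => h.2)

/-! ### Arcs -/

/-- `α : ℝ → Y` parametrises an arc on `[0,1]`; the values of `α` outside `[0,1]` are irrelevant. -/
def IsArcFn {Y : Type*} [TopologicalSpace Y] (α : ℝ → Y) : Prop :=
  Continuous α ∧ InjOn α (Icc 0 1)

/-- The closed sets containing everything outside `(0, 1)` across every gap of which the path `γ`
takes the same value. Cutting out the gaps of a minimal such set leaves an arc. -/
def GoodSet {Y : Type*} (γ : ℝ → Y) (F : Set ℝ) : Prop :=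
  IsClosed F ∧ Iic 0 ∪ Ici 1 ⊆ F ∧
    ∀ a ∈ F, ∀ b ∈ F, a < b → (∀ u ∈ F, a < u → u < b → False) → γ a = γ b

section path_to_arc
variable {Y : Type*} [MetricSpace Y] {γ : ℝ → Y}

omit [MetricSpace Y] in
lemma GoodSet.lne {F : Set ℝ} (hF : GoodSet γ F) (t : ℝ) : (F ∩ Iic t).Nonempty :=
  ⟨min t 0, hF.2.1 (Or.inl (mem_Iic.2 (min_le_right _ _))), mem_Iic.2 (min_le_left _ _)⟩

omit [MetricSpace Y] in
lemma GoodSet.rne {F : Set ℝ} (hF : GoodSet γ F) (t : ℝ) : (F ∩ Ici t).Nonempty :=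
  ⟨max t 1, hF.2.1 (Or.inr (mem_Ici.2 (le_max_right _ _))), mem_Ici.2 (le_max_left _ _)⟩

omit [MetricSpace Y] in
lemma GoodSet.eq {F : Set ℝ} (hF : GoodSet γ F) (t : ℝ) : γ (gapL F t) = γ (gapR F t) := by
  by_cases ht : t ∈ F
  · rw [gapL_self ht, gapR_self ht]
  · have h1 := gapL_mem hF.1 (hF.lne t)
    have h2 := gapR_mem hF.1 (hF.rne t)
    have h3 : gapL F t ≠ t := fun h => ht (h ▸ h1.1)
    refine hF.2.2 _ h1.1 _ h2.1 (((lt_of_le_of_ne h1.2 h3)).trans_le h2.2) ?_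
    exact fun u h6 h4 h5 => gap_empty h6 h4 h5

lemma exists_minimal_good (hγ : Continuous γ) : ∃ F, Minimal (GoodSet γ) F := by
  have := zorn_superset {F | GoodSet γ F} ?_
  · exact this
  intro c hc hchain
  rcases c.eq_empty_or_nonempty with rfl | hne
  · refine ⟨univ, ⟨isClosed_univ, subset_univ _, ?_⟩, by simp⟩
    intro a _ b _ hab h
    obtain ⟨u, h1, h2⟩ := exists_between hab
    exact (h u trivial h1 h2).elim
  refine ⟨⋂₀ c, ⟨isClosed_sInter fun F h => (hc h).1, subset_sInter fun F h => (hc h).2.1, ?_⟩,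
    fun s hs => sInter_subset_of_mem hs⟩
  intro a ha b hb hab hgap
  refine eq_of_forall_dist_le fun ε hε => ?_
  obtain ⟨δ1, hδ1, h1⟩ := Metric.continuous_iff.1 hγ a (ε / 2) (by positivity)
  obtain ⟨δ2, hδ2, h2⟩ := Metric.continuous_iff.1 hγ b (ε / 2) (by positivity)
  obtain ⟨e, he⟩ : ∃ e, e = min (min δ1 δ2) ((b - a) / 2) / 2 := ⟨_, rfl⟩
  have hmin : 0 < min (min δ1 δ2) ((b - a) / 2) := lt_min (lt_min hδ1 hδ2) (by linarith)
  have l1 := min_le_left (min δ1 δ2) ((b - a) / 2)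
  have l2 := min_le_right (min δ1 δ2) ((b - a) / 2)
  have l3 := min_le_left δ1 δ2
  have l4 := min_le_right δ1 δ2
  -- a member of the chain misses the compact middle part of the gap
  obtain ⟨F, hFc, hF⟩ : ∃ F ∈ c, ∀ u ∈ F, a + e ≤ u → u ≤ b - e → False := by
    have : Nonempty c := hne.to_subtype
    obtain ⟨F, hF⟩ := (isCompact_Icc (a := a + e) (b := b - e)).elim_directed_family_closed
      (fun F : c => (F : Set ℝ)) (fun F => (hc F.2).1) (by
        rw [← sInter_eq_iInter, eq_empty_iff_forall_notMem]
        rintro u ⟨h3, h4⟩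
        exact hgap u h4 (by linarith [h3.1]) (by linarith [h3.2])) (by
        intro F G
        rcases hchain.total F.2 G.2 with h | h
        · exact ⟨F, Subset.rfl, h⟩
        · exact ⟨G, h, Subset.rfl⟩)
    exact ⟨F, F.2, fun u hu h3 h4 => (hF ▸ (⟨⟨h3, h4⟩, hu⟩ :
      u ∈ Icc (a + e) (b - e) ∩ F.1) : u ∈ (∅ : Set ℝ))⟩
  have hg := hc hFc
  set m := (a + b) / 2 with hm
  have g1 := gapL_mem hg.1 (hg.lne m)
  have g2 := gapR_mem hg.1 (hg.rne m)
  have g3 := le_gapL (ha F hFc) (show a ≤ m by linarith)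
  have g4 := gapR_le (hb F hFc) (show m ≤ b by linarith)
  have g5 : gapL F m < a + e := by
    by_contra h
    exact hF _ g1.1 (not_lt.1 h) (by linarith [g1.2])
  have g6 : b - e < gapR F m := by
    by_contra h
    exact hF _ g2.1 (by linarith [g2.2]) (not_lt.1 h)
  have h3 := h1 (gapL F m) (by rw [Real.dist_eq, abs_of_nonneg] <;> linarith)
  have h4 := h2 (gapR F m) (by rw [Real.dist_eq, abs_of_nonpos] <;> linarith)
  rw [hg.eq] at h3
  linarith [dist_triangle_left (γ a) (γ b) (γ (gapR F m))]

lemma continuous_good (hγ : Continuous γ) {F : Set ℝ} (hF : GoodSet γ F) :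
    Continuous fun t => γ (gapL F t) := by
  rw [Metric.continuous_iff]
  intro t ε hε
  have h1 := gapL_mem hF.1 (hF.lne t)
  have h2 := gapR_mem hF.1 (hF.rne t)
  by_cases ht : t ∈ F
  · obtain ⟨δ, hδ, h⟩ := Metric.continuous_iff.1 hγ t ε hε
    refine ⟨δ, hδ, fun s hs => ?_⟩
    rw [gapL_self ht]
    rw [Real.dist_eq, abs_lt] at hs
    rcases le_total s t with hst | hst
    · rw [hF.eq]
      have h3 := (gapR_mem hF.1 (hF.rne s)).2
      have h4 := gapR_le ht hst
      exact h _ (by rw [Real.dist_eq, abs_lt]; constructor <;> linarith)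
    · have h3 := (gapL_mem hF.1 (hF.lne s)).2
      have h4 := le_gapL ht hst
      exact h _ (by rw [Real.dist_eq, abs_lt]; constructor <;> linarith)
  · have h3 : gapL F t < t := lt_of_le_of_ne h1.2 fun h => ht (h ▸ h1.1)
    have h4 : t < gapR F t := lt_of_le_of_ne h2.2 fun h => ht (h ▸ h2.1)
    refine ⟨min (t - gapL F t) (gapR F t - t), lt_min (by linarith) (by linarith),
      fun s hs => ?_⟩
    rw [Real.dist_eq, lt_min_iff, abs_lt, abs_lt] at hs
    have h5 : gapL F s = gapL F t := by
      refine le_antisymm ?_ (le_gapL h1.1 (by linarith))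
      by_contra h
      have h6 := gapL_mem hF.1 (hF.lne s)
      exact gap_empty h6.1 (not_le.1 h) (by linarith)
    rw [h5, dist_self]
    exact hε

omit [MetricSpace Y] in
lemma good_minimal {F : Set ℝ} (hF : Minimal (GoodSet γ) F) {s t : ℝ} (hs : s ∈ F)
    (ht : t ∈ F) (h0 : 0 ≤ s) (h1 : t ≤ 1) (hst : γ s = γ t) {u : ℝ} (hu : u ∈ F)
    (h2 : s < u) (h3 : u < t) : False := by
  have hg : GoodSet γ (F \ Ioo s t) := by
    refine ⟨hF.prop.1.sdiff isOpen_Ioo, fun x hx => ⟨hF.prop.2.1 hx, fun h => ?_⟩, ?_⟩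
    · rcases hx with hx | hx
      · exact (h0.trans_lt h.1).not_ge hx
      · exact (h.2.trans_le h1).not_ge hx
    · rintro a ⟨ha, ha'⟩ b ⟨hb, hb'⟩ hab hgap
      by_cases h : ∀ u ∈ F, a < u → u < b → False
      · exact hF.prop.2.2 a ha b hb hab h
      · push Not at h
        obtain ⟨v, hvF, hv1, hv2, -⟩ := h
        have hvst : v ∈ Ioo s t := by
          by_contra hc
          exact hgap v ⟨hvF, hc⟩ hv1 hv2
        have has : a ≤ s := by
          by_contra hc
          exact ha' ⟨not_le.1 hc, hv1.trans hvst.2⟩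
        have hbt : t ≤ b := by
          by_contra hc
          exact hb' ⟨hvst.1.trans hv2, not_le.1 hc⟩
        have e1 : a = s := by
          by_contra hc
          exact hgap s ⟨hs, fun h => lt_irrefl _ h.1⟩ (lt_of_le_of_ne has hc) (hvst.1.trans hv2)
        have e2 : b = t := by
          by_contra hc
          exact hgap t ⟨ht, fun h => lt_irrefl _ h.2⟩ (hv1.trans hvst.2)
            (lt_of_le_of_ne hbt (Ne.symm hc))
        rw [e1, e2, hst]
  exact (hF.le_of_le hg sdiff_subset hu).2 ⟨h2, h3⟩

/-- Every path with distinct endpoints contains an arc with the same endpoints. -/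
theorem exists_arc_of_path (hγ : Continuous γ) (hne : γ 0 ≠ γ 1) :
    ∃ α : ℝ → Y, IsArcFn α ∧ α 0 = γ 0 ∧ α 1 = γ 1 ∧ ∀ t, α t ∈ γ '' Icc 0 1 := by
  obtain ⟨F, hF⟩ := exists_minimal_good hγ
  have hg := hF.prop
  obtain ⟨β, hβ⟩ : ∃ β : ℝ → Y, β = fun t => γ (gapL F t) := ⟨_, rfl⟩
  have hβc : Continuous β := hβ ▸ continuous_good hγ hg
  have h0F : (0:ℝ) ∈ F := hg.2.1 (Or.inl self_mem_Iic)
  have h1F : (1:ℝ) ∈ F := hg.2.1 (Or.inr self_mem_Ici)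
  have hβ0 : β 0 = γ 0 := by rw [hβ]; simp only [gapL_self h0F]
  have hβ1 : β 1 = γ 1 := by rw [hβ]; simp only [gapL_self h1F]
  have hβm : ∀ t ∈ Icc (0:ℝ) 1, β t ∈ γ '' Icc 0 1 := fun t ht => by
    rw [hβ]
    exact ⟨_, ⟨le_gapL h0F ht.1, (gapL_mem hg.1 (hg.lne t)).2.trans ht.2⟩, rfl⟩
  -- the fibres of `β` are order convex
  have hconv : ∀ s t u, 0 ≤ s → s ≤ u → u ≤ t → t ≤ 1 → β s = β t → β u = β t := by
    intro s t u h0 h1 h2 h3 h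
    rw [hβ] at h ⊢
    dsimp only at h ⊢
    have a1 := gapL_mem hg.1 (hg.lne s)
    have a2 := gapL_mem hg.1 (hg.lne t)
    have a3 := gapL_mem hg.1 (hg.lne u)
    have b1 := le_gapL a1.1 (a1.2.trans h1)
    have b2 := le_gapL a3.1 (a3.2.trans h2)
    have b3 := le_gapL h0F h0
    rcases eq_or_lt_of_le b1 with c | c
    · rw [← c, h]
    rcases eq_or_lt_of_le b2 with d | d
    · rw [d]
    exact (good_minimal hF a1.1 a2.1 b3 (a2.2.trans h3) h a3.1 c d).elim
  let y : ℕ → Y := fun n => β (TopologicalSpace.denseSeq ℝ n)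
  let D : ℕ → ℝ → ℝ := fun n t => sInf ((fun s => dist (y n) (β (t * s))) '' Icc (0:ℝ) 1)
  have hbdd : ∀ n t, BddBelow ((fun s => dist (y n) (β (t * s))) '' Icc (0:ℝ) 1) := fun n t =>
    ⟨0, by rintro _ ⟨s, -, rfl⟩; exact dist_nonneg⟩
  have hDc : ∀ n, Continuous (D n) := fun n => isCompact_Icc.continuous_sInf
    (f := fun t s => dist (y n) (β (t * s)))
    (continuous_const.dist (hβc.comp (continuous_fst.mul continuous_snd)))
  have hD0 : ∀ n t, 0 ≤ D n t := fun n t => Real.sInf_nonneg (by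
    rintro _ ⟨s, -, rfl⟩; exact dist_nonneg)
  have hDle : ∀ n s t, 0 ≤ s → s ≤ t → D n t ≤ dist (y n) (β s) := by
    intro n s t h0 h1
    refine csInf_le (hbdd n t) ?_
    rcases eq_or_lt_of_le (h0.trans h1) with h | h
    · exact ⟨0, by simp, by
        have : s = 0 := by linarith
        simp [this]⟩
    · exact ⟨s / t, ⟨by positivity, (div_le_one h).2 h1⟩, by
        simp only; rw [mul_div_cancel₀ _ h.ne']⟩
  have hDanti : ∀ n s t, 0 ≤ s → s ≤ t → D n t ≤ D n s := by
    intro n s t h0 h1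
    refine le_csInf ((nonempty_Icc.2 zero_le_one).image _) ?_
    rintro _ ⟨u, hu, rfl⟩
    exact hDle n _ _ (mul_nonneg h0 hu.1) (by nlinarith [hu.1, hu.2])
  let φ : ℕ → ℝ → ℝ := fun n t => (1 / 2) ^ n * min 1 (D n t)
  have hφ0 : ∀ n t, 0 ≤ φ n t := fun n t => mul_nonneg (by positivity) (le_min zero_le_one (hD0 n t))
  have hφ1 : ∀ n t, φ n t ≤ (1 / 2) ^ n := fun n t =>
    mul_le_of_le_one_right (by positivity) (min_le_left _ _)
  have hsum : ∀ t, Summable fun n => φ n t := fun t =>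
    summable_geometric_two.of_nonneg_of_le (fun n => hφ0 n t) (fun n => hφ1 n t)
  let Φ : ℝ → ℝ := fun t => ∑' n, φ n t
  have hΦc : Continuous Φ := continuous_tsum
    (fun n => continuous_const.mul (continuous_const.min (hDc n))) summable_geometric_two
    (fun n t => by rw [Real.norm_of_nonneg (hφ0 n t)]; exact hφ1 n t)
  have hφanti : ∀ n s t, 0 ≤ s → s ≤ t → φ n t ≤ φ n s := fun n s t h0 h1 =>
    mul_le_mul_of_nonneg_left (min_le_min le_rfl (hDanti n s t h0 h1)) (by positivity)
  have hΦlt : ∀ s t, 0 ≤ s → s ≤ t → t ≤ 1 → β s ≠ β t → Φ t < Φ s := by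
    intro s t h0 h1 h2 h3
    have hcomp : IsCompact (β '' Icc 0 s) := isCompact_Icc.image hβc
    have hnot : β t ∉ β '' Icc 0 s := by
      rintro ⟨u, hu, he⟩
      exact h3 (hconv u t s hu.1 hu.2 h1 h2 he)
    obtain ⟨r, hr, hball⟩ := Metric.isOpen_iff.1 hcomp.isClosed.isOpen_compl _ hnot
    obtain ⟨n, hn⟩ : ∃ n, dist (y n) (β t) < min (r / 2) 1 := by
      obtain ⟨δ, hδ, hd⟩ := Metric.continuous_iff.1 hβc t (min (r / 2) 1)
        (lt_min (by positivity) one_pos)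
      obtain ⟨n, hn⟩ := (TopologicalSpace.denseRange_denseSeq ℝ).exists_dist_lt t hδ
      exact ⟨n, hd _ (by rwa [dist_comm])⟩
    have hlt1 := hn.trans_le (min_le_left _ _)
    have hlt2 := hn.trans_le (min_le_right _ _)
    have hDs : r / 2 ≤ D n s := by
      refine le_csInf ((nonempty_Icc.2 zero_le_one).image _) ?_
      rintro _ ⟨u, hu, rfl⟩
      by_contra hc
      have hb : β (s * u) ∈ Metric.ball (β t) r := by
        rw [Metric.mem_ball, dist_comm]
        linarith [dist_triangle_left (β t) (β (s * u)) (y n), not_le.1 hc]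
      exact hball hb ⟨_, ⟨mul_nonneg h0 hu.1, by nlinarith [hu.1, hu.2]⟩, rfl⟩
    have hDt := hDle n t t (h0.trans h1) le_rfl
    refine Summable.tsum_lt_tsum (i := n) (fun n => hφanti n s t h0 h1) ?_ (hsum t) (hsum s)
    refine mul_lt_mul_of_pos_left ?_ (by positivity)
    refine lt_min ?_ ?_
    · exact (min_le_right _ _).trans_lt (hDt.trans_lt hlt2)
    · exact (min_le_right _ _).trans_lt (by linarith)
  have hΦeq : ∀ s t, 0 ≤ s → s ≤ t → t ≤ 1 → β s = β t → Φ s = Φ t := by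
    intro s t h0 h1 h2 h3
    refine tsum_congr fun n => ?_
    have : D n s = D n t := by
      refine le_antisymm ?_ (hDanti n s t h0 h1)
      refine le_csInf ((nonempty_Icc.2 zero_le_one).image _) ?_
      rintro _ ⟨u, hu, rfl⟩
      have hu1 : t * u ≤ t := by nlinarith [hu.1, hu.2]
      rcases le_total (t * u) s with h | h
      · exact hDle n _ _ (mul_nonneg (h0.trans h1) hu.1) h
      · dsimp only
        rw [hconv s t (t * u) h0 h hu1 h2 h3, ← h3]
        exact hDle n s s h0 le_rfl
    simp only [φ, this]
  have hΦ01 : Φ 1 < Φ 0 := hΦlt 0 1 le_rfl zero_le_one le_rfl (by rwa [hβ0, hβ1])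
  have hΦmono : ∀ s t, 0 ≤ s → s ≤ t → t ≤ 1 → Φ t ≤ Φ s := fun s t h0 h1 h2 => by
    by_cases h : β s = β t
    · exact (hΦeq s t h0 h1 h2 h).ge
    · exact (hΦlt s t h0 h1 h2 h).le
  -- normalise `Φ` to an increasing surjection of the unit interval and factor `β` through it
  let ρ : ℝ → ℝ := fun t => (Φ 0 - Φ t) / (Φ 0 - Φ 1)
  have hden : 0 < Φ 0 - Φ 1 := by linarith
  have hρc : Continuous ρ := (continuous_const.sub hΦc).div_const _
  have hρ0 : ρ 0 = 0 := by simp [ρ]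
  have hρ1 : ρ 1 = 1 := div_self hden.ne'
  have hρm : ∀ t ∈ Icc (0:ℝ) 1, ρ t ∈ Icc (0:ℝ) 1 := fun t ht =>
    ⟨div_nonneg (by linarith [hΦmono 0 t le_rfl ht.1 ht.2]) hden.le,
      (div_le_one hden).2 (by linarith [hΦmono t 1 ht.1 ht.2 le_rfl])⟩
  have hρΦ : ∀ s t, ρ s = ρ t ↔ Φ s = Φ t := by
    intro s t
    simp only [ρ]
    rw [div_left_inj' hden.ne', sub_right_inj]
  have hρβ : ∀ s ∈ Icc (0:ℝ) 1, ∀ t ∈ Icc (0:ℝ) 1, (ρ s = ρ t ↔ β s = β t) := by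
    have key : ∀ s ∈ Icc (0:ℝ) 1, ∀ t ∈ Icc (0:ℝ) 1, s ≤ t → (ρ s = ρ t ↔ β s = β t) := by
      intro s hs t ht hst
      rw [hρΦ]
      refine ⟨fun h => ?_, hΦeq s t hs.1 hst ht.2⟩
      by_contra hc
      exact (hΦlt s t hs.1 hst ht.2 hc).ne' h
    intro s hs t ht
    rcases le_total s t with h | h
    · exact key s hs t ht h
    · rw [eq_comm, key t ht s hs h, eq_comm]
  let P : Icc (0:ℝ) 1 → Icc (0:ℝ) 1 := fun t => ⟨ρ t, hρm t t.2⟩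
  have hPc : Continuous P := (hρc.comp continuous_subtype_val).subtype_mk _
  have hPs : Function.Surjective P := by
    rintro ⟨u, hu⟩
    obtain ⟨t, ht, h⟩ := intermediate_value_Icc zero_le_one hρc.continuousOn
      (by rwa [hρ0, hρ1] : u ∈ Icc (ρ 0) (ρ 1))
    exact ⟨⟨t, ht⟩, Subtype.ext h⟩
  have hPq : IsQuotientMap P := hPc.isClosedMap.isQuotientMap hPc hPs
  let α₀ : Icc (0:ℝ) 1 → Y := fun u => β (Function.surjInv hPs u).1
  have hα₀ : ∀ t, α₀ (P t) = β t := fun t => by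
    have h := congrArg Subtype.val (Function.surjInv_eq hPs (P t))
    exact (hρβ _ (Subtype.property _) _ t.2).1 h
  have hα₀c : Continuous α₀ := by
    rw [hPq.continuous_iff]
    exact (hβc.comp continuous_subtype_val).congr fun t => (hα₀ t).symm
  refine ⟨fun t => α₀ (projIcc 0 1 zero_le_one t), ⟨hα₀c.comp continuous_projIcc, ?_⟩, ?_, ?_, ?_⟩
  · intro s hs t ht h
    dsimp only at h
    obtain ⟨s', hs'⟩ := hPs (projIcc 0 1 zero_le_one s)
    obtain ⟨t', ht'⟩ := hPs (projIcc 0 1 zero_le_one t)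
    rw [← hs', ← ht', hα₀, hα₀, ← hρβ _ s'.2 _ t'.2] at h
    have h2 := congrArg Subtype.val hs'
    have h3 := congrArg Subtype.val ht'
    rw [projIcc_of_mem _ hs] at h2
    rw [projIcc_of_mem _ ht] at h3
    exact h2.symm.trans (h.trans h3)
  · dsimp only
    rw [← hβ0, projIcc_left, ← hα₀ ⟨0, by simp⟩]
    congr 1
    exact Subtype.ext hρ0.symm
  · dsimp only
    rw [← hβ1, projIcc_right, ← hα₀ ⟨1, by simp⟩]
    congr 1
    exact Subtype.ext hρ1.symm
  · intro t
    exact hβm _ (Subtype.property _)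

end path_to_arc

theorem exists_arc_of_joinedIn {Y : Type*} [MetricSpace Y] {V : Set Y} {a b : Y} (hab : a ≠ b)
    (h : JoinedIn V a b) : ∃ α : ℝ → Y, IsArcFn α ∧ α 0 = a ∧ α 1 = b ∧ ∀ t, α t ∈ V := by
  obtain ⟨γ, hγ⟩ := h
  obtain ⟨α, h1, h2, h3, h4⟩ := exists_arc_of_path γ.continuous_extend
    (by simpa using hab : γ.extend 0 ≠ γ.extend 1)
  refine ⟨α, h1, by simpa using h2, by simpa using h3, fun t => ?_⟩
  obtain ⟨s, hs, e⟩ := h4 t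
  rw [← e, Path.extend_apply _ hs]
  exact hγ _

theorem exists_arc_in {Y : Type*} [MetricSpace Y] [LocallyPathConnectedSpace Y]
    {V : Set Y} (hV : IsOpen V) (hc : IsPreconnected V) {a b : Y} (ha : a ∈ V) (hb : b ∈ V)
    (hab : a ≠ b) :
    ∃ α : ℝ → Y, IsArcFn α ∧ α 0 = a ∧ α 1 = b ∧ ∀ t, α t ∈ V :=
  exists_arc_of_joinedIn hab
    (((hV.isConnected_iff_isPathConnected).1 ⟨⟨a, ha⟩, hc⟩).joinedIn a ha b hb)

/-! ### Circles -/

/-- The unit circle `ℝ / ℤ` is homeomorphic to the unit sphere of `ℂ`. -/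
noncomputable def unitCircleHomeo : UnitAddCircle ≃ₜ Metric.sphere (0:ℂ) 1 :=
  (AddCircle.homeomorphCircle one_ne_zero).trans
    { toFun := fun z => ⟨(z : ℂ), by rw [mem_sphere_zero_iff_norm]; exact Circle.norm_coe z⟩
      invFun := fun z => ⟨z.1, by
        simp [Submonoid.unitSphere]⟩
      left_inv := fun z => rfl
      right_inv := fun z => rfl
      continuous_toFun := Continuous.subtype_mk continuous_subtype_val (fun z => z.2)
      continuous_invFun := Continuous.subtype_mk continuous_subtype_val (fun z => z.2) }

lemma isCircleSet_iff {Y : Type*} [TopologicalSpace Y] [T2Space Y] {C : Set Y} :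
    IsCircleSet C ↔
      ∃ e : UnitAddCircle → Y, Continuous e ∧ Function.Injective e ∧ range e = C := by
  constructor
  · rintro ⟨h⟩
    refine ⟨fun z => (h.symm (unitCircleHomeo z) : Y), by fun_prop, ?_, ?_⟩
    · intro a b hab
      exact unitCircleHomeo.injective (h.symm.injective (Subtype.ext hab))
    · ext y
      constructor
      · rintro ⟨z, rfl⟩
        exact Subtype.property _
      · intro hy
        exact ⟨unitCircleHomeo.symm (h ⟨y, hy⟩), by simp⟩
  · rintro ⟨e, h1, h2, rfl⟩
    have := (h1.isClosedEmbedding h2).toIsEmbedding.toHomeomorph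
    exact ⟨this.symm.trans unitCircleHomeo⟩

lemma loop_lift {Y : Type*} [TopologicalSpace Y] {l : ℝ → Y}
    (hl : ContinuousOn l (Icc 0 1)) (h01 : l 0 = l 1) (hinj : InjOn l (Ico 0 1)) :
    ∃ e : UnitAddCircle → Y, Continuous e ∧ Function.Injective e ∧ range e = l '' Icc 0 1 ∧
      ∀ t ∈ Icc (0:ℝ) 1, e t = l t := by
  have hval : ∀ t ∈ Icc (0:ℝ) 1, AddCircle.liftIco 1 0 l (t : UnitAddCircle) = l t := by
    intro t ht
    rcases eq_or_lt_of_le ht.2 with h | h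
    · rw [h, ← h01, AddCircle.coe_period]
      exact AddCircle.liftIco_zero_coe_apply (p := 1) (f := l) (x := 0) (by simp)
    · exact AddCircle.liftIco_zero_coe_apply (p := 1) ⟨ht.1, h⟩
  have hrep : ∀ z : UnitAddCircle, ∃ t ∈ Ico (0:ℝ) 1, (t : UnitAddCircle) = z := by
    intro z
    have : z ∈ ((↑) : ℝ → UnitAddCircle) '' Ico 0 (0 + 1) := by
      rw [AddCircle.coe_image_Ico_eq]; trivial
    simpa using this
  refine ⟨AddCircle.liftIco 1 0 l, AddCircle.liftIco_zero_continuous h01 hl, ?_, ?_, hval⟩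
  · intro a b hab
    obtain ⟨s, hs, rfl⟩ := hrep a
    obtain ⟨t, ht, rfl⟩ := hrep b
    rw [hval s ⟨hs.1, hs.2.le⟩, hval t ⟨ht.1, ht.2.le⟩] at hab
    rw [hinj hs ht hab]
  · ext y
    constructor
    · rintro ⟨z, rfl⟩
      obtain ⟨t, ht, rfl⟩ := hrep z
      exact ⟨t, ⟨ht.1, ht.2.le⟩, (hval t ⟨ht.1, ht.2.le⟩).symm⟩
    · rintro ⟨t, ht, rfl⟩
      exact ⟨t, hval t ht⟩

lemma circle_of_loop {Y : Type*} [TopologicalSpace Y] [T2Space Y] {l : ℝ → Y}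
    (hl : ContinuousOn l (Icc 0 1)) (h01 : l 0 = l 1) (hinj : InjOn l (Ico 0 1)) :
    IsCircleSet (l '' Icc 0 1) := by
  obtain ⟨e, h1, h2, h3, -⟩ := loop_lift hl h01 hinj
  exact isCircleSet_iff.2 ⟨e, h1, h2, h3⟩

/-- A circle through `p` is parametrised by a loop based at `p`. -/
lemma IsCircleSet.exists_loop {Y : Type*} [TopologicalSpace Y] [T2Space Y] {C : Set Y}
    (hC : IsCircleSet C) {p : Y} (hp : p ∈ C) :
    ∃ l : ℝ → Y, Continuous l ∧ l 0 = p ∧ l 1 = p ∧ InjOn l (Ico 0 1) ∧ range l = C ∧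
      l '' Icc 0 1 = C ∧ ∀ s t, l s = l t ↔ (s : UnitAddCircle) = (t : UnitAddCircle) := by
  obtain ⟨e, h1, h2, rfl⟩ := isCircleSet_iff.1 hC
  obtain ⟨z, rfl⟩ := hp
  have h01 : ((1:ℝ) : UnitAddCircle) = 0 := AddCircle.coe_period 1
  have hiff : ∀ s t : ℝ, e (s + z) = e (t + z) ↔ (s : UnitAddCircle) = (t : UnitAddCircle) :=
    fun s t => by rw [h2.eq_iff, add_left_inj]
  have hrep : ∀ y : UnitAddCircle, ∃ t ∈ Ico (0:ℝ) 1, (t : UnitAddCircle) = y := by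
    intro y
    have : y ∈ ((↑) : ℝ → UnitAddCircle) '' Ico 0 (0 + 1) := by
      rw [AddCircle.coe_image_Ico_eq]; trivial
    simpa using this
  have hinj : InjOn ((↑) : ℝ → UnitAddCircle) (Ico 0 1) := by
    intro s hs t ht h
    exact (AddCircle.coe_eq_coe_iff_of_mem_Ico (p := (1:ℝ)) (a := 0) (by simpa using hs)
      (by simpa using ht)).1 h
  have hr : ∀ y, ∃ t ∈ Ico (0:ℝ) 1, e ((t : UnitAddCircle) + z) = e y := by
    intro y
    obtain ⟨t, ht, h⟩ := hrep (y - z)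
    exact ⟨t, ht, by rw [h, sub_add_cancel]⟩
  refine ⟨fun t => e ((t : UnitAddCircle) + z), ?_, by simp, by simp only [h01, zero_add], ?_, ?_, ?_, hiff⟩
  · exact h1.comp ((AddCircle.continuous_mk' 1).add continuous_const)
  · intro s hs t ht h
    exact hinj hs ht ((hiff s t).1 h)
  · ext w
    constructor
    · rintro ⟨t, rfl⟩; exact ⟨_, rfl⟩
    · rintro ⟨y, rfl⟩
      obtain ⟨t, ht, h⟩ := hr y
      exact ⟨t, h⟩
  · ext w
    constructor
    · rintro ⟨t, -, rfl⟩; exact ⟨_, rfl⟩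
    · rintro ⟨y, rfl⟩
      obtain ⟨t, ht, h⟩ := hr y
      exact ⟨t, ⟨ht.1, ht.2.le⟩, h⟩

lemma IsArcFn.sub {Y : Type*} [TopologicalSpace Y] {α : ℝ → Y} (hα : IsArcFn α) {u v : ℝ}
    (hu : u ∈ Icc (0:ℝ) 1) (hv : v ∈ Icc (0:ℝ) 1) (huv : u ≠ v) :
    IsArcFn (fun t => α (u + t * (v - u))) ∧
      (fun t => α (u + t * (v - u))) '' Icc 0 1 = α '' uIcc u v := by
  have him : (fun t : ℝ => u + t * (v - u)) '' Icc 0 1 = uIcc u v := by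
    rw [← segment_eq_uIcc, segment_eq_image']
    simp [smul_eq_mul]
  have hm : ∀ t ∈ Icc (0:ℝ) 1, u + t * (v - u) ∈ Icc (0:ℝ) 1 := fun t ht => by
    have h1 : u + t * (v - u) ∈ uIcc u v := him ▸ ⟨t, ht, rfl⟩
    exact ordConnected_Icc.uIcc_subset hu hv h1
  refine ⟨⟨hα.1.comp (by fun_prop), ?_⟩, ?_⟩
  · intro s hs t ht h
    have h1 := hα.2 (hm s hs) (hm t ht) h
    have h2 : (s - t) * (v - u) = 0 := by linarith
    rcases mul_eq_zero.1 h2 with h3 | h3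
    · linarith
    · exact absurd (by linarith) huv
  · rw [← him, image_image]

/-- Two arcs with common endpoints and no other common point form a circle. -/
lemma circle_of_two_arcs {Y : Type*} [TopologicalSpace Y] [T2Space Y] {α β : ℝ → Y}
    (hα : IsArcFn α) (hβ : IsArcFn β) (h0 : α 0 = β 0) (h1 : α 1 = β 1)
    (hd : ∀ t ∈ Ioo (0:ℝ) 1, β t ∉ α '' Icc 0 1) :
    IsCircleSet (α '' Icc 0 1 ∪ β '' Icc 0 1) := by
  let l : ℝ → Y := fun t => if t ≤ 1 / 2 then α (2 * t) else β (2 - 2 * t)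
  have hl : Continuous l := by
    refine Continuous.if_le (hα.1.comp (by fun_prop)) (hβ.1.comp (by fun_prop)) continuous_id
      continuous_const ?_
    intro t ht
    have ht : t = 1 / 2 := ht
    rw [ht]; norm_num [h1]
  have hl1 : ∀ t, t ≤ 1 / 2 → l t = α (2 * t) := fun t ht => if_pos ht
  have hl2 : ∀ t, 1 / 2 < t → l t = β (2 - 2 * t) := fun t ht => if_neg (not_le.2 ht)
  have key : ∀ s ∈ Ico (0:ℝ) 1, ∀ t ∈ Ico (0:ℝ) 1, s ≤ t → l s = l t → s = t := by
    intro s hs t ht hst h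
    rcases le_or_gt t (1 / 2) with h3 | h3
    · rw [hl1 t h3, hl1 s (hst.trans h3)] at h
      have := hα.2 ⟨by linarith [hs.1], by linarith⟩ ⟨by linarith [ht.1], by linarith⟩ h
      linarith
    · rcases le_or_gt s (1 / 2) with h4 | h4
      · rw [hl1 s h4, hl2 t h3] at h
        exact (hd (2 - 2 * t) ⟨by linarith [ht.2], by linarith⟩
          ⟨2 * s, ⟨by linarith [hs.1], by linarith⟩, h⟩).elim
      · rw [hl2 s h4, hl2 t h3] at h
        have := hβ.2 ⟨by linarith [hs.2], by linarith⟩ ⟨by linarith [ht.2], by linarith⟩ h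
        linarith
  have himg : l '' Icc 0 1 = α '' Icc 0 1 ∪ β '' Icc 0 1 := by
    ext y
    constructor
    · rintro ⟨t, ht, rfl⟩
      rcases le_or_gt t (1 / 2) with h3 | h3
      · exact Or.inl ⟨2 * t, ⟨by linarith [ht.1], by linarith⟩, (hl1 t h3).symm⟩
      · exact Or.inr ⟨2 - 2 * t, ⟨by linarith [ht.2], by linarith⟩, (hl2 t h3).symm⟩
    · rintro (⟨t, ht, rfl⟩ | ⟨t, ht, rfl⟩)
      · refine ⟨t / 2, ⟨by linarith [ht.1], by linarith [ht.2]⟩, ?_⟩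
        rw [hl1 _ (by linarith [ht.2])]
        congr 1; ring
      · rcases eq_or_lt_of_le ht.2 with h | h
        · refine ⟨1 / 2, by norm_num, ?_⟩
          rw [hl1 _ le_rfl, h, ← h1]; norm_num
        · refine ⟨1 - t / 2, ⟨by linarith, by linarith [ht.1]⟩, ?_⟩
          rw [hl2 _ (by linarith)]
          congr 1; ring
  rw [← himg]
  refine circle_of_loop hl.continuousOn ?_ ?_
  · rw [hl1 0 (by norm_num), hl2 1 (by norm_num)]; norm_num [h0]
  · intro s hs t ht h
    rcases le_total s t with hst | hst
    · exact key s hs t ht hst h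
    · exact (key t ht s hs hst h.symm).symm

/-- An arc which starts and ends on a second arc but leaves it in between yields a circle
meeting the second arc. -/
theorem theta' {Y : Type*} [TopologicalSpace Y] [T2Space Y] {α β : ℝ → Y}
    (hα : IsArcFn α) (hβ : IsArcFn β) (h0 : β 0 ∈ α '' Icc 0 1) (h1 : β 1 ∈ α '' Icc 0 1)
    {t : ℝ} (ht : t ∈ Icc (0:ℝ) 1) (hne : β t ∉ α '' Icc 0 1) :
    ∃ C, IsCircleSet C ∧ C ⊆ α '' Icc 0 1 ∪ β '' Icc 0 1 ∧ (C ∩ α '' Icc 0 1).Nonempty := by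
  let S : Set ℝ := β ⁻¹' (α '' Icc 0 1)
  have hS : IsClosed S := (isCompact_Icc.image hα.1).isClosed.preimage hβ.1
  have hl := gapL_mem hS ⟨0, h0, ht.1⟩
  have hr := gapR_mem hS ⟨1, h1, ht.2⟩
  have hl0 := le_gapL (F := S) h0 ht.1
  have hr1 := gapR_le (F := S) h1 ht.2
  set a := gapL S t with ha
  set b := gapR S t with hb
  obtain ⟨u, hu, hau⟩ := hl.1
  obtain ⟨v, hv, hbv⟩ := hr.1
  have hat : a < t := lt_of_le_of_ne hl.2 fun h => hne (h ▸ hl.1)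
  have htb : t < b := lt_of_le_of_ne hr.2 fun h => hne (h ▸ hr.1)
  have haI : a ∈ Icc (0:ℝ) 1 := ⟨hl0, hat.le.trans ht.2⟩
  have hbI : b ∈ Icc (0:ℝ) 1 := ⟨ht.1.trans htb.le, hr1⟩
  have huv : u ≠ v := by
    rintro rfl
    exact (hat.trans htb).ne (hβ.2 haI hbI (hau.symm.trans hbv))
  obtain ⟨hα', eα⟩ := hα.sub hu hv huv
  obtain ⟨hβ', eβ⟩ := hβ.sub haI hbI (hat.trans htb).ne
  refine ⟨_, circle_of_two_arcs hα' hβ' (by simpa using hau) (by simpa using hbv) ?_, ?_, ?_⟩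
  · intro s hs
    rw [eα]
    intro h
    have h3 : a + s * (b - a) ∈ S :=
      image_mono (ordConnected_Icc.uIcc_subset hu hv) h
    exact gap_empty h3 (by nlinarith [hs.1, hs.2]) (by nlinarith [hs.1, hs.2])
  · rw [eα, eβ]
    exact union_subset_union (image_mono (ordConnected_Icc.uIcc_subset hu hv))
      (image_mono (ordConnected_Icc.uIcc_subset haI hbI))
  · rw [eα]
    exact ⟨α u, Or.inl ⟨u, left_mem_uIcc, rfl⟩, ⟨u, hu, rfl⟩⟩

lemma theta {Y : Type*} [TopologicalSpace Y] [T2Space Y] {α β : ℝ → Y}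
    (hα : IsArcFn α) (hβ : IsArcFn β) (h0 : β 0 ∈ α '' Icc 0 1) (h1 : β 1 ∈ α '' Icc 0 1)
    {t : ℝ} (ht : t ∈ Icc (0:ℝ) 1) (hne : β t ∉ α '' Icc 0 1) :
    ∃ C, IsCircleSet C ∧ C ⊆ α '' Icc 0 1 ∪ β '' Icc 0 1 := by
  obtain ⟨C, h, h', -⟩ := theta' hα hβ h0 h1 ht hne
  exact ⟨C, h, h'⟩

lemma IsCircleSet.isCompact {Y : Type*} [TopologicalSpace Y] {C : Set Y} (hC : IsCircleSet C) :
    IsCompact C := by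
  obtain ⟨h⟩ := hC
  have : CompactSpace (Metric.sphere (0:ℂ) 1) := isCompact_iff_compactSpace.1 (isCompact_sphere _ _)
  exact isCompact_iff_compactSpace.2 h.symm.compactSpace

lemma IsCircleSet.infinite {Y : Type*} [TopologicalSpace Y] [T2Space Y] {C : Set Y}
    (hC : IsCircleSet C) : C.Infinite := by
  obtain ⟨e, h1, h2, rfl⟩ := isCircleSet_iff.1 hC
  have : Infinite UnitAddCircle := by
    have h : InjOn ((↑) : ℝ → UnitAddCircle) (Ico 0 1) := by
      intro s hs t ht h
      exact (AddCircle.coe_eq_coe_iff_of_mem_Ico (p := (1:ℝ)) (a := 0) (by simpa using hs)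
        (by simpa using ht)).1 h
    have := (Ico_infinite (zero_lt_one' ℝ)).image h
    exact Set.infinite_univ_iff.1 (this.mono (subset_univ _))
  exact infinite_range_of_injective h2

lemma IsCircleSet.isConnected {Y : Type*} [TopologicalSpace Y] [T2Space Y] {C : Set Y}
    (hC : IsCircleSet C) : IsConnected C := by
  obtain ⟨p, hp⟩ := hC.infinite.nonempty
  obtain ⟨l, h1, -, -, -, h2, -⟩ := hC.exists_loop hp
  rw [← h2]
  exact isConnected_range h1

/-- Being a circle is not affected by a continuous injection. -/
lemma IsCircleSet.image {Y Z : Type*} [TopologicalSpace Y] [T2Space Y] [TopologicalSpace Z]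
    [T2Space Z] {C : Set Y} (hC : IsCircleSet C) {f : Y → Z} (hf : ContinuousOn f C)
    (hi : InjOn f C) : IsCircleSet (f '' C) := by
  obtain ⟨e, h1, h2, rfl⟩ := isCircleSet_iff.1 hC
  refine isCircleSet_iff.2 ⟨f ∘ e, hf.comp_continuous h1 (fun x => ⟨x, rfl⟩), ?_, ?_⟩
  · intro a b h
    exact h2 (hi ⟨a, rfl⟩ ⟨b, rfl⟩ h)
  · rw [range_comp]

/-! ### Disjoint continua in a space with finitely many circles -/

lemma isClosed_compIn {Y : Type*} [TopologicalSpace Y] {F : Set Y} (hF : IsClosed F) (x : Y) :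
    IsClosed (connectedComponentIn F x) := by
  by_cases hx : x ∈ F
  · refine closure_subset_iff_isClosed.1 ?_
    exact (isPreconnected_connectedComponentIn.closure).subset_connectedComponentIn
      (subset_closure (mem_connectedComponentIn hx))
      (closure_minimal (connectedComponentIn_subset _ _) hF)
  · rw [connectedComponentIn_eq_empty hx]; exact isClosed_empty

lemma exists_clopen_sub {Z : Type*} [TopologicalSpace Z] [T2Space Z] [CompactSpace Z] {x : Z}
    {V : Set Z} (hV : IsOpen V) (h : connectedComponent x ⊆ V) :
    ∃ s, IsClopen s ∧ x ∈ s ∧ s ⊆ V := by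
  rw [connectedComponent_eq_iInter_isClopen] at h
  have : Nonempty { s : Set Z // IsClopen s ∧ x ∈ s } := ⟨⟨univ, isClopen_univ, mem_univ _⟩⟩
  obtain ⟨⟨s, hs⟩, h2⟩ := exists_subset_nhds_of_compactSpace
    (V := fun s : { s : Set Z // IsClopen s ∧ x ∈ s } => s.1) (U := V)
    (fun s t => ⟨⟨s.1 ∩ t.1, s.2.1.inter t.2.1, s.2.2, t.2.2⟩, inter_subset_left,
      inter_subset_right⟩) (fun s => s.2.1.isClosed) (fun y hy => hV.mem_nhds (h hy))
  exact ⟨s, hs.1, hs.2, h2⟩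

/-- Boundary bumping: a continuum that leaves an open set `U` contains a subcontinuum of
`closure U` through any prescribed point of `U` which still leaves `U`. -/
lemma bump {Y : Type*} [TopologicalSpace Y] [T2Space Y] {K U : Set Y} {x : Y}
    (hK : IsCompact K) (hKc : IsPreconnected K) (hU : IsOpen U) (hx : x ∈ K) (hxU : x ∈ U)
    (hKU : ¬ K ⊆ U) : ∃ C ⊆ K ∩ closure U, IsPreconnected C ∧ x ∈ C ∧ (C \ U).Nonempty ∧
      IsCompact C := by
  set T := K ∩ closure U with hT
  have hTc : IsCompact T := hK.inter_right isClosed_closure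
  have hxT : x ∈ T := ⟨hx, subset_closure hxU⟩
  refine ⟨connectedComponentIn T x, connectedComponentIn_subset _ _,
    isPreconnected_connectedComponentIn, mem_connectedComponentIn hxT, ?_,
    hTc.of_isClosed_subset (isClosed_compIn hTc.isClosed x) (connectedComponentIn_subset _ _)⟩
  by_contra hne
  rw [not_nonempty_iff_eq_empty, sdiff_eq_empty, connectedComponentIn_eq_image hxT,
    image_subset_iff] at hne
  have : CompactSpace T := isCompact_iff_compactSpace.1 hTc
  obtain ⟨s, hs, hxs, hsV⟩ := exists_clopen_sub (hU.preimage continuous_subtype_val) hne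
  obtain ⟨O, hO, rfl⟩ := isOpen_induced_iff.1 hs.isOpen
  have hE : IsClosed ((Subtype.val : T → Y) '' (Subtype.val ⁻¹' O)) :=
    (hs.isClosed.isCompact.image continuous_subtype_val).isClosed
  obtain ⟨z, hzK, hzU⟩ := not_subset.1 hKU
  obtain ⟨w, hwK, ⟨hwO, hwU⟩, hwE⟩ := hKc (O ∩ U) _ (hO.inter hU) hE.isOpen_compl
    (by
      intro y hy
      by_cases hy2 : y ∈ (Subtype.val : T → Y) '' (Subtype.val ⁻¹' O)
      · obtain ⟨u, hu, rfl⟩ := hy2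
        exact Or.inl ⟨hu, hsV hu⟩
      · exact Or.inr hy2)
    ⟨x, hx, hxs, hxU⟩ ⟨z, hzK, by rintro ⟨u, hu, rfl⟩; exact hzU (hsV hu)⟩
  exact hwE ⟨⟨w, hwK, subset_closure hwU⟩, hwO, rfl⟩

lemma exists_ball_no_circle {Y : Type*} [MetricSpace Y]
    (hfin : {C : Set Y | IsCircleSet C}.Finite) (a : Y) :
    ∃ ρ > 0, ∀ C, IsCircleSet C → ¬ C ⊆ Metric.ball a ρ := by
  have h1 : ∀ C : Set Y, ∃ p, IsCircleSet C → p ∈ C ∧ p ≠ a := by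
    intro C
    by_cases hC : IsCircleSet C
    · obtain ⟨p, hp, hpa⟩ := (hC.infinite).exists_notMem_finset {a}
      exact ⟨p, fun _ => ⟨hp, by simpa using hpa⟩⟩
    · exact ⟨a, fun h => absurd h hC⟩
  choose p hp using h1
  have h2 : IsOpen ((p '' {C : Set Y | IsCircleSet C})ᶜ) :=
    (hfin.image p).isClosed.isOpen_compl
  have h3 : a ∈ (p '' {C : Set Y | IsCircleSet C})ᶜ := by
    rintro ⟨C, hC, h⟩
    exact (hp C hC).2 h
  obtain ⟨ρ, hρ, h4⟩ := Metric.isOpen_iff.1 h2 a h3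
  exact ⟨ρ, hρ, fun C hC hCs => h4 (hCs (hp C hC).1) ⟨C, hC, rfl⟩⟩

lemma exists_conn_nhd {Y : Type*} [TopologicalSpace Y] [LocallyConnectedSpace Y] {U : Set Y}
    (hU : IsOpen U) {x : Y} (hx : x ∈ U) :
    ∃ V ⊆ U, IsOpen V ∧ IsPreconnected V ∧ x ∈ V :=
  ⟨connectedComponentIn U x, connectedComponentIn_subset _ _, hU.connectedComponentIn,
    isPreconnected_connectedComponentIn, mem_connectedComponentIn hx⟩

/-- In a Peano continuum with finitely many circles there is no infinite sequence of pairwise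
disjoint continua of diameter bounded below: two of them that are close to each other at two
far apart places would produce a small circle. -/
theorem fs_seq {Y : Type*} [MetricSpace Y] [CompactSpace Y] [LocallyConnectedSpace Y]
    (hfin : {C : Set Y | IsCircleSet C}.Finite) {ε : ℝ} (hε : 0 < ε) (K : ℕ → Set Y)
    (hKc : ∀ n, IsCompact (K n)) (hKp : ∀ n, IsPreconnected (K n))
    (hd : ∀ n m, n ≠ m → Disjoint (K n) (K m))
    (hx : ∀ n, ∃ x ∈ K n, ∃ y ∈ K n, ε ≤ dist x y) : False := by
  have : LocallyPathConnectedSpace Y := locPath_of_peano Y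
  choose x hxK y hyK hxy using hx
  obtain ⟨a, -, φ, hφ, hlim⟩ := isCompact_univ.tendsto_subseq (fun n => mem_univ (x n))
  obtain ⟨ρ₀, hρ₀, hnc₀⟩ := exists_ball_no_circle hfin a
  set ρ := min ρ₀ (ε / 2) with hρdef
  have hρ : 0 < ρ := lt_min hρ₀ (by linarith)
  have hρε : ρ ≤ ε / 2 := min_le_right _ _
  have hnc : ∀ C, IsCircleSet C → ¬ C ⊆ Metric.ball a ρ := fun C hC h =>
    hnc₀ C hC (h.trans (Metric.ball_subset_ball (min_le_left _ _)))
  obtain ⟨N, hN⟩ := (Metric.tendsto_atTop.1 hlim) (ρ / 2) (by linarith)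
  have hb : ∀ n, ∃ C ⊆ K (φ (n + N)) ∩ closure (Metric.ball a (ρ / 2)), IsPreconnected C ∧
      x (φ (n + N)) ∈ C ∧ (C \ Metric.ball a (ρ / 2)).Nonempty ∧ IsCompact C := by
    intro n
    have hxa := hN (n + N) (Nat.le_add_left _ _)
    refine bump (hKc _) (hKp _) Metric.isOpen_ball (hxK _) hxa ?_
    intro h
    have h1 := h (hyK (φ (n + N)))
    rw [Metric.mem_ball] at h1
    have h2 := hxy (φ (n + N))
    have h3 := dist_triangle_right (x (φ (n + N))) (y (φ (n + N))) a
    simp only [Function.comp] at hxa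
    linarith
  choose C hCK hCp hxC hCne hCc using hb
  choose c hcC hcb using hCne
  obtain ⟨c₀, -, ψ, hψ, hlim2⟩ := isCompact_univ.tendsto_subseq (fun n => mem_univ (c n))
  have hcl : ∀ n, C n ⊆ Metric.closedBall a (ρ / 2) := fun n =>
    ((hCK n).trans inter_subset_right).trans Metric.closure_ball_subset_closedBall
  have hc1 : c₀ ∈ Metric.closedBall a (ρ / 2) :=
    Metric.isClosed_closedBall.mem_of_tendsto hlim2 (.of_forall fun n => hcl _ (hcC _))
  have hc2 : c₀ ∈ (Metric.ball a (ρ / 2))ᶜ :=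
    Metric.isOpen_ball.isClosed_compl.mem_of_tendsto hlim2 (.of_forall fun n => hcb _)
  have hac : a ≠ c₀ := by
    rintro rfl
    exact hc2 (Metric.mem_ball_self (by linarith))
  obtain ⟨Oa, Oc, hOa, hOc, haO, hcO, hOd⟩ := t2_separation hac
  set V := Metric.ball a ρ with hV
  have haV : a ∈ V := Metric.mem_ball_self hρ
  have hcV : c₀ ∈ V := by
    rw [Metric.mem_closedBall] at hc1
    rw [hV, Metric.mem_ball]; linarith
  have hCV : ∀ n, C n ⊆ V := fun n z hz => by
    have := hcl n hz
    rw [Metric.mem_closedBall] at this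
    rw [hV, Metric.mem_ball]; linarith
  obtain ⟨Va, hVaU, hVao, hVac, haVa⟩ := exists_conn_nhd (hOa.inter Metric.isOpen_ball) ⟨haO, haV⟩
  obtain ⟨Vc, hVcU, hVco, hVcc, hcVc⟩ := exists_conn_nhd (hOc.inter Metric.isOpen_ball) ⟨hcO, hcV⟩
  have hVd : Disjoint Va Vc := hOd.mono (hVaU.trans inter_subset_left) (hVcU.trans inter_subset_left)
  have hlim' : Filter.Tendsto (fun n => x (φ (ψ n + N))) Filter.atTop (𝓝 a) :=
    hlim.comp ((Filter.tendsto_add_atTop_nat N).comp hψ.tendsto_atTop)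
  have hev := (hlim'.eventually (hVao.mem_nhds haVa)).and (hlim2.eventually (hVco.mem_nhds hcVc))
  obtain ⟨n₀, hn₀⟩ := Filter.eventually_atTop.1 hev
  set n := ψ n₀ with hn
  set m := ψ (n₀ + 1) with hm
  have hnm : n ≠ m := (hψ (Nat.lt_succ_self n₀)).ne
  have hCd : Disjoint (C n) (C m) := by
    refine (hd (φ (n + N)) (φ (m + N)) ?_).mono ((hCK _).trans inter_subset_left)
      ((hCK _).trans inter_subset_left)
    intro h
    have := hφ.injective h
    omega
  obtain ⟨O1, O2, hO1, hO2, hC1, hC2, hO⟩ := SeparatedNhds.of_isCompact_isCompact (hCc n) (hCc m) hCd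
  -- a connected open set following `C i`, which joins `a` to `c₀`
  have key : ∀ i O, IsOpen O → C i ⊆ O → x (φ (i + N)) ∈ Va → c i ∈ Vc →
      ∃ α : ℝ → Y, IsArcFn α ∧ α 0 = a ∧ α 1 = c₀ ∧ ∀ t, α t ∈ Va ∪ (O ∩ V) ∪ Vc := by
    intro i O hO hCO h1 h2
    have hCOV : C i ⊆ O ∩ V := subset_inter hCO (hCV i)
    obtain ⟨P, hPO, hPo, hPc, hCP⟩ : ∃ P ⊆ O ∩ V, IsOpen P ∧ IsPreconnected P ∧ C i ⊆ P :=
      ⟨connectedComponentIn (O ∩ V) (c i), connectedComponentIn_subset _ _,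
        (hO.inter Metric.isOpen_ball).connectedComponentIn, isPreconnected_connectedComponentIn,
        (hCp i).subset_connectedComponentIn (hcC i) hCOV⟩
    have hW : IsPreconnected (Va ∪ P ∪ Vc) :=
      IsPreconnected.union (c i) (Or.inr (hCP (hcC i))) h2
        (IsPreconnected.union _ h1 (hCP (hxC i)) hVac hPc) hVcc
    obtain ⟨α, hα, hα0, hα1, hαW⟩ := exists_arc_in ((hVao.union hPo).union hVco) hW
      (Or.inl (Or.inl haVa)) (Or.inr hcVc) hac
    exact ⟨α, hα, hα0, hα1, fun t => union_subset_union_left _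
      (union_subset_union_right _ hPO) (hαW t)⟩
  obtain ⟨α, hα, hα0, hα1, hαW⟩ := key n O1 hO1 hC1 (hn₀ n₀ le_rfl).1 (hn₀ n₀ le_rfl).2
  obtain ⟨β, hβ, hβ0, hβ1, hβW⟩ := key m O2 hO2 hC2 (hn₀ (n₀ + 1) (Nat.le_succ _)).1
    (hn₀ (n₀ + 1) (Nat.le_succ _)).2
  have hex : ∃ t ∈ Icc (0:ℝ) 1, β t ∉ Va ∪ Vc := by
    by_contra hcon
    push Not at hcon
    obtain ⟨z, -, hz1, hz2⟩ := (isPreconnected_Icc.image β hβ.1.continuousOn) Va Vc hVao hVco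
      (by rintro _ ⟨t, ht, rfl⟩; exact hcon t ht)
      ⟨a, ⟨0, by simp, hβ0⟩, haVa⟩ ⟨c₀, ⟨1, by simp, hβ1⟩, hcVc⟩
    exact disjoint_left.1 hVd hz1 hz2
  obtain ⟨t, ht, htn⟩ := hex
  have htO : β t ∈ O2 := by
    rcases hβW t with (h | h) | h
    · exact absurd (Or.inl h) htn
    · exact h.1
    · exact absurd (Or.inr h) htn
  have htα : β t ∉ α '' Icc 0 1 := by
    rintro ⟨s, -, hs⟩
    rcases hαW s with (h | h) | h
    · rw [hs] at h; exact htn (Or.inl h)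
    · rw [hs] at h; exact disjoint_left.1 hO h.1 htO
    · rw [hs] at h; exact htn (Or.inr h)
  obtain ⟨D, hD, hDs⟩ := theta hα hβ ⟨0, by simp, by rw [hα0, hβ0]⟩ ⟨1, by simp, by rw [hα1, hβ1]⟩
    ht htα
  have hsub : ∀ O, Va ∪ (O ∩ V) ∪ Vc ⊆ V := fun O => union_subset (union_subset
    (hVaU.trans inter_subset_right) inter_subset_right) (hVcU.trans inter_subset_right)
  refine hnc D hD (hDs.trans (union_subset ?_ ?_))
  · rintro _ ⟨s, -, rfl⟩; exact hsub _ (hαW s)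
  · rintro _ ⟨s, -, rfl⟩; exact hsub _ (hβW s)

theorem fs_finite {Y : Type*} [MetricSpace Y] [CompactSpace Y] [LocallyConnectedSpace Y]
    (hfin : {C : Set Y | IsCircleSet C}.Finite) {ε : ℝ} (hε : 0 < ε) (𝒦 : Set (Set Y))
    (hKc : ∀ K ∈ 𝒦, IsClosed K) (hKp : ∀ K ∈ 𝒦, IsPreconnected K)
    (hd : ∀ K ∈ 𝒦, ∀ K' ∈ 𝒦, K ≠ K' → Disjoint K K')
    (hx : ∀ K ∈ 𝒦, ∃ x ∈ K, ∃ y ∈ K, ε ≤ dist x y) : 𝒦.Finite := by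
  by_contra hinf
  let e := Set.Infinite.natEmbedding 𝒦 hinf
  exact fs_seq hfin hε (fun n => (e n).1) (fun n => (hKc _ (e n).2).isCompact)
    (fun n => hKp _ (e n).2)
    (fun n m hnm => hd _ (e n).2 _ (e m).2 fun h => hnm (e.injective (Subtype.ext h)))
    (fun n => hx _ (e n).2)

/-- Subcontinua of a Peano continuum with finitely many circles are locally connected. -/
theorem locConn_sub {Y : Type*} [MetricSpace Y] [CompactSpace Y] [LocallyConnectedSpace Y]
    (hfin : {C : Set Y | IsCircleSet C}.Finite) {K : Set Y} (hK : IsClosed K)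
    (hKc : IsPreconnected K) : LocallyConnectedSpace K := by
  rw [locallyConnectedSpace_iff_connected_subsets]
  intro x U hU
  obtain ⟨ε, hε, hεU⟩ := Metric.mem_nhds_iff.1 hU
  set F := K ∩ Metric.closedBall x.1 (ε / 2) with hF
  have hFc : IsClosed F := hK.inter Metric.isClosed_closedBall
  have hxF : x.1 ∈ F := ⟨x.2, Metric.mem_closedBall_self (by linarith)⟩
  refine ⟨Subtype.val ⁻¹' connectedComponentIn F x.1, ?_, ?_, ?_⟩
  · by_cases hKU : K ⊆ Metric.ball x.1 (ε / 2)
    · have : K ⊆ connectedComponentIn F x.1 := hKc.subset_connectedComponentIn x.2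
        (subset_inter Subset.rfl (hKU.trans Metric.ball_subset_closedBall))
      refine Filter.mem_of_superset Filter.univ_mem fun z _ => this z.2
    set 𝒦 := (connectedComponentIn F) '' (K ∩ Metric.ball x.1 (ε / 4)) with h𝒦
    have hfinK : 𝒦.Finite := by
      refine fs_finite hfin (ε := ε / 4) (by linarith) 𝒦 ?_ ?_ ?_ ?_
      · rintro _ ⟨y, -, rfl⟩; exact isClosed_compIn hFc _
      · rintro _ ⟨y, -, rfl⟩; exact isPreconnected_connectedComponentIn
      · rintro _ ⟨y, -, rfl⟩ _ ⟨y', -, rfl⟩ hne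
        rw [Set.disjoint_left]
        intro z hz hz'
        exact hne ((connectedComponentIn_eq hz).trans (connectedComponentIn_eq hz').symm)
      · rintro _ ⟨y, ⟨hyK, hyb⟩, rfl⟩
        have hyb' := Metric.mem_ball.1 hyb
        obtain ⟨C, hCs, hCp, hyC, ⟨z, hzC, hzb⟩, -⟩ := bump hK.isCompact hKc Metric.isOpen_ball hyK
          (Metric.ball_subset_ball (by linarith) hyb : y ∈ Metric.ball x.1 (ε / 2)) hKU
        have hCF : C ⊆ connectedComponentIn F y := hCp.subset_connectedComponentIn hyC
          (hCs.trans (inter_subset_inter_right _ Metric.closure_ball_subset_closedBall))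
        refine ⟨y, hCF hyC, z, hCF hzC, ?_⟩
        rw [Metric.mem_ball, not_lt] at hzb
        have := dist_triangle z y x.1
        rw [dist_comm y z]; linarith
    have hcl : IsClosed (⋃₀ {D ∈ 𝒦 | x.1 ∉ D}) := by
      rw [sUnion_eq_biUnion]
      refine Set.Finite.isClosed_biUnion (hfinK.subset (sep_subset _ _)) ?_
      rintro _ ⟨⟨y, -, rfl⟩, -⟩; exact isClosed_compIn hFc _
    have hO : IsOpen (Metric.ball x.1 (ε / 4) \ ⋃₀ {D ∈ 𝒦 | x.1 ∉ D}) :=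
      Metric.isOpen_ball.sdiff hcl
    refine Filter.mem_of_superset ((hO.preimage continuous_subtype_val).mem_nhds
      ⟨Metric.mem_ball_self (by linarith), ?_⟩) ?_
    · rintro ⟨D, ⟨-, hD⟩, hxD⟩; exact hD hxD
    · rintro z ⟨hz1, hz2⟩
      by_contra hz3
      refine hz2 ⟨connectedComponentIn F z.1, ⟨⟨z.1, ⟨z.2, hz1⟩, rfl⟩, ?_⟩,
        mem_connectedComponentIn ⟨z.2,
          (Metric.ball_subset_ball (by linarith)).trans Metric.ball_subset_closedBall hz1⟩⟩
      intro hxz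
      apply hz3
      rw [mem_preimage]
      rw [← connectedComponentIn_eq hxz]
      exact mem_connectedComponentIn ⟨z.2,
          (Metric.ball_subset_ball (by linarith)).trans Metric.ball_subset_closedBall hz1⟩
  · apply Topology.IsInducing.subtypeVal.isPreconnected_image.1
    rw [image_preimage_eq_of_subset]
    · exact isPreconnected_connectedComponentIn
    · rw [Subtype.range_coe]
      exact (connectedComponentIn_subset _ _).trans inter_subset_left
  · intro z hz
    apply hεU
    have := (connectedComponentIn_subset _ _ hz).2
    rw [Metric.mem_closedBall] at this
    rw [Metric.mem_ball, Subtype.dist_eq]; linarith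

/-- A closed set has only countably many nondegenerate components. -/
theorem countable_comps {Y : Type*} [MetricSpace Y] [CompactSpace Y] [LocallyConnectedSpace Y]
    (hfin : {C : Set Y | IsCircleSet C}.Finite) {F : Set Y} (hF : IsClosed F) :
    {D : Set Y | D.Nontrivial ∧ ∃ x ∈ F, D = connectedComponentIn F x}.Countable := by
  have : {D : Set Y | D.Nontrivial ∧ ∃ x ∈ F, D = connectedComponentIn F x} ⊆
      ⋃ n : ℕ, {D : Set Y | (∃ x ∈ D, ∃ y ∈ D, 1 / ((n : ℝ) + 1) ≤ dist x y) ∧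
        ∃ x ∈ F, D = connectedComponentIn F x} := by
    rintro D ⟨⟨x, hx, y, hy, hxy⟩, hD⟩
    obtain ⟨n, hn⟩ := exists_nat_one_div_lt (dist_pos.2 hxy)
    exact mem_iUnion.2 ⟨n, ⟨x, hx, y, hy, hn.le⟩, hD⟩
  refine Countable.mono this (countable_iUnion fun n => Set.Finite.countable ?_)
  refine fs_finite hfin (ε := 1 / ((n : ℝ) + 1)) (by positivity) _ ?_ ?_ ?_ ?_
  · rintro _ ⟨-, y, -, rfl⟩; exact isClosed_compIn hF _
  · rintro _ ⟨-, y, -, rfl⟩; exact isPreconnected_connectedComponentIn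
  · rintro _ ⟨-, y, -, rfl⟩ _ ⟨-, y', -, rfl⟩ hne
    rw [Set.disjoint_left]
    intro z hz hz'
    exact hne ((connectedComponentIn_eq hz).trans (connectedComponentIn_eq hz').symm)
  · rintro D ⟨h, -⟩; exact h

/-! ### Fixed points and circles -/

lemma closure_comp_compl {Y : Type*} [TopologicalSpace Y] [T1Space Y] [LocallyConnectedSpace Y]
    (x y : Y) : closure (connectedComponentIn {x}ᶜ y) ⊆ insert x (connectedComponentIn {x}ᶜ y) := by
  intro z hz
  by_cases hzx : z = x
  · exact Or.inl hzx
  right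
  have hzm : z ∈ ({x}ᶜ : Set Y) := hzx
  obtain ⟨w, hw1, hw2⟩ := mem_closure_iff.1 hz (connectedComponentIn {x}ᶜ z)
    isOpen_compl_singleton.connectedComponentIn (mem_connectedComponentIn hzm)
  rw [connectedComponentIn_eq hw2, ← connectedComponentIn_eq hw1]
  exact mem_connectedComponentIn hzm

lemma mem_closure_comp_compl {Y : Type*} [TopologicalSpace Y] [T1Space Y] [LocallyConnectedSpace Y]
    [PreconnectedSpace Y] {x y : Y} (hxy : y ≠ x) : x ∈ closure (connectedComponentIn {x}ᶜ y) := by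
  by_contra hcon
  have hcl : IsClosed (connectedComponentIn {x}ᶜ y) := by
    refine closure_subset_iff_isClosed.1 fun z hz => ?_
    rcases closure_comp_compl x y hz with rfl | h
    · exact absurd hz hcon
    · exact h
  have := IsClopen.eq_univ ⟨hcl, isOpen_compl_singleton.connectedComponentIn⟩
    ⟨y, mem_connectedComponentIn (show y ∈ ({x}ᶜ : Set Y) from hxy)⟩
  have hx : x ∈ connectedComponentIn {x}ᶜ y := by rw [this]; trivial
  exact connectedComponentIn_subset _ _ hx rfl

/-- If a self-map `h` of a Peano continuum has no fixed point, then for every point `c` there is a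
circle in the closure of the component of the complement of `c` to which `c` is moved.  Otherwise
that part of the space is dendrite-like, and moving from `c` towards `h c` as far as possible one
reaches a fixed point. -/
theorem exists_circle_of_fixedPointFree {Y : Type*} [MetricSpace Y] [CompactSpace Y]
    [LocallyConnectedSpace Y] [PreconnectedSpace Y] {h : Y → Y} (hh : Continuous h)
    (hfix : ∀ x, h x ≠ x) (c : Y) :
    ∃ C, IsCircleSet C ∧ C ⊆ insert c (connectedComponentIn {c}ᶜ (h c)) := by
  by_contra hnc
  push Not at hnc
  have : LocallyPathConnectedSpace Y := locPath_of_peano Y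
  set W : Y → Set Y := fun x => connectedComponentIn {x}ᶜ (h x) with hW
  have hWo : ∀ x, IsOpen (W x) := fun x => isOpen_compl_singleton.connectedComponentIn
  have hWp : ∀ x, IsPreconnected (W x) := fun x => isPreconnected_connectedComponentIn
  have hWx : ∀ x, x ∉ W x := fun x hx => connectedComponentIn_subset _ _ hx rfl
  have hWh : ∀ x, h x ∈ W x := fun x => mem_connectedComponentIn (hfix x)
  have hWcl : ∀ x, closure (W x) ⊆ insert x (W x) := fun x => closure_comp_compl x _
  have hWcl' : ∀ x, x ∈ closure (W x) := fun x => mem_closure_comp_compl (hfix x)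
  have hWsub : ∀ x (P : Set Y), IsPreconnected P → x ∉ P → (P ∩ W x).Nonempty → P ⊆ W x := by
    rintro x P hP hxP ⟨z, hzP, hz⟩
    have h1 : P ⊆ connectedComponentIn {x}ᶜ z := hP.subset_connectedComponentIn hzP
      (fun w hw hwx => hxP (by rw [mem_singleton_iff] at hwx; rwa [← hwx]))
    rwa [← connectedComponentIn_eq hz] at h1
  set V := W c with hV
  have hVcl : IsClosed (insert c V) := by
    refine closure_subset_iff_isClosed.1 fun z hz => ?_
    rw [insert_eq, closure_union, closure_singleton] at hz
    rcases hz with h | h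
    · exact Or.inl h
    · exact hWcl c h
  obtain ⟨_, ⟨⟨x, hxV, hWV, rfl⟩, hmin⟩⟩ := zorn_superset
    {S | ∃ x, x ∈ insert c V ∧ W x ⊆ V ∧ W x = S} (by
      intro 𝒞 h𝒞 hchain
      rcases 𝒞.eq_empty_or_nonempty with rfl | ⟨S₀, hS₀⟩
      · exact ⟨V, ⟨c, Or.inl rfl, Subset.rfl, rfl⟩, by simp⟩
      have hne : Nonempty 𝒞 := ⟨⟨S₀, hS₀⟩⟩
      choose p hpV hpW hp using fun S : 𝒞 => h𝒞 S.2
      obtain ⟨x, hx⟩ := IsCompact.nonempty_iInter_of_directed_nonempty_isCompact_isClosed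
        (fun i : 𝒞 => closure {z | ∃ j : 𝒞, j.1 ⊆ i.1 ∧ z = p j})
        (by
          intro i j
          rcases hchain.total i.2 j.2 with hij | hij
          · refine ⟨i, Subset.rfl, closure_mono ?_⟩
            rintro z ⟨k, hk, rfl⟩
            exact ⟨k, hk.trans hij, rfl⟩
          · refine ⟨j, closure_mono ?_, Subset.rfl⟩
            rintro z ⟨k, hk, rfl⟩
            exact ⟨k, hk.trans hij, rfl⟩)
        (fun i => ⟨p i, subset_closure ⟨i, Subset.rfl, rfl⟩⟩)
        (fun i => isClosed_closure.isCompact) (fun i => isClosed_closure)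
      rw [mem_iInter] at hx
      have hxV : x ∈ insert c V := by
        refine closure_minimal ?_ hVcl (hx ⟨S₀, hS₀⟩)
        rintro z ⟨j, -, rfl⟩; exact hpV j
      have hsub : ∀ i : 𝒞, W x ⊆ i.1 := by
        intro i
        by_contra hcon
        have hxi : x ∈ insert (p i) (W (p i)) := by
          refine hWcl (p i) (closure_minimal ?_ isClosed_closure (hx i))
          rintro z ⟨j, hj, rfl⟩
          rw [hp i]
          refine closure_mono hj ?_
          rw [← hp j]; exact hWcl' _
        rcases hxi with hxi | hxi
        · rw [hxi, hp i] at hcon; exact hcon Subset.rfl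
        have hpi : p i ∈ W x := by
          by_contra hpi
          obtain ⟨w, hw1, hw2⟩ := mem_closure_iff.1 (hWcl' x) _ (hWo (p i)) hxi
          have := hWsub (p i) (W x) (hWp x) hpi ⟨w, hw2, hw1⟩
          rw [hp i] at this
          exact hcon this
        have hjoin : JoinedIn (W x) (p i) (h x) :=
          (((hWo x).isConnected_iff_isPathConnected).1 ⟨⟨_, hpi⟩, hWp x⟩).joinedIn _ hpi _ (hWh x)
        obtain ⟨γ, hγ⟩ := hjoin
        have hPx : x ∈ range γ := by
          refine closure_minimal ?_ (isCompact_range γ.continuous).isClosed (hx i)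
          rintro z ⟨j, hj, rfl⟩
          by_contra hjP
          have hhx : h x ∈ insert (p j) (W (p j)) := by
            refine hWcl (p j) (closure_minimal ?_ isClosed_closure
              (image_closure_subset_closure_image hh ⟨x, hx j, rfl⟩))
            rintro _ ⟨_, ⟨k, hk, rfl⟩, rfl⟩
            refine subset_closure ?_
            rw [hp j]
            refine hk ?_
            rw [← hp k]; exact hWh _
          have hhr : h x ∈ range γ := ⟨1, γ.target⟩
          rcases hhx with hhx | hhx
          · exact hjP ⟨1, γ.target.trans hhx⟩
          · have := hWsub (p j) (range γ) (isPreconnected_range γ.continuous) hjP ⟨_, hhr, hhx⟩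
              ⟨0, γ.source⟩
            rw [hp j] at this
            have h2 := hj this
            rw [← hp i] at h2
            exact hWx _ h2
        obtain ⟨t, ht⟩ := hPx
        have hγt := hγ t
        rw [ht] at hγt
        exact hWx x hγt
      refine ⟨W x, ⟨x, hxV, ?_, rfl⟩, fun S hS => hsub ⟨S, hS⟩⟩
      refine (hsub ⟨S₀, hS₀⟩).trans ?_
      rw [← hp ⟨S₀, hS₀⟩]; exact hpW _)
  obtain ⟨α, hα, hα0, hα1, -⟩ := exists_arc_in isOpen_univ isPreconnected_univ (mem_univ (h x))
    (mem_univ x) (hfix x)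
  have hαW : ∀ t ∈ Ico (0:ℝ) 1, α t ∈ W x := by
    have := hWsub x (α '' Ico 0 1) (isPreconnected_Ico.image α hα.1.continuousOn) (by
      rintro ⟨t, ht, htx⟩
      have := hα.2 (Ico_subset_Icc_self ht) (right_mem_Icc.2 zero_le_one) (htx.trans hα1.symm)
      exact ht.2.ne this) ⟨h x, ⟨0, by simp, hα0⟩, hWh x⟩
    exact fun t ht => this ⟨t, ht, rfl⟩
  have hα' : ∀ t ∈ Icc (0:ℝ) 1, α t ∈ insert x (W x) := by
    intro t ht
    rcases ht.2.eq_or_lt with rfl | h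
    · exact Or.inl hα1
    · exact Or.inr (hαW t ⟨ht.1, h⟩)
  have hxWV : insert x (W x) ⊆ insert c V := insert_subset hxV (hWV.trans (subset_insert _ _))
  -- the interior points of the arc separate its end points
  have hsep : ∀ t ∈ Ioo (0:ℝ) 1, x ∉ connectedComponentIn {α t}ᶜ (h x) := by
    intro t ht hx
    have hxt : h x ∈ ({α t}ᶜ : Set Y) := by
      intro hcon
      exact ht.1.ne (hα.2 (left_mem_Icc.2 zero_le_one) (Ioo_subset_Icc_self ht)
        (hα0.trans hcon))
    obtain ⟨β, hβ, hβ0, hβ1, hβV⟩ := exists_arc_in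
      (isOpen_compl_singleton.connectedComponentIn (x := h x) (F := {α t}ᶜ))
      isPreconnected_connectedComponentIn (mem_connectedComponentIn hxt) hx (hfix x)
    have hβW := hWsub x (β '' Ico 0 1) (isPreconnected_Ico.image β hβ.1.continuousOn) (by
      rintro ⟨t, ht, htx⟩
      have := hβ.2 (Ico_subset_Icc_self ht) (right_mem_Icc.2 zero_le_one) (htx.trans hβ1.symm)
      exact ht.2.ne this) ⟨h x, ⟨0, by simp, hβ0⟩, hWh x⟩
    obtain ⟨C, hC, hCs⟩ := theta hβ hα ⟨0, by simp, by rw [hα0, hβ0]⟩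
      ⟨1, by simp, by rw [hα1, hβ1]⟩ (Ioo_subset_Icc_self ht) (by
        rintro ⟨s, -, hs⟩
        exact connectedComponentIn_subset _ _ (hβV s) hs)
    refine hnc C hC (hCs.trans ((union_subset ?_ ?_).trans hxWV))
    · rintro _ ⟨s, hs, rfl⟩
      rcases hs.2.eq_or_lt with rfl | h
      · exact Or.inl hβ1
      · exact Or.inr (hβW ⟨s, ⟨hs.1, h⟩, rfl⟩)
    · rintro _ ⟨s, hs, rfl⟩; exact hα' s hs
  obtain ⟨O1, O2, hO1, hO2, hxO1, hhO2, hOd⟩ := t2_separation (hfix x).symm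
  obtain ⟨N, hNO, hNo, hNp, hxN⟩ := exists_conn_nhd hO2 hhO2
  have hev : ∀ᶠ t in 𝓝[<] (1:ℝ), α t ∈ O1 ∧ h (α t) ∈ N ∧ t ∈ Ioo (0:ℝ) 1 := by
    have h1 : Filter.Tendsto α (𝓝[<] (1:ℝ)) (𝓝 x) := by
      rw [← hα1]; exact hα.1.continuousAt.mono_left nhdsWithin_le_nhds
    have h2 : Filter.Tendsto (fun t => h (α t)) (𝓝[<] (1:ℝ)) (𝓝 (h x)) :=
      (hh.tendsto x).comp h1
    exact (h1.eventually (hO1.mem_nhds hxO1)).and ((h2.eventually (hNo.mem_nhds hxN)).and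
      (Ioo_mem_nhdsLT zero_lt_one))
  obtain ⟨t, ht1, ht2, ht3⟩ := hev.exists
  have hWt : W (α t) = connectedComponentIn {α t}ᶜ (h x) := by
    refine connectedComponentIn_eq ?_
    refine hWsub (α t) N hNp (fun hN => disjoint_left.1 hOd ht1 (hNO hN)) ⟨_, ht2, hWh _⟩ hxN
  have hlt : W (α t) ⊆ W x := by
    refine hWsub x _ (hWp _) (by rw [hWt]; exact hsep t ht3) ⟨h x, ?_, hWh x⟩
    rw [hWt]
    refine mem_connectedComponentIn fun hcon => ?_
    exact ht3.1.ne (hα.2 (left_mem_Icc.2 zero_le_one) (Ioo_subset_Icc_self ht3)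
        (hα0.trans hcon))
  have hαt := hαW t (Ioo_subset_Ico_self ht3)
  exact hWx (α t) (hmin ⟨α t, hxWV (Or.inr hαt), hlt.trans hWV, rfl⟩ hlt hαt)

/-! ### Minimal maps -/

/-- The self-map `g` of `K` is minimal: the only nonempty closed set mapped into itself is the
whole space. -/
def IsMinMap {K : Type*} [TopologicalSpace K] (g : K → K) : Prop :=
  ∀ N : Set K, N.Nonempty → IsClosed N → (∀ x ∈ N, g x ∈ N) → N = univ

section
variable {K : Type*} [TopologicalSpace K] {g : K → K}

lemma IsMinMap.dense_orbit (hm : IsMinMap g) (hg : Continuous g) (x : K) :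
    Dense (range fun n : ℕ => g^[n] x) := by
  rw [dense_iff_closure_eq]
  refine hm _ ⟨x, subset_closure ⟨0, rfl⟩⟩ isClosed_closure fun y hy => ?_
  refine closure_mono ?_ (image_closure_subset_closure_image hg ⟨y, hy, rfl⟩)
  rintro _ ⟨_, ⟨n, rfl⟩, rfl⟩
  exact ⟨n + 1, Function.iterate_succ_apply' g n x⟩

/-- Every nonempty open set is visited by the forward orbit of any point at a positive time. -/
lemma IsMinMap.exists_iterate_mem (hm : IsMinMap g) (hg : Continuous g) (x : K) {U : Set K}
    (hU : IsOpen U) (hne : U.Nonempty) : ∃ n > 0, g^[n] x ∈ U := by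
  obtain ⟨_, hy, ⟨n, rfl⟩⟩ := (hm.dense_orbit hg (g x)).inter_open_nonempty U hU hne
  exact ⟨n + 1, Nat.succ_pos _, by rwa [Function.iterate_succ_apply]⟩

lemma IsMinMap.surjective [CompactSpace K] [T2Space K] [Nonempty K] (hm : IsMinMap g)
    (hg : Continuous g) : Function.Surjective g := by
  rw [← range_eq_univ]
  exact hm _ (range_nonempty g) (isCompact_range hg).isClosed fun x _ => ⟨x, rfl⟩

/-- A minimal map is irreducible: no proper closed set is mapped onto the whole space. -/
lemma IsMinMap.irreducible [CompactSpace K] [T2Space K] [Nonempty K] (hm : IsMinMap g)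
    (hg : Continuous g) {A : Set K} (hA : IsClosed A) (hgA : g '' A = univ) : A = univ := by
  have hb : ∀ x : K, ∃ y ∈ A, g y = x := fun x => by
    have : x ∈ g '' A := by rw [hgA]; trivial
    exact this
  choose b hbA hgb using hb
  obtain ⟨x₀⟩ := ‹Nonempty K›
  set x : ℕ → K := fun n => b^[n] (b x₀) with hx
  have hxA : ∀ n, x n ∈ A := by
    intro n
    cases n with
    | zero => exact hbA _
    | succ n => simp only [hx, Function.iterate_succ_apply']; exact hbA _
  have hgx : ∀ n, g (x (n + 1)) = x n := fun n => by
    simp only [hx, Function.iterate_succ_apply', hgb]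
  have hN : (⋂ n : ℕ, closure {z | ∃ i ≥ n, z = x i}) = univ := by
    refine hm _ ?_ (isClosed_iInter fun n => isClosed_closure) ?_
    · refine IsCompact.nonempty_iInter_of_directed_nonempty_isCompact_isClosed _ ?_
        (fun n => ⟨x n, subset_closure ⟨n, le_rfl, rfl⟩⟩)
        (fun n => isClosed_closure.isCompact) (fun n => isClosed_closure)
      intro n m
      refine ⟨max n m, closure_mono ?_, closure_mono ?_⟩
      · rintro z ⟨i, hi, rfl⟩; exact ⟨i, le_trans (le_max_left _ _) hi, rfl⟩
      · rintro z ⟨i, hi, rfl⟩; exact ⟨i, le_trans (le_max_right _ _) hi, rfl⟩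
    · intro z hz
      rw [mem_iInter] at hz ⊢
      intro n
      refine closure_mono ?_ (image_closure_subset_closure_image hg ⟨z, hz (n + 1), rfl⟩)
      rintro _ ⟨_, ⟨i, hi, rfl⟩, rfl⟩
      obtain ⟨j, rfl⟩ := Nat.exists_eq_add_of_le' hi
      exact ⟨j + n, Nat.le_add_left _ _, hgx (j + n)⟩
  rw [eq_univ_iff_forall] at hN ⊢
  intro z
  refine closure_minimal ?_ hA (mem_iInter.1 (hN z) 0)
  rintro _ ⟨i, -, rfl⟩; exact hxA i

lemma IsMinMap.irreducible_open [CompactSpace K] [T2Space K] [Nonempty K] (hm : IsMinMap g)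
    (hg : Continuous g) {O : Set K} (hO : IsOpen O) (hne : O.Nonempty)
    (h : ∀ x ∈ O, ∃ y, y ∉ O ∧ g y = g x) : False := by
  have h1 : g '' Oᶜ = univ := by
    rw [eq_univ_iff_forall]
    intro z
    obtain ⟨x, rfl⟩ := hm.surjective hg z
    by_cases hx : x ∈ O
    · obtain ⟨y, hy, hyx⟩ := h x hx
      exact ⟨y, hy, hyx⟩
    · exact ⟨x, hx, rfl⟩
  have h2 := hm.irreducible hg hO.isClosed_compl h1
  obtain ⟨x, hx⟩ := hne
  have : x ∈ Oᶜ := by rw [h2]; trivial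
  exact this hx

lemma IsMinMap.iterate_ne [T1Space K] [Infinite K] (hm : IsMinMap g) {n : ℕ} (hn : 0 < n)
    (x : K) : g^[n] x ≠ x := by
  intro hper
  have hfin : ((fun k => g^[k] x) '' Iio n).Finite := (finite_Iio n).image _
  have : (fun k => g^[k] x) '' Iio n = univ := by
    refine hm _ ⟨x, 0, hn, rfl⟩ hfin.isClosed ?_
    rintro _ ⟨k, hk, rfl⟩
    rcases Nat.lt_or_ge (k + 1) n with h | h
    · exact ⟨k + 1, h, Function.iterate_succ_apply' g k x⟩
    · have hkn : k + 1 = n := le_antisymm hk h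
      refine ⟨0, hn, ?_⟩
      simp only [Function.iterate_zero, id, ← Function.iterate_succ_apply' g k x, Nat.succ_eq_add_one, hkn,
        hper]
  rw [this] at hfin
  exact Set.infinite_univ hfin

lemma IsMinMap.noIsolated [T1Space K] [Infinite K] (hm : IsMinMap g) (hg : Continuous g) :
    NoIsolatedPoints K := by
  intro y hy
  obtain ⟨n, hn, hny⟩ := hm.exists_iterate_mem hg y hy ⟨y, rfl⟩
  exact hm.iterate_ne hn y hny
end

/-! ### Minimal maps on Peano continua with finitely many circles -/

/-- The point `x` has a neighbourhood that admits a continuous injection into the real line. -/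
def FreePt {Y : Type*} [TopologicalSpace Y] (x : Y) : Prop :=
  ∃ U : Set Y, IsOpen U ∧ x ∈ U ∧ ∃ φ : Y → ℝ, ContinuousOn φ U ∧ InjOn φ U

lemma isOpen_freePt {Y : Type*} [TopologicalSpace Y] : IsOpen {x : Y | FreePt x} := by
  rw [isOpen_iff_mem_nhds]
  rintro x ⟨U, hU, hx, φ, h1, h2⟩
  exact Filter.mem_of_superset (hU.mem_nhds hx) fun y hy => ⟨U, hU, hy, φ, h1, h2⟩

lemma exists_continuous_inverse {Y : Type*} [TopologicalSpace Y] [T2Space Y] {α : ℝ → Y}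
    {S : Set ℝ} (hS : IsCompact S) (hα : ContinuousOn α S) (hi : InjOn α S) :
    ∃ φ : Y → ℝ, ContinuousOn φ (α '' S) ∧ ∀ t ∈ S, φ (α t) = t := by
  have hinv : ∀ t ∈ S, Function.invFunOn α S (α t) = t := fun t ht =>
    hi (Function.invFunOn_mem ⟨t, ht, rfl⟩) ht (Function.invFunOn_eq ⟨t, ht, rfl⟩)
  refine ⟨Function.invFunOn α S, ?_, hinv⟩
  rw [continuousOn_iff_isClosed]
  intro T hT
  refine ⟨α '' (S ∩ T), ((hS.inter_right hT).image_of_continuousOn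
    (hα.mono inter_subset_left)).isClosed, ?_⟩
  ext y
  constructor
  · rintro ⟨h, t, ht, rfl⟩
    rw [mem_preimage, hinv t ht] at h
    exact ⟨⟨t, ⟨ht, h⟩, rfl⟩, t, ht, rfl⟩
  · rintro ⟨⟨t, ht, rfl⟩, -⟩
    exact ⟨by rw [mem_preimage, hinv t ht.1]; exact ht.2, t, ht.1, rfl⟩

section
variable {Y : Type*} [MetricSpace Y] [CompactSpace Y] [LocallyConnectedSpace Y] [Nonempty Y]
  {g : Y → Y}

/-- Two points with the same image cannot both be accumulation points of the set where the real
coordinate `φ` of the image exceeds its value there: the coordinates of the images of small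
connected neighbourhoods would both contain an interval, so some nonempty open set would have its
image covered from elsewhere, against irreducibility. -/
lemma fold_aux (hg : Continuous g) (hm : IsMinMap g) {U : Set Y} {φ : Y → ℝ} (hU : IsOpen U)
    (hψ : ContinuousOn (fun x => φ (g x)) U)
    (hinj : ∀ x ∈ U, ∀ y ∈ U, φ (g x) = φ (g y) → g x = g y) {a b : Y} (ha : a ∈ U) (hb : b ∈ U)
    (hab : a ≠ b) (hg2 : g a = g b) (hA : ∃ᶠ z in 𝓝 a, φ (g a) < φ (g z))
    (hB : ∃ᶠ z in 𝓝 b, φ (g a) < φ (g z)) : False := by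
  obtain ⟨O1, O2, hO1, hO2, haO, hbO, hOd⟩ := t2_separation hab
  obtain ⟨N1, hN1, hN1o, hN1p, haN⟩ := exists_conn_nhd (hO1.inter hU) ⟨haO, ha⟩
  obtain ⟨N2, hN2, hN2o, hN2p, hbN⟩ := exists_conn_nhd (hO2.inter hU) ⟨hbO, hb⟩
  obtain ⟨z, hz, hzN⟩ := (hA.and_eventually (hN1o.mem_nhds haN)).exists
  obtain ⟨w, hw, hwN⟩ := (hB.and_eventually (hN2o.mem_nhds hbN)).exists
  have hψ1 := hψ.mono (hN1.trans inter_subset_right)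
  have hψ2 := hψ.mono (hN2.trans inter_subset_right)
  have h1 := hN1p.intermediate_value haN hzN hψ1
  have h2 := hN2p.intermediate_value hbN hwN hψ2
  have hO := hψ1.isOpen_inter_preimage hN1o (isOpen_Ioo (a := φ (g a)) (b := φ (g w)))
  refine hm.irreducible_open hg hO ?_ ?_
  · have hlt : φ (g a) < min (φ (g z)) (φ (g w)) := lt_min hz hw
    obtain ⟨v, hv1, hv2⟩ := exists_between hlt
    obtain ⟨p, hp, hpv⟩ := h1 ⟨hv1.le, (hv2.trans_le (min_le_left _ _)).le⟩
    refine ⟨p, hp, ?_⟩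
    simp only [mem_preimage] at hpv ⊢
    rw [hpv]
    exact ⟨hv1, hv2.trans_le (min_le_right _ _)⟩
  · rintro x ⟨hxN, hx1, hx2⟩
    simp only at hx1 hx2
    obtain ⟨y, hyN, hy⟩ := h2 ⟨by simpa only [← hg2] using hx1.le, hx2.le⟩
    refine ⟨y, fun hyO => disjoint_left.1 hOd (hN1 hyO.1).1 (hN2 hyN).1, ?_⟩
    exact hinj y (hN2 hyN).2 x (hN1 hxN).2 hy

/-- By irreducibility the coordinate of the image is not constant near a point whose image is also
taken elsewhere. -/
lemma const_aux (hg : Continuous g) (hm : IsMinMap g) {U : Set Y} {φ : Y → ℝ} (hU : IsOpen U)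
    (hinj : ∀ x ∈ U, ∀ y ∈ U, φ (g x) = φ (g y) → g x = g y) {a b : Y} (ha : a ∈ U)
    (hab : a ≠ b) (hg2 : g a = g b) :
    (∃ᶠ z in 𝓝 a, φ (g a) < φ (g z)) ∨ (∃ᶠ z in 𝓝 a, φ (g z) < φ (g a)) := by
  by_contra hcon
  push Not at hcon
  have hUa : ∀ᶠ x in 𝓝 a, x ∈ U := hU.mem_nhds ha
  obtain ⟨O, hO, hOo, haO⟩ := mem_nhds_iff.1
    ((hcon.1.and hcon.2).and (hUa.and (eventually_ne_nhds hab)))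
  refine hm.irreducible_open hg hOo ⟨a, haO⟩ fun x hx => ⟨b, fun h => (hO h).2.2 rfl, ?_⟩
  rw [← hg2]
  exact hinj a ha x (hO hx).2.1 (le_antisymm (hO hx).1.2 (hO hx).1.1)

/-- A minimal map is locally injective over free points, so their preimages are free. -/
lemma freePt_of_map (hg : Continuous g) (hm : IsMinMap g) {x : Y} (hx : FreePt (g x)) :
    FreePt x := by
  obtain ⟨V, hV, hxV, φ, hφ, hφi⟩ := hx
  have : LocallyPathConnectedSpace Y := locPath_of_peano Y
  obtain ⟨U, hUV, hU, hUp, hxU⟩ := exists_conn_nhd (hV.preimage hg) hxV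
  have hψ : ContinuousOn (fun x => φ (g x)) U := hφ.comp hg.continuousOn hUV
  have hinj : ∀ x ∈ U, ∀ y ∈ U, φ (g x) = φ (g y) → g x = g y :=
    fun x hx y hy h => hφi (hUV hx) (hUV hy) h
  refine ⟨U, hU, hxU, fun x => φ (g x), hψ, ?_⟩
  intro a ha b hb hab
  by_contra hne
  have hab' : g a = g b := hinj a ha b hb hab
  have hinj' : ∀ x ∈ U, ∀ y ∈ U, -φ (g x) = -φ (g y) → g x = g y :=
    fun x hx y hy h => hinj x hx y hy (neg_injective h)
  have hP : ∀ a ∈ U, ∀ b ∈ U, a ≠ b → g a = g b →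
      (∃ᶠ z in 𝓝 a, φ (g a) < φ (g z)) → (∃ᶠ z in 𝓝 b, φ (g b) < φ (g z)) → False :=
    fun a ha b hb hne h h1 h2 => fold_aux hg hm hU hψ hinj ha hb hne h h1 (by rwa [h])
  have hM : ∀ a ∈ U, ∀ b ∈ U, a ≠ b → g a = g b →
      (∃ᶠ z in 𝓝 a, φ (g z) < φ (g a)) → (∃ᶠ z in 𝓝 b, φ (g z) < φ (g b)) → False :=
    fun a ha b hb hne h h1 h2 => fold_aux (φ := fun x => -φ x) hg hm hU hψ.neg hinj' ha hb hne h
      (by simpa using h1) (by rw [h]; simpa using h2)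
  have hN : ∀ a ∈ U, ∀ b ∈ U, a ≠ b → g a = g b → (∃ᶠ z in 𝓝 a, φ (g a) < φ (g z)) ∨
      (∃ᶠ z in 𝓝 a, φ (g z) < φ (g a)) :=
    fun a ha b hb hne h => const_aux hg hm hU hinj ha hne h
  -- three points cannot have the same image
  have three : ∀ c ∈ U, c ≠ a → c ≠ b → g c = g a → False := by
    intro c hc hca hcb hga
    have e1 := hP a ha b hb hne hab'
    have e2 := hP c hc a ha hca hga
    have e3 := hP c hc b hb hcb (hga.trans hab')
    have f1 := hM a ha b hb hne hab'
    have f2 := hM c hc a ha hca hga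
    have f3 := hM c hc b hb hcb (hga.trans hab')
    have n1 := hN a ha b hb hne hab'
    have n2 := hN b hb a ha (Ne.symm hne) hab'.symm
    have n3 := hN c hc a ha hca hga
    tauto
  obtain ⟨α, hα, hα0, hα1, hαU⟩ := exists_arc_in hU hUp ha hb hne
  have hFc : Continuous fun t => φ (g (α t)) := hψ.comp_continuous hα.1 hαU
  have hmid : ∀ t ∈ Ioo (0:ℝ) 1, φ (g (α t)) ≠ φ (g a) := by
    intro t ht h
    refine three (α t) (hαU t) ?_ ?_ (hinj _ (hαU t) _ ha h)
    · intro h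
      exact ht.1.ne' (hα.2 (Ioo_subset_Icc_self ht) (by simp) (h.trans hα0.symm))
    · intro h
      exact ht.2.ne (hα.2 (Ioo_subset_Icc_self ht) (by simp) (h.trans hα1.symm))
  -- the two ends of the arc lie on different sides, so the value is taken in between
  have hends : (∃ᶠ z in 𝓝 a, φ (g a) < φ (g z)) ∧ (∃ᶠ z in 𝓝 b, φ (g z) < φ (g b)) ∧
      (∀ᶠ z in 𝓝 a, φ (g a) ≤ φ (g z)) ∧ (∀ᶠ z in 𝓝 b, φ (g z) ≤ φ (g b)) ∨
      (∀ᶠ z in 𝓝 a, φ (g z) ≤ φ (g a)) ∧ (∀ᶠ z in 𝓝 b, φ (g b) ≤ φ (g z)) := by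
    have e1 := hP a ha b hb hne hab'
    have f1 := hM a ha b hb hne hab'
    have n1 := hN a ha b hb hne hab'
    have n2 := hN b hb a ha (Ne.symm hne) hab'.symm
    simp only [Filter.Frequently, not_lt] at *
    tauto
  have hta : Filter.Tendsto α (𝓝[>] (0:ℝ)) (𝓝 a) := by
    rw [← hα0]; exact hα.1.continuousAt.mono_left nhdsWithin_le_nhds
  have htb : Filter.Tendsto α (𝓝[<] (1:ℝ)) (𝓝 b) := by
    rw [← hα1]; exact hα.1.continuousAt.mono_left nhdsWithin_le_nhds
  have hI : (0:ℝ) < 1 / 2 := by norm_num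
  have hI' : (1 / 2 : ℝ) < 1 := by norm_num
  rcases hends with ⟨-, -, h1, h2⟩ | ⟨h1, h2⟩
  all_goals
    obtain ⟨s, hs, hs2⟩ := ((hta.eventually h1).and (Ioo_mem_nhdsGT hI)).exists
    obtain ⟨t, ht, ht2⟩ := ((htb.eventually h2).and (Ioo_mem_nhdsLT hI')).exists
    rw [← hab'] at ht
    have hst : s ≤ t := hs2.2.le.trans ht2.1.le
  · obtain ⟨r, hr, hr2⟩ := intermediate_value_Icc' hst hFc.continuousOn ⟨ht, hs⟩
    exact hmid r ⟨hs2.1.trans_le hr.1, hr.2.trans_lt ht2.2⟩ hr2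
  · obtain ⟨r, hr, hr2⟩ := intermediate_value_Icc hst hFc.continuousOn ⟨hs, ht⟩
    exact hmid r ⟨hs2.1.trans_le hr.1, hr.2.trans_lt ht2.2⟩ hr2

end

/-- A circle is a neighbourhood of each of its points that is free in the whole space. -/
lemma IsCircleSet.mem_nhds_of_freePt {Y : Type*} [TopologicalSpace Y] [T2Space Y] {C : Set Y}
    (hC : IsCircleSet C) {x : Y} (hx : x ∈ C) (hf : FreePt x) : C ∈ 𝓝 x := by
  obtain ⟨l, hl, hl0, -, -, hr, -, hiff⟩ := hC.exists_loop hx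
  obtain ⟨U, hU, hxU, φ, hφ, hφi⟩ := hf
  have h1 : l ⁻¹' U ∈ 𝓝 (0:ℝ) := (hU.preimage hl).mem_nhds (by rwa [mem_preimage, hl0])
  obtain ⟨δ', hδ', hδU'⟩ := Metric.mem_nhds_iff.1 h1
  set δ := min (δ' / 2) (1 / 4) with hδdef
  have hδ : 0 < δ := lt_min (by linarith) (by norm_num)
  have hδ4 : δ ≤ 1 / 4 := min_le_right _ _
  have hδU : ∀ t ∈ Icc (-δ) δ, l t ∈ U := by
    intro t ht
    apply hδU'
    rw [Metric.mem_ball, Real.dist_eq, sub_zero]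
    have := min_le_left (δ' / 2) (1 / 4)
    exact lt_of_le_of_lt (abs_le.2 ht) (by linarith)
  have hF : ContinuousOn (fun t => φ (l t)) (Icc (-δ) δ) := hφ.comp hl.continuousOn hδU
  have hFi : InjOn (fun t => φ (l t)) (Icc (-δ) δ) := by
    intro s hs t ht h
    have h2 := hφi (hδU s hs) (hδU t ht) h
    rw [hiff] at h2
    refine (AddCircle.coe_eq_coe_iff_of_mem_Ico (p := (1:ℝ)) (a := -1/2)
      ⟨by linarith [hs.1], by linarith [hs.2]⟩ ⟨by linarith [ht.1], by linarith [ht.2]⟩).1 h2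
  have h0 : (0:ℝ) ∈ Icc (-δ) δ := ⟨by linarith, hδ.le⟩
  have hl' : -δ ∈ Icc (-δ) δ := ⟨le_rfl, by linarith⟩
  have hr' : δ ∈ Icc (-δ) δ := ⟨by linarith, le_rfl⟩
  have hle : -δ ≤ δ := by linarith
  have main : ∀ p q : ℝ, p < φ x → φ x < q →
      (∀ v ∈ Ioo p q, ∃ t ∈ Icc (-δ) δ, φ (l t) = v) → C ∈ 𝓝 x := by
    intro p q hp hq h
    have hO := hφ.isOpen_inter_preimage hU (isOpen_Ioo (a := p) (b := q))
    refine Filter.mem_of_superset (hO.mem_nhds ⟨hxU, hp, hq⟩) ?_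
    rintro z ⟨hzU, hz⟩
    obtain ⟨t, ht, hv⟩ := h _ hz
    rw [← hφi (hδU t ht) hzU hv, ← hr]
    exact ⟨t, rfl⟩
  rcases hF.strictMonoOn_of_injOn_Icc' hle hFi with hmono | hanti
  · refine main (φ (l (-δ))) (φ (l δ)) ?_ ?_ ?_
    · have := hmono hl' h0 (by linarith); simpa [hl0] using this
    · have := hmono h0 hr' hδ; simpa [hl0] using this
    · intro v hv
      exact intermediate_value_Icc hle hF (Ioo_subset_Icc_self hv)
  · refine main (φ (l δ)) (φ (l (-δ))) ?_ ?_ ?_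
    · have := hanti h0 hr' hδ; simpa [hl0] using this
    · have := hanti hl' h0 (by linarith); simpa [hl0] using this
    · intro v hv
      exact intermediate_value_Icc' hle hF (Ioo_subset_Icc_self hv)

/-- Interior points of a circle are free. -/
lemma IsCircleSet.freePt {Y : Type*} [TopologicalSpace Y] [T2Space Y] {C : Set Y}
    (hC : IsCircleSet C) {x : Y} (hx : x ∈ interior C) : FreePt x := by
  obtain ⟨q, hq, hqx⟩ := hC.infinite.exists_notMem_finset {x}
  obtain ⟨l, hl, hl0, hl1, hinj, hr, himg, hiff⟩ := hC.exists_loop hq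
  obtain ⟨t, ht, htx⟩ : x ∈ l '' Icc 0 1 := himg ▸ interior_subset hx
  have ht0 : 0 < t := lt_of_le_of_ne ht.1 (by rintro rfl; exact hqx (by simp [← htx, hl0]))
  have ht1 : t < 1 := lt_of_le_of_ne ht.2 (by rintro rfl; exact hqx (by simp [← htx, hl1]))
  have hsub : Icc (t / 2) ((1 + t) / 2) ⊆ Ico (0:ℝ) 1 := fun s hs =>
    ⟨by linarith [hs.1], by linarith [hs.2]⟩
  obtain ⟨φ, hφ, hφl⟩ := exists_continuous_inverse (isCompact_Icc (a := t / 2) (b := (1 + t) / 2))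
    hl.continuousOn (hinj.mono hsub)
  have hK : IsClosed (l '' (Icc 0 (t / 2) ∪ Icc ((1 + t) / 2) 1)) :=
    ((isCompact_Icc.union isCompact_Icc).image hl).isClosed
  have hU : interior C \ l '' (Icc 0 (t / 2) ∪ Icc ((1 + t) / 2) 1) ⊆
      l '' Icc (t / 2) ((1 + t) / 2) := by
    rintro z ⟨hz, hz2⟩
    obtain ⟨s, hs, rfl⟩ : z ∈ l '' Icc 0 1 := himg ▸ interior_subset hz
    refine ⟨s, ⟨?_, ?_⟩, rfl⟩
    · by_contra hcon
      exact hz2 ⟨s, Or.inl ⟨hs.1, (not_le.1 hcon).le⟩, rfl⟩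
    · by_contra hcon
      exact hz2 ⟨s, Or.inr ⟨(not_le.1 hcon).le, hs.2⟩, rfl⟩
  refine ⟨_, isOpen_interior.sdiff hK, ⟨hx, ?_⟩, φ, hφ.mono hU, ?_⟩
  · rintro ⟨s, hs, hsx⟩
    have h1 : l s = l t := hsx.trans htx.symm
    rcases hs with hs | hs
    · have := hinj ⟨hs.1, by linarith [hs.2]⟩ ⟨ht0.le, ht1⟩ h1
      linarith [hs.2]
    · rcases hs.2.eq_or_lt with rfl | hs1
      · exact hqx (by rw [← hsx, hl1]; simp)
      · have := hinj ⟨by linarith [hs.1], hs1⟩ ⟨ht0.le, ht1⟩ h1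
        linarith [hs.1]
  · intro y hy z hz h
    obtain ⟨s, hs, rfl⟩ := hU hy
    obtain ⟨r, hr, rfl⟩ := hU hz
    rw [hφl s hs, hφl r hr] at h
    rw [h]

/-- If all points of a subarc of an arc in `Y` separate its end points, cutting `Y` into
two pieces only, then `Y` has a free point. -/
lemma freePt_of_separating {Y : Type*} [MetricSpace Y] [LocallyPathConnectedSpace Y]
    {α : ℝ → Y} (hα : IsArcFn α) {u v : ℝ} (hu : 0 < u) (huv : u < v) (hv : v < 1)
    (hsep : ∀ t ∈ Icc u v, α 1 ∉ connectedComponentIn {α t}ᶜ (α 0))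
    (hcov : ∀ t ∈ Icc u v, ∀ z : Y, z ≠ α t → z ∈ connectedComponentIn {α t}ᶜ (α 0) ∨
      z ∈ connectedComponentIn {α t}ᶜ (α 1)) : ∃ x : Y, FreePt x := by
  set A : ℝ → Set Y := fun t => connectedComponentIn {α t}ᶜ (α 0) with hA
  set B : ℝ → Set Y := fun t => connectedComponentIn {α t}ᶜ (α 1) with hB
  have hAB : ∀ t ∈ Icc u v, Disjoint (A t) (B t) := by
    intro t ht
    rw [disjoint_left]
    intro z hz hz'
    refine hsep t ht ?_
    show α 1 ∈ A t
    have : A t = B t := (connectedComponentIn_eq hz).trans (connectedComponentIn_eq hz').symm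
    rw [this]
    refine mem_connectedComponentIn fun h => ?_
    have := hα.2 (by simp) ⟨by linarith [ht.1], by linarith [ht.2]⟩ h
    linarith [ht.2]
  have hopen : ∀ (c z : Y), IsOpen {r : ℝ | c ≠ α r ∧ z ∈ connectedComponentIn {α r}ᶜ c} := by
    intro c z
    rw [isOpen_iff_mem_nhds]
    rintro r ⟨hcr, hz⟩
    have hc : c ∈ connectedComponentIn {α r}ᶜ c := mem_connectedComponentIn hcr
    obtain ⟨γ, hγ⟩ := (((isOpen_compl_singleton.connectedComponentIn (x := c)).isConnected_iff_isPathConnected).1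
      ⟨⟨c, hc⟩, isPreconnected_connectedComponentIn⟩).joinedIn c hc z hz
    have hcl : IsOpen (range γ)ᶜ := (isCompact_range γ.continuous).isClosed.isOpen_compl
    have hmem : α r ∈ (range γ)ᶜ := by
      rintro ⟨s, hs⟩
      exact connectedComponentIn_subset _ _ (hγ s) hs
    refine Filter.mem_of_superset ((hcl.preimage hα.1).mem_nhds hmem) ?_
    intro r' hr'
    have hsub : range γ ⊆ {α r'}ᶜ := fun w hw h => hr' (by rw [mem_singleton_iff] at h; rwa [← h])
    have hcγ : c ∈ range γ := ⟨0, γ.source⟩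
    exact ⟨hsub hcγ, (isPreconnected_range γ.continuous).subset_connectedComponentIn hcγ hsub
      ⟨1, γ.target⟩⟩
  have h0 : ∀ t ∈ Icc u v, α 0 ≠ α t := fun t ht h => by
    have := hα.2 (by simp) ⟨by linarith [ht.1], by linarith [ht.2]⟩ h
    linarith [ht.1]
  have h1 : ∀ t ∈ Icc u v, α 1 ≠ α t := fun t ht h => by
    have := hα.2 (by simp) ⟨by linarith [ht.1], by linarith [ht.2]⟩ h
    linarith [ht.2]
  have hsub : B u ∩ A v ⊆ α '' Icc u v := by
    rintro z ⟨hzu, hzv⟩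
    by_contra hz
    have hz' : ∀ t ∈ Icc u v, z ≠ α t := fun t ht h => hz ⟨t, ht, h.symm⟩
    obtain ⟨r, hr, ⟨-, hr1⟩, -, hr2⟩ := isPreconnected_Icc (a := u) (b := v) _ _
      (hopen (α 0) z) (hopen (α 1) z)
      (fun t ht => (hcov t ht z (hz' t ht)).imp (fun h => ⟨h0 t ht, h⟩) (fun h => ⟨h1 t ht, h⟩))
      ⟨v, ⟨huv.le, le_rfl⟩, h0 v ⟨huv.le, le_rfl⟩, hzv⟩
      ⟨u, ⟨le_rfl, huv.le⟩, h1 u ⟨le_rfl, huv.le⟩, hzu⟩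
    exact disjoint_left.1 (hAB r hr) hr1 hr2
  obtain ⟨φ, hφ, hφα⟩ := exists_continuous_inverse (isCompact_Icc (a := u) (b := v))
    hα.1.continuousOn (hα.2.mono (Icc_subset_Icc hu.le hv.le))
  refine ⟨α ((u + v) / 2), B u ∩ A v, isOpen_compl_singleton.connectedComponentIn.inter
    isOpen_compl_singleton.connectedComponentIn, ⟨?_, ?_⟩, φ, hφ.mono hsub, ?_⟩
  · have h : α '' Icc ((u + v) / 2) 1 ⊆ B u :=
      (isPreconnected_Icc.image α hα.1.continuousOn).subset_connectedComponentIn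
        ⟨1, ⟨by linarith, le_rfl⟩, rfl⟩ (by
          rintro _ ⟨s, hs, rfl⟩ h
          have := hα.2 ⟨by linarith [hs.1], hs.2⟩ ⟨hu.le, by linarith⟩ h
          linarith [hs.1])
    exact h ⟨_, ⟨le_rfl, by linarith⟩, rfl⟩
  · have h : α '' Icc 0 ((u + v) / 2) ⊆ A v :=
      (isPreconnected_Icc.image α hα.1.continuousOn).subset_connectedComponentIn
        ⟨0, ⟨le_rfl, by linarith⟩, rfl⟩ (by
          rintro _ ⟨s, hs, rfl⟩ h
          have := hα.2 ⟨hs.1, by linarith [hs.2]⟩ ⟨by linarith, hv.le⟩ h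
          linarith [hs.2])
    exact h ⟨_, ⟨by linarith, le_rfl⟩, rfl⟩
  · intro y hy z hz h
    obtain ⟨s, hs, rfl⟩ := hsub hy
    obtain ⟨r, hr, rfl⟩ := hsub hz
    rw [hφα s hs, hφα r hr] at h
    rw [h]

section
variable {Y : Type*} [MetricSpace Y] [CompactSpace Y] [LocallyConnectedSpace Y]
  [PreconnectedSpace Y] [Nontrivial Y] {g : Y → Y}

/-- If the space admits a minimal map, every part into which a point separates it carries a circle:
an iterate of the minimal map moves the point into that part, and iterates have no fixed points. -/
lemma exists_circle_part (hg : Continuous g) (hm : IsMinMap g) {c z : Y} (hz : z ≠ c) :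
    ∃ C, IsCircleSet C ∧ C ⊆ insert c (connectedComponentIn {c}ᶜ z) := by
  have : Infinite Y := by
    have := (isPreconnected_univ (α := Y)).infinite_of_nontrivial nontrivial_univ
    exact infinite_univ_iff.1 this
  obtain ⟨n, hn, hnz⟩ := hm.exists_iterate_mem hg c
    (isOpen_compl_singleton.connectedComponentIn (x := z) (F := {c}ᶜ))
    ⟨z, mem_connectedComponentIn hz⟩
  obtain ⟨C, hC, hCs⟩ := exists_circle_of_fixedPointFree (hg.iterate n)
    (fun x => hm.iterate_ne hn x) c
  rw [← connectedComponentIn_eq hnz] at hCs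
  exact ⟨C, hC, hCs⟩

lemma exists_freePt (hfin : {C : Set Y | IsCircleSet C}.Finite) (hg : Continuous g)
    (hm : IsMinMap g) : ∃ x : Y, FreePt x := by
  have : LocallyPathConnectedSpace Y := locPath_of_peano Y
  by_cases hint : ∃ C : Set Y, IsCircleSet C ∧ (interior C).Nonempty
  · obtain ⟨C, hC, x, hx⟩ := hint
    exact ⟨x, hC.freePt hx⟩
  push Not at hint
  set T := ⋃₀ {C : Set Y | IsCircleSet C} with hT
  have hTc : IsClosed T := by
    rw [hT, sUnion_eq_biUnion]
    exact hfin.isClosed_biUnion fun C hC => hC.isCompact.isClosed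
  have hTd : Dense Tᶜ := by
    rw [hT, compl_sUnion, sInter_image]
    refine dense_biInter_of_isOpen (fun C hC => hC.isCompact.isClosed.isOpen_compl)
      hfin.countable fun C hC => ?_
    rw [← interior_eq_empty_iff_dense_compl]
    exact hint C hC
  obtain ⟨a, haT⟩ := hTd.nonempty
  set Q := connectedComponentIn Tᶜ a with hQ
  have hQo : IsOpen Q := hTc.isOpen_compl.connectedComponentIn
  have haQ : a ∈ Q := mem_connectedComponentIn haT
  have hQT : Q ⊆ Tᶜ := connectedComponentIn_subset _ _
  obtain ⟨b, hbQ, hba⟩ : ∃ b ∈ Q, b ≠ a := by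
    by_contra hcon
    push Not at hcon
    have : Q = {a} := Subset.antisymm hcon (singleton_subset_iff.2 haQ)
    have hclopen : IsClopen ({a} : Set Y) := ⟨isClosed_singleton, this ▸ hQo⟩
    have huniv := hclopen.eq_univ ⟨a, rfl⟩
    obtain ⟨b, hb⟩ := exists_ne a
    have : b ∈ ({a} : Set Y) := by rw [huniv]; trivial
    exact hb this
  obtain ⟨α, hα, hα0, hα1, hαQ⟩ := exists_arc_in hQo isPreconnected_connectedComponentIn haQ hbQ
    hba.symm
  have hαT : ∀ t C, IsCircleSet C → α t ∉ C := fun t C hC h => hQT (hαQ t) ⟨C, hC, h⟩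
  have hsep : ∀ t ∈ Ioo (0:ℝ) 1, α 1 ∉ connectedComponentIn {α t}ᶜ (α 0) := by
    intro t ht hx
    have h0t : α 0 ∈ ({α t}ᶜ : Set Y) := by
      intro hcon
      exact ht.1.ne (hα.2 (left_mem_Icc.2 zero_le_one) (Ioo_subset_Icc_self ht) hcon)
    obtain ⟨β, hβ, hβ0, hβ1, hβV⟩ := exists_arc_in
      (isOpen_compl_singleton.connectedComponentIn (x := α 0) (F := {α t}ᶜ))
      isPreconnected_connectedComponentIn (mem_connectedComponentIn h0t) hx
      (by rw [hα0, hα1]; exact hba.symm)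
    have h01 : (0:ℝ) ∈ Icc (0:ℝ) 1 := by simp
    have h11 : (1:ℝ) ∈ Icc (0:ℝ) 1 := by simp
    by_cases hall : ∀ s ∈ Icc (0:ℝ) 1, β s ∈ α '' Icc 0 1
    · -- an arc inside the arc joining its ends passes through every point
      obtain ⟨φ, hφ, hφα⟩ := exists_continuous_inverse (isCompact_Icc (a := (0:ℝ)) (b := 1))
        hα.1.continuousOn hα.2
      obtain ⟨s, hs, hst⟩ := intermediate_value_Icc zero_le_one
        (hφ.comp hβ.1.continuousOn hall)
        (show t ∈ Icc (φ (β 0)) (φ (β 1)) by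
          rw [hβ0, hβ1, hφα 0 h01, hφα 1 h11]; exact Ioo_subset_Icc_self ht)
      obtain ⟨r, hr, hrs⟩ := hall s hs
      simp only [Function.comp] at hst
      rw [← hrs, hφα r hr] at hst
      rw [hst] at hrs
      exact connectedComponentIn_subset _ _ (hβV s) hrs.symm
    · push Not at hall
      obtain ⟨s, hs, hsn⟩ := hall
      obtain ⟨C, hC, -, w, hwC, r, -, rfl⟩ := theta' hα hβ ⟨0, h01, hβ0.symm⟩ ⟨1, h11, hβ1.symm⟩ hs hsn
      exact hαT _ C hC hwC
  -- the parameters whose point cuts off a third piece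
  set bad : Set ℝ := {t | t ∈ Ioo (0:ℝ) 1 ∧ ∃ z, z ≠ α t ∧
    z ∉ connectedComponentIn {α t}ᶜ (α 0) ∧ z ∉ connectedComponentIn {α t}ᶜ (α 1)} with hbad
  have hD : ∀ t, ∃ C, t ∈ bad → IsCircleSet C ∧ IsPreconnected C ∧ ∃ D : Set Y, C ⊆ D ∧
      IsPreconnected (insert (α t) D) ∧ Disjoint D (connectedComponentIn {α t}ᶜ (α 0)) ∧
      Disjoint D (connectedComponentIn {α t}ᶜ (α 1)) := by
    intro t
    by_cases ht : t ∈ bad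
    swap
    · exact ⟨∅, fun h => absurd h ht⟩
    obtain ⟨-, z, hz, hz0, hz1⟩ := ht
    obtain ⟨C, hC, hCs⟩ := exists_circle_part hg hm hz
    refine ⟨C, fun _ => ⟨hC, hC.isConnected.isPreconnected, connectedComponentIn {α t}ᶜ z, ?_, ?_,
      ?_, ?_⟩⟩
    · intro w hw
      rcases hCs hw with rfl | h
      · exact absurd hw (hαT t C hC)
      · exact h
    · refine isPreconnected_connectedComponentIn.subset_closure (subset_insert _ _)
        (insert_subset (mem_closure_comp_compl hz) subset_closure)
    · rw [disjoint_left]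
      intro w hw hw'
      refine hz0 ?_
      rw [connectedComponentIn_eq hw', ← connectedComponentIn_eq hw]
      exact mem_connectedComponentIn hz
    · rw [disjoint_left]
      intro w hw hw'
      refine hz1 ?_
      rw [connectedComponentIn_eq hw', ← connectedComponentIn_eq hw]
      exact mem_connectedComponentIn hz
  choose Cf hCf using hD
  have hbadfin : bad.Finite := by
    refine Set.Finite.of_injOn (f := Cf) (t := {C : Set Y | IsCircleSet C})
      (fun t ht => (hCf t ht).1) ?_ hfin
    -- for `t < s` the pieces cut off at `t` lie on the side of `α 0` of `α s`
    have key : ∀ t ∈ bad, ∀ s ∈ bad, t < s → Cf t = Cf s → False := by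
      intro t ht s hs hts h
      obtain ⟨hC, -, D, hCD, hDp, hD0, hD1⟩ := hCf t ht
      obtain ⟨-, -, E, hCE, -, hE0, -⟩ := hCf s hs
      obtain ⟨w, hw⟩ := hC.infinite.nonempty
      refine disjoint_left.1 hE0 (hCE (h ▸ hw)) ?_
      have hB : α '' Icc s 1 ⊆ connectedComponentIn {α t}ᶜ (α 1) :=
        (isPreconnected_Icc.image α hα.1.continuousOn).subset_connectedComponentIn
          ⟨1, ⟨hs.1.2.le, le_rfl⟩, rfl⟩ (by
            rintro _ ⟨r, hr, rfl⟩ h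
            have := hα.2 ⟨by linarith [hr.1, hs.1.1], hr.2⟩ (Ioo_subset_Icc_self ht.1) h
            linarith [hr.1])
      have hsD : α s ∉ insert (α t) D := by
        rintro (h | h)
        · exact hts.ne (hα.2 (Ioo_subset_Icc_self ht.1) (Ioo_subset_Icc_self hs.1) h.symm)
        · exact disjoint_left.1 hD1 h (hB ⟨s, ⟨le_rfl, hs.1.2.le⟩, rfl⟩)
      have hP : IsPreconnected (α '' Icc 0 t ∪ insert (α t) D) :=
        IsPreconnected.union (α t) ⟨t, ⟨ht.1.1.le, le_rfl⟩, rfl⟩ (Or.inl rfl)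
          (isPreconnected_Icc.image α hα.1.continuousOn) hDp
      refine hP.subset_connectedComponentIn (Or.inl ⟨0, ⟨le_rfl, ht.1.1.le⟩, rfl⟩) ?_
        (Or.inr (Or.inr (hCD hw)))
      rintro y (⟨r, hr, rfl⟩ | hy) h
      · have := hα.2 ⟨hr.1, by linarith [hr.2, ht.1.2]⟩ (Ioo_subset_Icc_self hs.1) h
        linarith [hr.2]
      · rw [mem_singleton_iff] at h; rw [h] at hy; exact hsD hy
    intro t ht s hs h
    rcases lt_trichotomy t s with hts | hts | hts
    · exact (key t ht s hs hts h).elim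
    · exact hts
    · exact (key s hs t ht hts h.symm).elim
  obtain ⟨p, hp, hpb⟩ := (Ioo_infinite (zero_lt_one' ℝ)).exists_notMem_finset hbadfin.toFinset
  rw [Finite.mem_toFinset] at hpb
  have hopn : IsOpen (Ioo (0:ℝ) 1 \ bad) := isOpen_Ioo.sdiff hbadfin.isClosed
  obtain ⟨ε, hε, hεs⟩ := Metric.isOpen_iff.1 hopn p ⟨hp, hpb⟩
  have hIcc : Icc (p - ε / 2) (p + ε / 2) ⊆ Ioo (0:ℝ) 1 \ bad := by
    intro r hr
    refine hεs ?_
    rw [Metric.mem_ball, Real.dist_eq, abs_lt]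
    constructor <;> linarith [hr.1, hr.2]
  have hl := hIcc (left_mem_Icc.2 (by linarith))
  have hr := hIcc (right_mem_Icc.2 (by linarith))
  refine freePt_of_separating hα hl.1.1 (by linarith) hr.1.2
    (fun t ht => hsep t (hIcc ht).1) fun t ht z hz => ?_
  by_contra hcon
  push Not at hcon
  exact (hIcc ht).2 ⟨(hIcc ht).1, z, hz, hcon.1, hcon.2⟩

/-- The only nondegenerate Peano continua with finitely many circles that admit a minimal map
are the circles. -/
theorem circle_of_minimal (hfin : {C : Set Y | IsCircleSet C}.Finite) (hg : Continuous g)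
    (hm : IsMinMap g) : IsCircleSet (univ : Set Y) := by
  obtain ⟨x₀, hx₀⟩ := exists_freePt hfin hg hm
  have hall : ∀ x : Y, FreePt x := by
    intro x
    by_contra hx
    have h := hm {x : Y | FreePt x}ᶜ ⟨x, hx⟩ isOpen_freePt.isClosed_compl
      (fun y hy hgy => hy (freePt_of_map hg hm hgy))
    have : x₀ ∈ {x : Y | FreePt x}ᶜ := by rw [h]; trivial
    exact this hx₀
  obtain ⟨z, hz⟩ := exists_ne x₀
  obtain ⟨C, hC, -⟩ := exists_circle_part hg hm hz
  have hCo : IsOpen C := isOpen_iff_mem_nhds.2 fun x hx => hC.mem_nhds_of_freePt hx (hall x)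
  have : C = univ := IsClopen.eq_univ ⟨hC.isCompact.isClosed, hCo⟩ hC.infinite.nonempty
  rwa [← this]
end

/-! ### Minimal sets of local dendrites -/

lemma finUnionDisjCircles_of_finite {Y : Type*} [TopologicalSpace Y] {M : Set Y}
    {𝒞 : Set (Set Y)} (hfin : 𝒞.Finite) (hne : 𝒞.Nonempty) (hC : ∀ C ∈ 𝒞, IsCircleSet C)
    (hd : ∀ C ∈ 𝒞, ∀ D ∈ 𝒞, C ≠ D → Disjoint C D) (hM : ⋃₀ 𝒞 = M) : FinUnionDisjCircles M := by
  have := hfin.fintype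
  let e := Fintype.equivFin 𝒞
  refine ⟨Fintype.card 𝒞, fun i => (e.symm i).1, ?_, fun i => hC _ (e.symm i).2, ?_, ?_⟩
  · have : Nonempty 𝒞 := hne.to_subtype
    exact Fintype.card_pos
  · intro i j hij
    exact hd _ (e.symm i).2 _ (e.symm j).2 fun h => hij (e.symm.injective (Subtype.ext h))
  · rw [← hM, sUnion_eq_iUnion]
    exact (e.symm.surjective.iUnion_comp (fun C : 𝒞 => C.1)).symm

/-- A space has only finitely many circles if an injection maps them to members of a finite
family. -/
lemma finite_circles_of_injective {Y Z : Type*} [TopologicalSpace Y] [T2Space Y]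
    [TopologicalSpace Z] [T2Space Z] {f : Y → Z} (hi : Function.Injective f)
    {S : Set (Set Z)} (hfin : S.Finite)
    (hS : ∀ C : Set Y, IsCircleSet C → f '' C ∈ S) : {C : Set Y | IsCircleSet C}.Finite :=
  Set.Finite.of_injOn (f := fun C : Set Y => f '' C) (fun C hC => hS C hC)
    (fun _ _ _ _ h => hi.image_injective h) hfin

section
variable {Y : Type*} [MetricSpace Y] [CompactSpace Y] [LocallyConnectedSpace Y]

/-- An open component of a minimal set is a circle. -/
lemma isCircle_of_isOpen_component (hfin : {C : Set Y | IsCircleSet C}.Finite) {M : Set Y}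
    (hM : IsClosed M) [Infinite M] {f : M → M} (hf : Continuous f) (hm : IsMinMap f) (x : M)
    (hopen : IsOpen (connectedComponent x)) :
    IsCircleSet ((Subtype.val : M → Y) '' connectedComponent x) := by
  classical
  have : CompactSpace M := isCompact_iff_compactSpace.1 hM.isCompact
  set K := connectedComponent x with hK
  have hex := hm.exists_iterate_mem hf x hopen ⟨x, mem_connectedComponent⟩
  have hspec := Nat.find_spec hex
  have hmin := fun i => Nat.find_min hex (m := i)
  set n := Nat.find hex with hn
  have hsub : ∀ i (y z : M), y ∈ K → f^[i] y ∈ K → z ∈ K → f^[i] z ∈ K := by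
    intro i y z hy hfy hz
    have h1 : f^[i] '' K ⊆ connectedComponent (f^[i] y) :=
      (isPreconnected_connectedComponent.image _
        (hf.iterate i).continuousOn).subset_connectedComponent ⟨y, hy, rfl⟩
    rw [← connectedComponent_eq hfy] at h1
    exact h1 ⟨z, hz, rfl⟩
  have hxK : x ∈ K := mem_connectedComponent
  have hnK : ∀ z ∈ K, f^[n] z ∈ K := fun z hz => hsub n x z hxK hspec.2 hz
  have hdis : ∀ i, 0 < i → i < n → ∀ z ∈ K, f^[i] z ∉ K := fun i h0 hi z hz hzK =>
    hmin i hi ⟨h0, hsub i z x hz hzK hxK⟩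
  have hKne : K.Nontrivial := by
    by_contra hcon
    rw [not_nontrivial_iff] at hcon
    have : K = {x} := hcon.eq_singleton_of_mem hxK
    exact hm.noIsolated hf x (this ▸ hopen)
  let g : K → K := fun z => ⟨f^[n] z.1, hnK z.1 z.2⟩
  have hg : Continuous g := ((hf.iterate n).comp continuous_subtype_val).subtype_mk _
  have hgm : IsMinMap g := by
    intro N hNne hNc hNi
    have hNcl : IsCompact ((Subtype.val : K → M) '' N) := by
      have : CompactSpace K := isCompact_iff_compactSpace.1
        (isClosed_connectedComponent (x := x)).isCompact
      exact hNc.isCompact.image continuous_subtype_val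
    have huniv : (⋃ i ∈ Iio n, f^[i] '' (Subtype.val '' N)) = univ := by
      refine hm _ ?_ ?_ ?_
      · obtain ⟨z, hz⟩ := hNne
        exact ⟨z.1, mem_biUnion (show 0 ∈ Iio n from hspec.1) ⟨z.1, ⟨z, hz, rfl⟩, rfl⟩⟩
      · exact (finite_Iio n).isClosed_biUnion fun i _ =>
          (hNcl.image (hf.iterate i)).isClosed
      · intro y hy
        simp only [mem_iUnion, exists_prop] at hy
        obtain ⟨i, hi, _, ⟨z, hz, rfl⟩, rfl⟩ := hy
        rcases Nat.lt_or_ge (i + 1) n with h | h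
        · exact mem_biUnion (show i + 1 ∈ Iio n from h) ⟨z.1, ⟨z, hz, rfl⟩,
            Function.iterate_succ_apply' f i z.1⟩
        · have hin : i + 1 = n := le_antisymm hi h
          refine mem_biUnion (show 0 ∈ Iio n from hspec.1) ⟨f (f^[i] z.1), ⟨g z, hNi z hz, ?_⟩, rfl⟩
          simp only [g, ← hin, Function.iterate_succ_apply']
    rw [eq_univ_iff_forall]
    intro w
    have hw : w.1 ∈ ⋃ i ∈ Iio n, f^[i] '' (Subtype.val '' N) := by rw [huniv]; trivial
    simp only [mem_iUnion, exists_prop] at hw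
    obtain ⟨i, hi, _, ⟨z, hz, rfl⟩, hzw⟩ := hw
    rcases Nat.eq_zero_or_pos i with rfl | hpos
    · have : z = w := Subtype.ext hzw
      rwa [← this]
    · exact absurd (hzw ▸ w.2) (hdis i hpos hi z.1 z.2)
  have hemb : IsEmbedding (fun z : K => (z.1.1 : Y)) :=
    IsEmbedding.subtypeVal.comp IsEmbedding.subtypeVal
  have hrange : range (fun z : K => (z.1.1 : Y)) = Subtype.val '' K := by
    ext y; simp
  have hKc : IsClosed ((Subtype.val : M → Y) '' K) :=
    (isClosed_connectedComponent.isCompact.image continuous_subtype_val).isClosed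
  have hKp : IsPreconnected ((Subtype.val : M → Y) '' K) :=
    isPreconnected_connectedComponent.image _ continuous_subtype_val.continuousOn
  have hlc : LocallyConnectedSpace K := by
    have h1 := locConn_sub hfin hKc hKp
    rw [← hrange] at h1
    exact hemb.toHomeomorph.isOpenEmbedding.locallyConnectedSpace
  have : CompactSpace K := isCompact_iff_compactSpace.1
    (isClosed_connectedComponent (x := x)).isCompact
  have : PreconnectedSpace K := isPreconnected_iff_preconnectedSpace.1
    isPreconnected_connectedComponent
  have : Nontrivial K := nontrivial_coe_sort.2 hKne
  have hfinK : {C : Set K | IsCircleSet C}.Finite :=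
    finite_circles_of_injective hemb.injective hfin
      fun C hC => hC.image hemb.continuous.continuousOn hemb.injective.injOn
  have := (circle_of_minimal hfinK hg hgm).image hemb.continuous.continuousOn hemb.injective.injOn
  rwa [image_univ, hrange] at this

/-- Infinite minimal sets of a local dendrite: if the degenerate components are not dense, some
component has nonempty interior since only countably many components are nondegenerate; its
images are then finitely many open components. -/
theorem cantoroid_or_circles (hfin : {C : Set Y | IsCircleSet C}.Finite) {M : Set Y}
    (hM : IsClosed M) (hinf : M.Infinite) {f : M → M} (hf : Continuous f) (hm : IsMinMap f) :
    IsCantoroid M ∨ FinUnionDisjCircles M := by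
  have : CompactSpace M := isCompact_iff_compactSpace.1 hM.isCompact
  have : Infinite M := hinf.to_subtype
  by_cases hd : Dense {x : M | connectedComponent x = {x}}
  · exact Or.inl ⟨hinf.nonempty, hM.isCompact, hm.noIsolated hf, hd⟩
  right
  set U : Set M := (closure {x : M | connectedComponent x = {x}})ᶜ with hU
  have hUo : IsOpen U := isClosed_closure.isOpen_compl
  have hUne : U.Nonempty := by
    rw [hU, nonempty_compl, ne_eq, ← dense_iff_closure_eq]; exact hd
  have hcount : ((connectedComponent : M → Set M) '' U).Countable := by
    refine MapsTo.countable_of_injOn (f := fun S : Set M => (Subtype.val : M → Y) '' S) ?_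
      (fun _ _ _ _ h => Subtype.val_injective.image_injective h) (countable_comps hfin hM)
    rintro _ ⟨x, hx, rfl⟩
    refine ⟨?_, x.1, x.2, ?_⟩
    · refine Set.Nontrivial.image ?_ Subtype.val_injective
      by_contra hcon
      rw [not_nontrivial_iff] at hcon
      exact hx (subset_closure (hcon.eq_singleton_of_mem mem_connectedComponent))
    · exact (connectedComponentIn_eq_image x.2).symm
  have hdense := dense_sUnion_interior_of_closed (S := insert Uᶜ (connectedComponent '' U))
    (by
      rintro _ (rfl | ⟨x, -, rfl⟩)
      · exact hUo.isClosed_compl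
      · exact isClosed_connectedComponent) (hcount.insert _) (by
      rw [eq_univ_iff_forall]
      intro x
      by_cases hx : x ∈ U
      · exact ⟨_, Or.inr ⟨x, hx, rfl⟩, mem_connectedComponent⟩
      · exact ⟨_, Or.inl rfl, hx⟩)
  obtain ⟨p, hpU, hp⟩ := hdense.inter_open_nonempty U hUo hUne
  simp only [mem_iUnion, exists_prop] at hp
  obtain ⟨S, hS, hpS⟩ := hp
  rcases hS with rfl | ⟨x, hx, rfl⟩
  · exact absurd hpU (interior_subset hpS)
  set K := connectedComponent x with hK
  obtain ⟨n, hn, hnx⟩ := hm.exists_iterate_mem hf x isOpen_interior ⟨p, hpS⟩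
  have hcomp : ∀ (i : ℕ), ∀ z ∈ K, f^[i] z ∈ connectedComponent (f^[i] x) := fun i z hz =>
    (isPreconnected_connectedComponent.image _ (hf.iterate i).continuousOn).subset_connectedComponent
      ⟨x, mem_connectedComponent, rfl⟩ ⟨z, hz, rfl⟩
  have hnK : ∀ z ∈ K, f^[n] z ∈ K := by
    intro z hz
    have := hcomp n z hz
    rwa [← connectedComponent_eq (interior_subset hnx)] at this
  have huniv : (⋃ i ∈ Iio n, f^[i] '' K) = univ := by
    refine hm _ ?_ ?_ ?_
    · exact ⟨x, mem_biUnion (show 0 ∈ Iio n from hn) ⟨x, mem_connectedComponent, rfl⟩⟩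
    · exact (finite_Iio n).isClosed_biUnion fun i _ =>
        (isClosed_connectedComponent.isCompact.image (hf.iterate i)).isClosed
    · intro y hy
      simp only [mem_iUnion, exists_prop] at hy
      obtain ⟨i, hi, z, hz, rfl⟩ := hy
      rcases Nat.lt_or_ge (i + 1) n with h | h
      · exact mem_biUnion (show i + 1 ∈ Iio n from h) ⟨z, hz, Function.iterate_succ_apply' f i z⟩
      · have hin : i + 1 = n := le_antisymm hi h
        refine mem_biUnion (show 0 ∈ Iio n from hn) ⟨f (f^[i] z), ?_, rfl⟩
        have h3 := Function.iterate_succ_apply' f i z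
        rw [Nat.succ_eq_add_one, hin] at h3
        rw [← h3]
        exact hnK z hz
  set 𝒮 : Set (Set M) := range (connectedComponent : M → Set M) with h𝒮
  have h𝒮fin : 𝒮.Finite := by
    refine ((finite_Iio n).image fun i => connectedComponent (f^[i] x)).subset ?_
    rintro _ ⟨y, rfl⟩
    have hy : y ∈ ⋃ i ∈ Iio n, f^[i] '' K := by rw [huniv]; trivial
    simp only [mem_iUnion, exists_prop] at hy
    obtain ⟨i, hi, z, hz, rfl⟩ := hy
    exact ⟨i, hi, connectedComponent_eq (hcomp i z hz)⟩
  have hopen : ∀ y : M, IsOpen (connectedComponent y) := by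
    intro y
    have : connectedComponent y = (⋃ S ∈ 𝒮 \ {connectedComponent y}, S)ᶜ := by
      ext z
      simp only [mem_compl_iff, mem_iUnion, not_exists]
      constructor
      · rintro hz S ⟨⟨w, rfl⟩, hne⟩ hzS
        exact hne ((connectedComponent_eq hzS).trans (connectedComponent_eq hz).symm)
      · intro h
        by_contra hz
        refine h (connectedComponent z) ⟨⟨z, rfl⟩, fun heq => hz ?_⟩ mem_connectedComponent
        rw [mem_singleton_iff] at heq
        rw [← heq]; exact mem_connectedComponent
    rw [this]
    refine (Set.Finite.isClosed_biUnion (h𝒮fin.subset sdiff_subset) ?_).isOpen_compl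
    rintro _ ⟨⟨w, rfl⟩, -⟩
    exact isClosed_connectedComponent
  refine finUnionDisjCircles_of_finite (𝒞 := (fun S : Set M => (Subtype.val : M → Y) '' S) '' 𝒮)
    (h𝒮fin.image _) ⟨_, _, ⟨x, rfl⟩, rfl⟩ ?_ ?_ ?_
  · rintro _ ⟨_, ⟨y, rfl⟩, rfl⟩
    exact isCircle_of_isOpen_component hfin hM hf hm y (hopen y)
  · rintro _ ⟨_, ⟨y, rfl⟩, rfl⟩ _ ⟨_, ⟨z, rfl⟩, rfl⟩ hne
    refine (disjoint_image_iff Subtype.val_injective).2 ?_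
    rw [disjoint_left]
    intro w hw hw'
    exact hne (by rw [connectedComponent_eq hw, connectedComponent_eq hw'])
  · ext y
    constructor
    · rintro ⟨_, ⟨S, -, rfl⟩, w, -, rfl⟩; exact w.2
    · intro hy
      exact ⟨_, ⟨_, ⟨⟨y, hy⟩, rfl⟩, rfl⟩, ⟨y, hy⟩, mem_connectedComponent, rfl⟩
end

/-! ### Minimal maps of cantoroids -/

section Cantoroid
variable {M : Type*} [MetricSpace M] [CompactSpace M]

lemma exists_ne_mem_of_noIsolated (hni : NoIsolatedPoints M) {U : Set M} (hU : IsOpen U)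
    {F : Set M} (hF : F.Finite) (hne : U.Nonempty) : ∃ x ∈ U, x ∉ F := by
  have hinf : U.Infinite := by
    intro hfin
    obtain ⟨x, hx⟩ := hne
    have h1 : IsOpen (U \ (U \ {x})) :=
      hU.sdiff (hfin.subset sdiff_subset).isClosed
    have h2 : U \ (U \ {x}) = {x} := by
      ext y; constructor
      · rintro ⟨hy, hy'⟩
        by_contra h
        exact hy' ⟨hy, h⟩
      · rintro rfl
        exact ⟨hx, fun h => h.2 rfl⟩
    rw [h2] at h1
    exact hni x h1
  obtain ⟨x, hx, hx'⟩ := (hinf.sdiff hF).nonempty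
  exact ⟨x, hx, hx'⟩

/-- Every nonempty open set `U` of a cantoroid contains a point `p` which, for each finite set `F`
not containing `p`, has a clopen neighbourhood inside `U` that misses `F`. -/
lemma exists_clopen_avoid (hd : Dense {x : M | connectedComponent x = {x}}) {U : Set M} (hU : IsOpen U)
    (hne : U.Nonempty) : ∃ p ∈ U, ∀ F : Set M, F.Finite → p ∉ F →
      ∃ D, IsClopen D ∧ p ∈ D ∧ D ⊆ U \ F := by
  obtain ⟨p, hpU, hp⟩ := hd.inter_open_nonempty U hU hne
  refine ⟨p, hpU, fun F hF hpF => ?_⟩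
  have := exists_clopen_sub (x := p) (hU.sdiff hF.isClosed) (by
    rw [hp, singleton_subset_iff]; exact ⟨hpU, hpF⟩)
  obtain ⟨s, hs, hps, hsub⟩ := this
  exact ⟨s, hs, hps, hsub⟩

/-- A nonempty open set of a cantoroid can be cut into arbitrarily many pieces by a locally
constant function. -/
lemma exists_locConst_values (hni : NoIsolatedPoints M)
    (hd : Dense {x : M | connectedComponent x = {x}}) {U : Set M} (hU : IsOpen U)
    (hne : U.Nonempty) (m : ℕ) :
    ∃ c : M → ℕ, IsLocallyConstant c ∧ ∀ j ≤ m, ∃ x ∈ U, c x = j := by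
  classical
  induction m with
  | zero =>
    obtain ⟨x, hx⟩ := hne
    exact ⟨fun _ => 0, IsLocallyConstant.const 0, fun j hj => ⟨x, hx, (Nat.le_zero.1 hj).symm⟩⟩
  | succ m ih =>
    obtain ⟨c, hc, hcv⟩ := ih
    have hV : IsOpen (U ∩ c ⁻¹' {m}) := hU.inter (hc.isOpen_fiber m)
    have hVne : (U ∩ c ⁻¹' {m}).Nonempty := by
      obtain ⟨x, hx, hxm⟩ := hcv m le_rfl
      exact ⟨x, hx, hxm⟩
    obtain ⟨p, hp, hpD⟩ := exists_clopen_avoid hd hV hVne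
    obtain ⟨q, hq, hqp⟩ := exists_ne_mem_of_noIsolated hni hV (finite_singleton p) hVne
    obtain ⟨D, hD, hpD, hDU⟩ := hpD {q} (finite_singleton q) (fun h => hqp h.symm)
    refine ⟨fun x => if x ∈ D then m + 1 else c x, ?_, ?_⟩
    · rw [IsLocallyConstant.iff_eventually_eq]
      intro x
      by_cases hx : x ∈ D
      · filter_upwards [hD.isOpen.mem_nhds hx] with y hy
        simp [hx, hy]
      · have h1 : ∀ᶠ y in 𝓝 x, y ∈ Dᶜ := hD.compl.isOpen.mem_nhds hx
        filter_upwards [h1, hc.eventually_eq x] with y hy hy'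
        have hy2 : y ∉ D := hy
        simp [hx, hy2, hy']
    · intro j hj
      rcases Nat.lt_or_ge j (m + 1) with h | h
      · rcases Nat.lt_or_ge j m with h' | h'
        · obtain ⟨x, hx, hxj⟩ := hcv j h'.le
          refine ⟨x, hx, ?_⟩
          have : x ∉ D := fun hxD => by
            have := (hDU hxD).1.2
            rw [mem_preimage, mem_singleton_iff] at this
            omega
          simp [this, hxj]
        · refine ⟨q, hq.1, ?_⟩
          have : q ∉ D := fun hqD => (hDU hqD).2 rfl
          have h2 : c q = m := hq.2
          simp only [this, if_false, h2]
          omega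
      · refine ⟨p, hp.1, ?_⟩
        simp only [hpD, if_true]
        omega

/-- A finite approximation of a minimal map: `lam` is a clopen tower of height `k`, along which the
locally constant map `f` climbs; `f` is onto up to an error `ε` and any two
points of the bottom level are less than `ε` apart. -/
structure MinStage (k : ℕ) (lam : M → ℕ) (f : M → M) (ε : ℝ) : Prop where
  lc : IsLocallyConstant lam
  lf : IsLocallyConstant f
  lt : ∀ x, lam x < k
  step : ∀ x, lam (f x) = (lam x + 1) % k
  surj : ∀ y, ∃ x, lam (f x) = lam y ∧ dist (f x) y < ε
  zero : ∀ y y', lam y = 0 → lam y' = 0 → dist y y' < ε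

/-- Sharpening the map of a stage while keeping the tower: a locally constant map that climbs the
tower `lam` up to an error `ε`, in its domain and in its range, is `ε`-close to one that climbs the
tower exactly and is onto up to an error `ε'`. -/
lemma refine_map (hni : NoIsolatedPoints M)
    (hd : Dense {x : M | connectedComponent x = {x}}) {k : ℕ} {lam : M → ℕ} {f : M → M} {ε ε' : ℝ}
    (hε' : 0 < ε') (lc : IsLocallyConstant lam) (lf : IsLocallyConstant f)
    (ha : ∀ x, ∃ y, lam y = (lam x + 1) % k ∧ dist (f x) y < ε)
    (hb : ∀ y, ∃ x, lam y = (lam x + 1) % k ∧ dist (f x) y < ε) :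
    ∃ f' : M → M, IsLocallyConstant f' ∧ (∀ x, dist (f x) (f' x) < ε) ∧
      (∀ x, lam (f' x) = (lam x + 1) % k) ∧
      ∀ y, ∃ x, lam (f' x) = lam y ∧ dist (f' x) y < ε' := by
  classical
  -- targets and sources attached to a block `(e, j)`
  let T : M × ℕ → Set M := fun b => {y | lam y = (b.2 + 1) % k ∧ dist b.1 y < ε}
  let Q : M × ℕ → Set M := fun b => {x | f x = b.1 ∧ lam x = b.2}
  have hQo : ∀ b, IsOpen (Q b) := fun b => (lf.isOpen_fiber b.1).inter (lc.isOpen_fiber b.2)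
  have key : ∀ b : M × ℕ, (Q b).Nonempty → ∃ (z : ℕ → M) (c : M → ℕ), IsLocallyConstant c ∧
      (∀ n, z n ∈ T b) ∧ ∀ y ∈ T b, ∃ x ∈ Q b, dist (z (c x)) y < ε' := by
    intro b hb
    have hTne : (T b).Nonempty := by
      obtain ⟨x, hx1, hx2⟩ := hb
      obtain ⟨y, hy1, hy2⟩ := ha x
      exact ⟨y, by rw [hy1, hx2], by rw [← hx1]; exact hy2⟩
    have htb : TotallyBounded (T b) :=
      (isCompact_univ.totallyBounded).subset (subset_univ _)
    obtain ⟨t, htT, htf, htc⟩ := Metric.finite_approx_of_totallyBounded htb ε' hε'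
    have htne : t.Nonempty := by
      obtain ⟨y, hy⟩ := hTne
      obtain ⟨w, hw, -⟩ := mem_iUnion₂.1 (htc hy)
      exact ⟨w, hw⟩
    obtain ⟨z0, hz0⟩ := htf.countable.exists_eq_range htne
    have hidx : ∀ w : M, ∃ n, w ∈ t → z0 n = w := by
      intro w
      by_cases hw : w ∈ t
      · rw [hz0] at hw
        obtain ⟨n, hn⟩ := hw
        exact ⟨n, fun _ => hn⟩
      · exact ⟨0, fun h => absurd h hw⟩
    choose idx hidx using hidx
    obtain ⟨m, hm⟩ := (htf.image idx).bddAbove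
    obtain ⟨c, hc, hcv⟩ := exists_locConst_values hni hd (hQo b) hb m
    refine ⟨z0, c, hc, fun n => htT (by rw [hz0]; exact ⟨n, rfl⟩), fun y hy => ?_⟩
    obtain ⟨w, hw, hyw⟩ := mem_iUnion₂.1 (htc hy)
    obtain ⟨x, hx, hxc⟩ := hcv (idx w) (hm ⟨w, hw, rfl⟩)
    refine ⟨x, hx, ?_⟩
    rw [hxc, hidx w hw, dist_comm]
    exact hyw
  have hself : ∀ x, x ∈ Q (f x, lam x) := fun x => ⟨rfl, rfl⟩
  have key' : ∀ b : M × ℕ, ∃ (z : ℕ → M) (c : M → ℕ), (Q b).Nonempty → IsLocallyConstant c ∧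
      (∀ n, z n ∈ T b) ∧ ∀ y ∈ T b, ∃ x ∈ Q b, dist (z (c x)) y < ε' := by
    intro b
    by_cases h : (Q b).Nonempty
    · obtain ⟨z, c, h'⟩ := key b h
      exact ⟨z, c, fun _ => h'⟩
    · exact ⟨fun _ => b.1, fun _ => 0, fun h' => absurd h' h⟩
  choose z c hzc using key'
  have hP := fun x => hzc (f x, lam x) ⟨x, hself x⟩
  have hmem : ∀ x, z (f x, lam x) (c (f x, lam x) x) ∈ T (f x, lam x) := fun x => (hP x).2.1 _
  refine ⟨fun x => z (f x, lam x) (c (f x, lam x) x), ?_, ?_, ?_, ?_⟩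
  · rw [IsLocallyConstant.iff_eventually_eq]
    intro x
    filter_upwards [lf.eventually_eq x, lc.eventually_eq x, (hP x).1.eventually_eq x] with y h1 h2 h3
    simp only [h1, h2, h3]
  · exact fun x => (hmem x).2
  · exact fun x => (hmem x).1
  · intro y
    obtain ⟨x, hx1, hx2⟩ := hb y
    obtain ⟨x', ⟨hx'1, hx'2⟩, hx'3⟩ := (hP x).2.2 y ⟨hx1, hx2⟩
    simp only at hx'1 hx'2
    refine ⟨x', ?_, ?_⟩
    · rw [(hmem x').1, hx1, hx'2]
    · simp only [hx'1, hx'2]; exact hx'3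

lemma MinStage.iterate {k : ℕ} {lam : M → ℕ} {f : M → M} {ε : ℝ} (h : MinStage k lam f ε) (x : M)
    (n : ℕ) : lam (f^[n] x) = (lam x + n) % k := by
  induction n with
  | zero => simp [Nat.mod_eq_of_lt (h.lt x)]
  | succ n ih =>
    rw [Function.iterate_succ_apply', h.step, ih, Nat.mod_add_mod, Nat.add_assoc]

lemma MinStage.level [Nonempty M] {k : ℕ} {lam : M → ℕ} {f : M → M} {ε : ℝ}
    (h : MinStage k lam f ε) {i : ℕ} (hi : i < k) : ∃ x, lam x = i := by
  obtain ⟨x⟩ := ‹Nonempty M›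
  refine ⟨f^[k - lam x + i] x, ?_⟩
  have := h.lt x
  rw [h.iterate, show lam x + (k - lam x + i) = i + k by omega, Nat.add_mod_right,
    Nat.mod_eq_of_lt hi]

/-- A full pseudo-orbit of a stage through a prescribed point. -/
lemma MinStage.chain {k : ℕ} {lam : M → ℕ} {f : M → M} {ε : ℝ} (h : MinStage k lam f ε) (hε : 0 < ε)
    (y : M) : ∃ z : ℕ → M, z (lam y) = y ∧ (∀ i < k, lam (z i) = i) ∧
      ∀ i, i + 1 < k → dist (f (z i)) (z (i + 1)) < ε := by
  -- going backwards from `y`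
  have hback : ∀ n y, lam y = n → ∃ z : ℕ → M, z n = y ∧ (∀ i ≤ n, lam (z i) = i) ∧
      ∀ i < n, dist (f (z i)) (z (i + 1)) < ε := by
    intro n
    induction n with
    | zero =>
      intro y hy
      exact ⟨fun _ => y, rfl, fun i hi => by rw [hy]; omega, fun i hi => by omega⟩
    | succ n ih =>
      intro y hy
      obtain ⟨x, hx, hxy⟩ := h.surj y
      have hxn : lam x = n := by
        have h1 := h.step x
        have h2 := h.lt x
        rw [hx, hy] at h1
        rcases Nat.lt_or_ge (lam x + 1) k with h3 | h3
        · rw [Nat.mod_eq_of_lt h3] at h1; omega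
        · rw [show lam x + 1 = k by omega, Nat.mod_self] at h1; omega
      obtain ⟨z, hz0, hz1, hz2⟩ := ih x hxn
      refine ⟨fun i => if i ≤ n then z i else y, by simp, fun i hi => ?_, fun i hi => ?_⟩
      · by_cases hin : i ≤ n
        · simp [hin, hz1 i hin]
        · simp only [hin, if_false]; omega
      · by_cases hin : i + 1 ≤ n
        · simp only [hin, if_true, show i ≤ n by omega]
          exact hz2 i (by omega)
        · have : i = n := by omega
          subst this
          simp only [le_refl, if_true, hin, if_false, hz0]
          exact hxy
  obtain ⟨z, hz0, hz1, hz2⟩ := hback (lam y) y rfl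
  refine ⟨fun i => if i ≤ lam y then z i else f^[i - lam y] y, by simp [hz0], fun i hi => ?_,
    fun i hi => ?_⟩
  · by_cases hin : i ≤ lam y
    · simp [hin, hz1 i hin]
    · simp only [hin, if_false, h.iterate]
      rw [show lam y + (i - lam y) = i by omega, Nat.mod_eq_of_lt hi]
  · by_cases hin : i + 1 ≤ lam y
    · simp only [hin, if_true, show i ≤ lam y by omega]
      exact hz2 i (by omega)
    · simp only [hin, if_false]
      by_cases hin' : i ≤ lam y
      · have : i = lam y := by omega
        simp only [this, hz0]
        simpa using hε
      · simp only [hin', if_false]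
        rw [show i + 1 - lam y = (i - lam y) + 1 by omega, Function.iterate_succ_apply']
        simpa using hε

/-- The next stage: a finer and taller tower, one level of which lies inside the prescribed set `U`,
with a map close to the previous one. -/
lemma MinStage.next [Nonempty M] (hni : NoIsolatedPoints M)
    (hd : Dense {x : M | connectedComponent x = {x}}) {k : ℕ} {lam : M → ℕ} {f : M → M} {ε : ℝ}
    (h : MinStage k lam f ε) (hε : 0 < ε) {ε' : ℝ} (hε' : 0 < ε') {U : Set M} (hU : IsOpen U)
    (hUne : U.Nonempty) :
    ∃ (k' : ℕ) (lam' : M → ℕ) (f' : M → M), MinStage k' lam' f' ε' ∧ k ∣ k' ∧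
      (∀ x, lam' x ≡ lam x [MOD k]) ∧ (∀ x, dist (f x) (f' x) < ε) ∧
      ∃ i < k', ∀ x, lam' x = i → x ∈ U := by
  classical
  obtain ⟨y0, hy0⟩ := hUne
  obtain ⟨z, hz0, hzl, hzd⟩ := h.chain hε y0
  -- the neighbourhoods in which the thin tower is to be built
  let O : ℕ → Set M := fun i => (lam ⁻¹' {i} ∩ f ⁻¹' {f (z i)}) ∩
    ({x | 0 < i → dist (f (z (i - 1))) x < ε} ∩ ({x | i = lam y0 → x ∈ U} ∩
      {x | i = 0 → dist x (z 0) < ε' / 2}))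
  have hOo : ∀ i, IsOpen (O i) := by
    intro i
    refine ((h.lc.isOpen_fiber i).inter (h.lf.isOpen_fiber _)).inter (IsOpen.inter ?_ (.inter ?_ ?_))
    · by_cases hi : 0 < i
      · simp only [hi, true_imp_iff]
        exact isOpen_lt (by fun_prop) continuous_const
      · simp [hi]
    · by_cases hi : i = lam y0
      · simp only [hi, true_imp_iff]
        exact hU
      · simp [hi]
    · by_cases hi : i = 0
      · simp only [hi, true_imp_iff]
        exact isOpen_lt (by fun_prop) continuous_const
      · simp [hi]
  have hOz : ∀ i < k, z i ∈ O i := by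
    intro i hi
    refine ⟨⟨hzl i hi, rfl⟩, fun hi0 => ?_, fun hi0 => ?_, fun hi0 => ?_⟩
    · have := hzd (i - 1) (by omega)
      rwa [Nat.sub_add_cancel hi0] at this
    · rw [hi0, hz0]; exact hy0
    · rw [hi0, dist_self]; linarith
  have hpick : ∀ i, ∃ p : M, i < k → p ∈ O i ∧ ∀ F : Set M, F.Finite → p ∉ F →
      ∃ D, IsClopen D ∧ p ∈ D ∧ D ⊆ O i \ F := by
    intro i
    by_cases hi : i < k
    · obtain ⟨p, hp, hp'⟩ := exists_clopen_avoid hd (hOo i) ⟨z i, hOz i hi⟩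
      exact ⟨p, fun _ => ⟨hp, hp'⟩⟩
    · exact ⟨y0, fun h => absurd h hi⟩
  choose p hp using hpick
  -- points which are to stay outside the thin tower
  let B : M → Set M := fun x => {x' | f x' = f x ∧ lam x' = lam x}
  let E : M → Set M := fun e => {y | lam y = lam e ∧ dist e y < ε}
  have hfinfl : (range fun x => (f x, lam x)).Finite := (h.lf.prodMk h.lc).range_finite
  have hfinf : (range f).Finite := h.lf.range_finite
  have hFfin : (p '' Iio k).Finite := (finite_Iio k).image p
  have hBp : ∀ b : M × ℕ, ∃ q, b ∈ (range fun x => (f x, lam x)) →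
      (f q = b.1 ∧ lam q = b.2) ∧ q ∉ p '' Iio k := by
    intro b
    by_cases hb : b ∈ range fun x => (f x, lam x)
    · obtain ⟨x, rfl⟩ := hb
      obtain ⟨q, hq, hq'⟩ := exists_ne_mem_of_noIsolated hni
        (U := f ⁻¹' {f x} ∩ lam ⁻¹' {lam x})
        ((h.lf.isOpen_fiber _).inter (h.lc.isOpen_fiber _)) hFfin ⟨x, rfl, rfl⟩
      exact ⟨q, fun _ => ⟨hq, hq'⟩⟩
    · exact ⟨y0, fun h => absurd h hb⟩
  have hEp : ∀ e : M, ∃ q, (lam q = lam e ∧ dist e q < ε) ∧ q ∉ p '' Iio k := by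
    intro e
    obtain ⟨q, hq, hq'⟩ := exists_ne_mem_of_noIsolated hni (U := lam ⁻¹' {lam e} ∩ {y | dist e y < ε})
        ((h.lc.isOpen_fiber _).inter (isOpen_lt (by fun_prop) continuous_const)) hFfin
        ⟨e, rfl, by simpa using hε⟩
    exact ⟨q, hq, hq'⟩
  choose qB hqB using hBp
  choose qE hqE using hEp
  set F : Set M := qB '' (range fun x => (f x, lam x)) ∪ qE '' range f with hF
  have hFf : F.Finite := (hfinfl.image _).union (hfinf.image _)
  have hpF : ∀ i < k, p i ∉ F := by
    rintro i hi (⟨b, hb, hbp⟩ | ⟨e, -, hep⟩)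
    · exact (hqB b hb).2 ⟨i, hi, hbp.symm⟩
    · exact (hqE e).2 ⟨i, hi, hep.symm⟩
  have hD' : ∀ i, ∃ D : Set M, i < k → IsClopen D ∧ p i ∈ D ∧ D ⊆ O i \ F := by
    intro i
    by_cases hi : i < k
    · obtain ⟨D, hD⟩ := (hp i hi).2 F hFf (hpF i hi)
      exact ⟨D, fun _ => hD⟩
    · exact ⟨∅, fun h => absurd h hi⟩
  choose D hD using hD'
  set S : Set M := ⋃ i ∈ Iio k, D i with hS
  have hSc : IsClopen S := (finite_Iio k).isClopen_biUnion fun i hi => (hD i hi).1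
  have hSO : ∀ x ∈ S, x ∈ O (lam x) ∧ x ∉ F := by
    intro x hx
    obtain ⟨i, hi, hxi⟩ := mem_iUnion₂.1 hx
    have h1 := (hD i hi).2.2 hxi
    have h2 : lam x = i := h1.1.1.1
    rw [h2]; exact h1
  have hSne : ∀ i < k, ∃ x ∈ S, lam x = i := fun i hi =>
    ⟨p i, mem_biUnion (show i ∈ Iio k from hi) (hD i hi).2.1, ((hD i hi).2.2 (hD i hi).2.1).1.1.1⟩
  have hS1 : ∀ x ∈ S, ∀ y ∈ S, lam y = lam x + 1 → dist (f x) y < ε := by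
    intro x hx y hy hxy
    have h1 : f x = f (z (lam x)) := (hSO x hx).1.1.2
    have h2 := (hSO y hy).1.2.1 (by omega)
    rw [hxy, Nat.add_sub_cancel] at h2
    rw [h1]; exact h2
  have hW1 : ∀ x, ∃ x', x' ∉ S ∧ f x' = f x ∧ lam x' = lam x := fun x =>
    ⟨qB (f x, lam x), fun hxS => (hSO _ hxS).2 (Or.inl ⟨_, ⟨x, rfl⟩, rfl⟩),
      (hqB (f x, lam x) ⟨x, rfl⟩).1⟩
  have hW2 : ∀ x, ∃ y, y ∉ S ∧ lam y = lam (f x) ∧ dist (f x) y < ε := fun x =>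
    ⟨qE (f x), fun hxS => (hSO _ hxS).2 (Or.inr ⟨_, ⟨x, rfl⟩, rfl⟩), (hqE (f x)).1⟩
  have hk : 0 < k := (Nat.zero_le _).trans_lt (h.lt y0)
  -- the new tower of height `2 * k`: first the thin one, then what remains of the old one
  let lam' : M → ℕ := fun x => if x ∈ S then lam x else k + lam x
  have hlS : ∀ x ∈ S, lam' x = lam x := fun x hx => if_pos hx
  have hlW : ∀ x, x ∉ S → lam' x = k + lam x := fun x hx => if_neg hx
  have hlc : IsLocallyConstant lam' := by
    rw [IsLocallyConstant.iff_eventually_eq]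
    intro x
    by_cases hx : x ∈ S
    · have h1 : ∀ᶠ y in 𝓝 x, y ∈ S := hSc.isOpen.mem_nhds hx
      filter_upwards [h1, h.lc.eventually_eq x] with y hy hy'
      rw [hlS _ hx, hlS _ hy, hy']
    · have h1 : ∀ᶠ y in 𝓝 x, y ∈ Sᶜ := hSc.compl.isOpen.mem_nhds hx
      filter_upwards [h1, h.lc.eventually_eq x] with y hy hy'
      rw [hlW _ hx, hlW _ hy, hy']
  have hlt : ∀ x, lam' x < 2 * k := by
    intro x
    have := h.lt x
    by_cases hx : x ∈ S
    · rw [hlS x hx]; omega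
    · rw [hlW x hx]; omega
  have hstep : ∀ x, lam x + 1 < k → lam (f x) = lam x + 1 := fun x hx => by
    rw [h.step, Nat.mod_eq_of_lt hx]
  have hstep0 : ∀ x, ¬ lam x + 1 < k → lam (f x) = 0 ∧ lam x + 1 = k := fun x hx => by
    have := h.lt x
    have h1 : lam x + 1 = k := by omega
    rw [h.step, h1, Nat.mod_self]; exact ⟨rfl, rfl⟩
  have ha : ∀ x, ∃ y, lam' y = (lam' x + 1) % (2 * k) ∧ dist (f x) y < ε := by
    intro x
    by_cases hx : x ∈ S <;> by_cases hxk : lam x + 1 < k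
    · obtain ⟨y, hy, hyl⟩ := hSne _ hxk
      refine ⟨y, ?_, hS1 x hx y hy hyl⟩
      rw [hlS x hx, hlS y hy, hyl, Nat.mod_eq_of_lt (by omega)]
    · obtain ⟨y, hy, hyl, hyd⟩ := hW2 x
      refine ⟨y, ?_, hyd⟩
      rw [hlS x hx, hlW y hy, hyl, (hstep0 x hxk).1, (hstep0 x hxk).2, Nat.mod_eq_of_lt (by omega)]
      rfl
    · obtain ⟨y, hy, hyl, hyd⟩ := hW2 x
      refine ⟨y, ?_, hyd⟩
      rw [hlW x hx, hlW y hy, hyl, hstep x hxk, Nat.mod_eq_of_lt (by omega)]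
      rfl
    · obtain ⟨y, hy, hyl⟩ := hSne 0 hk
      refine ⟨y, ?_, h.zero _ _ (hstep0 x hxk).1 hyl⟩
      rw [hlW x hx, hlS y hy, hyl, Nat.add_assoc, (hstep0 x hxk).2, ← two_mul, Nat.mod_self]
  have hb : ∀ y, ∃ x, lam' y = (lam' x + 1) % (2 * k) ∧ dist (f x) y < ε := by
    intro y
    have hyk := h.lt y
    by_cases hy : y ∈ S <;> by_cases hy0 : 0 < lam y
    · obtain ⟨x, hx, hxl⟩ := hSne (lam y - 1) (by omega)
      refine ⟨x, ?_, hS1 x hx y hy (by omega)⟩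
      rw [hlS x hx, hlS y hy, hxl, Nat.mod_eq_of_lt (by omega)]
      omega
    · obtain ⟨x0, hx0⟩ := h.level (show k - 1 < k by omega)
      obtain ⟨x, hx, -, hxl⟩ := hW1 x0
      have hxk : ¬ lam x + 1 < k := by omega
      refine ⟨x, ?_, h.zero _ _ (hstep0 x hxk).1 (by omega)⟩
      rw [hlS y hy, hlW x hx, Nat.add_assoc, (hstep0 x hxk).2, ← two_mul, Nat.mod_self]
      omega
    · obtain ⟨x0, hx0, hx0d⟩ := h.surj y
      obtain ⟨x, hx, hxf, hxl⟩ := hW1 x0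
      have hxk : lam x + 1 < k := by
        by_contra hcon
        have := (hstep0 x hcon).1
        rw [hxf] at this
        omega
      refine ⟨x, ?_, by rw [hxf]; exact hx0d⟩
      have h3 := hstep x hxk
      rw [hxf, hx0] at h3
      rw [hlW y hy, hlW x hx, Nat.mod_eq_of_lt (by omega)]
      omega
    · obtain ⟨x, hx, hxl⟩ := hSne (k - 1) (by omega)
      have hxk : ¬ lam x + 1 < k := by omega
      refine ⟨x, ?_, h.zero _ _ (hstep0 x hxk).1 (by omega)⟩
      rw [hlW y hy, hlS x hx, Nat.mod_eq_of_lt (by omega)]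
      omega
  obtain ⟨f', hf'1, hf'2, hf'3, hf'4⟩ := refine_map hni hd hε' hlc h.lf ha hb
  have hlt0 : ∀ x, lam' x < k → x ∈ S ∧ lam x = lam' x := by
    intro x hx
    by_cases hxS : x ∈ S
    · exact ⟨hxS, (hlS x hxS).symm⟩
    · rw [hlW x hxS] at hx; omega
  refine ⟨2 * k, lam', f', ⟨hlc, hf'1, hlt, hf'3, hf'4, ?_⟩, dvd_mul_left _ _, ?_, hf'2,
    lam y0, by have := h.lt y0; omega, ?_⟩
  · have key : ∀ y, lam' y = 0 → dist y (z 0) < ε' / 2 := by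
      intro y hy
      obtain ⟨hyS, hyl⟩ := hlt0 y (by omega)
      have h1 := (hSO y hyS).1.2.2.2
      exact h1 (by omega)
    intro y y' hy hy'
    have h1 := key y hy
    have h2 := key y' hy'
    have := dist_triangle_right y y' (z 0)
    linarith
  · intro x
    by_cases hx : x ∈ S
    · rw [hlS x hx]
    · rw [hlW x hx]
      simp [Nat.ModEq]
  · intro x hx
    have h0 := h.lt y0
    obtain ⟨hxS, hxl⟩ := hlt0 x (by omega)
    exact (hSO x hxS).1.2.2.1 (by omega)

/-- A cantoroid has a minimal self-map which is constant on components. -/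
theorem exists_minimal_of_cantoroid [Nonempty M] (hni : NoIsolatedPoints M)
    (hd : Dense {x : M | connectedComponent x = {x}}) :
    ∃ f : M → M, Continuous f ∧ IsMinMap f ∧
      ∀ x y, connectedComponent x = connectedComponent y → f x = f y := by
  classical
  obtain ⟨x0⟩ := ‹Nonempty M›
  have : Nonempty M := ⟨x0⟩
  set c : ℝ := Metric.diam (univ : Set M) + 1 with hc
  have hcd : ∀ x y : M, dist x y < c := fun x y =>
    (Metric.dist_le_diam_of_mem (isCompact_univ.isBounded) (mem_univ x) (mem_univ y)).trans_lt
      (by rw [hc]; linarith)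
  have hc0 : 0 < c := by rw [hc]; linarith [Metric.diam_nonneg (s := (univ : Set M))]
  set e : ℕ → ℝ := fun n => c * (1 / 2) ^ n with he
  have he0 : ∀ n, 0 < e n := fun n => by positivity
  have hB := TopologicalSpace.isBasis_countableBasis M
  have hBne : (TopologicalSpace.countableBasis M).Nonempty := by
    obtain ⟨u, hu, -⟩ := hB.exists_subset_of_mem_open (mem_univ x0) isOpen_univ
    exact ⟨u, hu⟩
  obtain ⟨U, hUr⟩ := (TopologicalSpace.countable_countableBasis M).exists_eq_range hBne
  have hUo : ∀ n, IsOpen (U n) := fun n =>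
    TopologicalSpace.isOpen_of_mem_countableBasis (by rw [hUr]; exact ⟨n, rfl⟩)
  have hUne : ∀ n, (U n).Nonempty := fun n =>
    TopologicalSpace.nonempty_of_mem_countableBasis (by rw [hUr]; exact ⟨n, rfl⟩)
  have hstep : ∀ (n : ℕ) (s : {s : ℕ × (M → ℕ) × (M → M) // MinStage s.1 s.2.1 s.2.2 (e n)}),
      ∃ s' : {s : ℕ × (M → ℕ) × (M → M) // MinStage s.1 s.2.1 s.2.2 (e (n + 1))},
        s.1.1 ∣ s'.1.1 ∧ (∀ x, s'.1.2.1 x ≡ s.1.2.1 x [MOD s.1.1]) ∧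
        (∀ x, dist (s.1.2.2 x) (s'.1.2.2 x) < e n) ∧
        ∃ i < s'.1.1, ∀ x, s'.1.2.1 x = i → x ∈ U n := by
    intro n s
    obtain ⟨k', lam', f', h1, h2⟩ := s.2.next hni hd (he0 n) (he0 (n + 1)) (hUo n) (hUne n)
    exact ⟨⟨(k', lam', f'), h1⟩, h2⟩
  choose nx hnx using hstep
  have h0 : MinStage 1 (fun _ : M => 0) (fun _ => x0) (e 0) := by
    refine ⟨IsLocallyConstant.const _, IsLocallyConstant.const _, fun _ => one_pos, fun _ => rfl,
      fun y => ⟨x0, rfl, ?_⟩, fun y y' _ _ => ?_⟩ <;> simpa [he] using hcd _ _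
  let s : ∀ n, {s : ℕ × (M → ℕ) × (M → M) // MinStage s.1 s.2.1 s.2.2 (e n)} := fun n =>
    Nat.rec ⟨(1, fun _ => 0, fun _ => x0), h0⟩ (fun n t => nx n t) n
  have hs : ∀ n, s (n + 1) = nx n (s n) := fun n => rfl
  set k : ℕ → ℕ := fun n => (s n).1.1 with hk
  set lam : ℕ → M → ℕ := fun n => (s n).1.2.1 with hlam
  set g : ℕ → M → M := fun n => (s n).1.2.2 with hg
  have hst : ∀ n, MinStage (k n) (lam n) (g n) (e n) := fun n => (s n).2
  have hkd : ∀ n, k n ∣ k (n + 1) := fun n => by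
    have := (hnx n (s n)).1; rwa [← hs] at this
  have hld : ∀ n x, lam (n + 1) x ≡ lam n x [MOD k n] := fun n => by
    have := (hnx n (s n)).2.1; rwa [← hs] at this
  have hgd : ∀ n x, dist (g n x) (g (n + 1) x) < e n := fun n => by
    have := (hnx n (s n)).2.2.1; rwa [← hs] at this
  have hiU : ∀ n, ∃ i < k (n + 1), ∀ x, lam (n + 1) x = i → x ∈ U n := fun n => by
    have := (hnx n (s n)).2.2.2; rwa [← hs] at this
  have hkd' : ∀ n m, n ≤ m → k n ∣ k m := fun n m hnm => by
    induction m, hnm using Nat.le_induction with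
    | base => exact dvd_rfl
    | succ m _ ih => exact ih.trans (hkd m)
  have hld' : ∀ n m, n ≤ m → ∀ x, lam m x ≡ lam n x [MOD k n] := fun n m hnm x => by
    induction m, hnm using Nat.le_induction with
    | base => rfl
    | succ m hm ih => exact ((hld m x).of_dvd (hkd' n m hm)).trans ih
  have hcau : ∀ x, CauchySeq fun n => g n x := fun x =>
    cauchySeq_of_le_geometric (1 / 2) c (by norm_num) fun n => (hgd n x).le
  choose f hf using fun x => cauchySeq_tendsto_of_complete (hcau x)
  have hfd : ∀ n x, dist (g n x) (f x) ≤ c * (1 / 2) ^ n / (1 - 1 / 2) := fun n x =>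
    dist_le_of_le_geometric_of_tendsto (1 / 2) c (by norm_num) (fun n => (hgd n x).le) (hf x) n
  have hunif : TendstoUniformly g f Filter.atTop := by
    rw [Metric.tendstoUniformly_iff]
    intro ε hε
    have hlim : Filter.Tendsto (fun n : ℕ => c * (1 / 2 : ℝ) ^ n / (1 - 1 / 2)) Filter.atTop
        (𝓝 (c * 0 / (1 - 1 / 2))) :=
      ((tendsto_pow_atTop_nhds_zero_of_lt_one (by norm_num) (by norm_num)).const_mul c).div_const _
    rw [mul_zero, zero_div] at hlim
    filter_upwards [hlim.eventually_lt_const hε] with n hn x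
    rw [dist_comm]
    exact (hfd n x).trans_lt hn
  have hfc : Continuous f :=
    hunif.continuous (Filter.Eventually.of_forall fun n => (hst n).lf.continuous).frequently
  have hflam : ∀ n x, lam n (f x) ≡ lam n x + 1 [MOD k n] := by
    intro n x
    have h1 : ∀ᶠ m in Filter.atTop, lam n (g m x) = lam n (f x) :=
      (hf x).eventually ((hst n).lc.eventually_eq (f x))
    obtain ⟨m, hm, hnm⟩ := (h1.and (Filter.eventually_ge_atTop n)).exists
    rw [← hm]
    have h2 : lam m (g m x) ≡ lam m x + 1 [MOD k m] := by
      rw [(hst m).step]; exact Nat.mod_modEq _ _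
    exact (hld' n m hnm _).symm.trans ((h2.of_dvd (hkd' n m hnm)).trans
      ((hld' n m hnm x).add_right 1))
  have hfit : ∀ n x j, lam n (f^[j] x) ≡ lam n x + j [MOD k n] := by
    intro n x j
    induction j with
    | zero => rfl
    | succ j ih =>
      rw [Function.iterate_succ_apply']
      exact (hflam n _).trans (ih.add_right 1)
  refine ⟨f, hfc, ?_, ?_⟩
  · intro N hN hNc hNf
    obtain ⟨x, hx⟩ := hN
    have hNit : ∀ j, f^[j] x ∈ N := by
      intro j
      induction j with
      | zero => exact hx
      | succ j ih => rw [Function.iterate_succ_apply']; exact hNf _ ih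
    have hdense : Dense N := by
      rw [hB.dense_iff]
      intro V hV _
      rw [hUr] at hV
      obtain ⟨n, rfl⟩ := hV
      obtain ⟨i, hi, hiU⟩ := hiU n
      have hlt := (hst (n + 1)).lt x
      have h1 := hfit (n + 1) x (k (n + 1) - lam (n + 1) x + i)
      rw [show lam (n + 1) x + (k (n + 1) - lam (n + 1) x + i) = i + k (n + 1) by omega] at h1
      have h2 : lam (n + 1) (f^[k (n + 1) - lam (n + 1) x + i] x) = i := by
        have h3 : i + k (n + 1) ≡ i [MOD k (n + 1)] := by simp [Nat.ModEq]
        exact Nat.ModEq.eq_of_lt_of_lt (h1.trans h3) ((hst (n + 1)).lt _) hi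
      exact ⟨_, hiU _ h2, hNit _⟩
    rw [← hNc.closure_eq]; exact hdense.closure_eq
  · intro x y hxy
    have hxy' : x ∈ connectedComponent y := hxy ▸ mem_connectedComponent
    refine tendsto_nhds_unique (hf x) ?_
    have : ∀ n, g n x = g n y := fun n =>
      (hst n).lf.apply_eq_of_isPreconnected isPreconnected_connectedComponent hxy'
        mem_connectedComponent
    simp only [this]
    exact hf y

end Cantoroid

/-! ### Extending maps into Peano continua -/

section ExtLine
variable {Y : Type*} [MetricSpace Y] [CompactSpace Y] [LocallyConnectedSpace Y]
  [PathConnectedSpace Y]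

/-- A choice of paths between all pairs of points such that paths between close points are small. -/
lemma exists_path_system (Y : Type*) [MetricSpace Y] [CompactSpace Y] [LocallyConnectedSpace Y]
    [PathConnectedSpace Y] :
    ∃ p : Y → Y → ℝ → Y, (∀ x y, Continuous (p x y)) ∧ (∀ x y, p x y 0 = x) ∧
      (∀ x y, p x y 1 = y) ∧
      ∀ ε > 0, ∃ δ > 0, ∀ x y, dist x y < δ → ∀ t, dist (p x y t) x < ε := by
  classical
  have key : ∀ x y : Y, ∃ γ : ℝ → Y, Continuous γ ∧ γ 0 = x ∧ γ 1 = y ∧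
      ∀ n : ℕ, JoinedIn (Metric.ball x (1 / ((n : ℝ) + 1))) x y →
        ∀ t, dist (γ t) x < 1 / ((n : ℝ) + 1) := by
    intro x y
    have hmono : ∀ m n : ℕ, m ≤ n → (1 : ℝ) / ((n : ℝ) + 1) ≤ 1 / ((m : ℝ) + 1) := fun m n h =>
      one_div_le_one_div_of_le (by positivity) (by exact_mod_cast Nat.succ_le_succ h)
    by_cases hxy : x = y
    · subst hxy
      exact ⟨fun _ => x, continuous_const, rfl, rfl, fun n _ t => by rw [dist_self]; positivity⟩
    · have hex : ∃ n : ℕ, ¬ JoinedIn (Metric.ball x (1 / ((n : ℝ) + 1))) x y := by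
        obtain ⟨n, hn⟩ := exists_nat_one_div_lt (dist_pos.2 hxy)
        refine ⟨n, fun h => ?_⟩
        have := h.target_mem
        rw [Metric.mem_ball, dist_comm] at this
        linarith
      have hspec := Nat.find_spec hex
      have hmin := fun m => Nat.find_min hex (m := m)
      have hlt : ∀ n : ℕ, JoinedIn (Metric.ball x (1 / ((n : ℝ) + 1))) x y → n < Nat.find hex := by
        intro n hn
        by_contra hcon
        exact hspec (hn.mono (Metric.ball_subset_ball (hmono _ _ (not_lt.1 hcon))))
      rcases Nat.eq_zero_or_pos (Nat.find hex) with h0 | h0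
      · obtain ⟨γ⟩ := PathConnectedSpace.joined x y
        refine ⟨γ.extend, γ.continuous_extend, by simp, by simp, fun n hn => ?_⟩
        have := hlt n hn
        omega
      · have hj := not_not.1 (hmin (Nat.find hex - 1) (by omega))
        refine ⟨hj.somePath.extend, hj.somePath.continuous_extend, by simp, by simp,
          fun n hn t => ?_⟩
        have h1 := hj.somePath_mem (projIcc 0 1 zero_le_one t)
        have h2 : hj.somePath.extend t = hj.somePath (projIcc 0 1 zero_le_one t) := rfl
        rw [h2]
        exact (Metric.mem_ball.1 h1).trans_le (hmono _ _ (by have := hlt n hn; omega))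
  choose p hp0 hp1 hp2 hp3 using key
  refine ⟨p, hp0, hp1, hp2, fun ε hε => ?_⟩
  obtain ⟨n, hn⟩ := exists_nat_one_div_lt hε
  obtain ⟨δ, hδ, h⟩ := exists_small_path Y (ε := 1 / ((n : ℝ) + 1)) (by positivity)
  exact ⟨δ, hδ, fun x y hxy t => (hp3 x y n (h x y hxy) t).trans hn⟩

/-- A continuous map from a closed subset of the line into a Peano continuum extends to the line:
gaps are filled by small paths. Here the set is unbounded in both directions. -/
lemma ext_line_of_unbounded {S : Set ℝ} (hS : IsClosed S) (hl : ∀ t, (S ∩ Iic t).Nonempty)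
    (hr : ∀ t, (S ∩ Ici t).Nonempty) {g : ℝ → Y} (hg : ContinuousOn g S) :
    ∃ G : ℝ → Y, Continuous G ∧ EqOn G g S := by
  obtain ⟨p, hpc, hp0, hp1, hps⟩ := exists_path_system Y
  set G : ℝ → Y := fun t => p (g (gapL S t)) (g (gapR S t))
    ((t - gapL S t) / (gapR S t - gapL S t)) with hG
  have hGS : EqOn G g S := by
    intro t ht
    simp only [hG, gapL_self ht, gapR_self ht, sub_self, div_zero, hp0]
  have hL := fun t => gapL_mem hS (hl t)
  have hR := fun t => gapR_mem hS (hr t)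
  -- the form of `G` on the closure of a gap
  have hgap : ∀ u ∈ S, ∀ v ∈ S, u < v → (∀ w ∈ S, u < w → w < v → False) →
      EqOn G (fun t => p (g u) (g v) ((t - u) / (v - u))) (Icc u v) := by
    intro u hu v hv huv hemp t ht
    rcases eq_or_lt_of_le ht.1 with rfl | h1
    · rw [hGS hu]; simp [hp0]
    rcases eq_or_lt_of_le ht.2 with rfl | h2
    · rw [hGS hv]; simp [div_self (sub_ne_zero.2 huv.ne'), hp1]
    have h3 : gapL S t = u := by
      refine le_antisymm ?_ (le_gapL hu h1.le)
      by_contra hcon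
      exact hemp _ (hL t).1 (not_le.1 hcon) ((hL t).2.trans_lt h2)
    have h4 : gapR S t = v := by
      refine le_antisymm (gapR_le hv h2.le) ?_
      by_contra hcon
      exact hemp _ (hR t).1 (h1.trans_le (hR t).2) (not_le.1 hcon)
    simp only [hG, h3, h4]
  have hcont : ∀ u v : ℝ, Continuous fun t => p (g u) (g v) ((t - u) / (v - u)) := fun u v =>
    (hpc _ _).comp (by fun_prop)
  refine ⟨G, continuous_iff_continuousAt.2 fun t => ?_, hGS⟩
  by_cases ht : t ∈ S
  swap
  · have h1 : gapL S t < t := lt_of_le_of_ne (hL t).2 fun h => ht (h ▸ (hL t).1)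
    have h2 : t < gapR S t := lt_of_le_of_ne (hR t).2 fun h => ht (h ▸ (hR t).1)
    have h3 := hgap _ (hL t).1 _ (hR t).1 (h1.trans h2) fun w hw h4 h5 => gap_empty hw h4 h5
    exact (hcont _ _).continuousAt.congr
      ((h3.eventuallyEq_of_mem (Icc_mem_nhds h1 h2)).symm)
  -- values near `t` which come from small gaps
  have hsmall : ∀ ε > 0, ∃ η > 0, ∀ s, t - η < gapL S s → gapR S s < t + η →
      dist (G s) (G t) < ε := by
    intro ε hε
    obtain ⟨δ, hδ, hδp⟩ := hps (ε / 2) (half_pos hε)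
    obtain ⟨η, hη, hηg⟩ := Metric.continuousWithinAt_iff.1 (hg t ht) (min (δ / 2) (ε / 2))
      (lt_min (half_pos hδ) (half_pos hε))
    refine ⟨η, hη, fun s h1 h2 => ?_⟩
    have ha : dist (g (gapL S s)) (g t) < min (δ / 2) (ε / 2) := hηg (hL s).1 (by
      rw [Real.dist_eq, abs_lt]
      have := (hL s).2; have := (hR s).2
      constructor <;> linarith)
    have hb : dist (g (gapR S s)) (g t) < min (δ / 2) (ε / 2) := hηg (hR s).1 (by
      rw [Real.dist_eq, abs_lt]
      have := (hL s).2; have := (hR s).2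
      constructor <;> linarith)
    have hab : dist (g (gapL S s)) (g (gapR S s)) < δ := by
      have := dist_triangle_right (g (gapL S s)) (g (gapR S s)) (g t)
      have := ha.trans_le (min_le_left _ _)
      have := hb.trans_le (min_le_left _ _)
      linarith
    have h3 := hδp _ _ hab ((s - gapL S s) / (gapR S s - gapL S s))
    have h4 := dist_triangle (G s) (g (gapL S s)) (g t)
    have := ha.trans_le (min_le_right _ _)
    rw [hGS ht]
    have h5 : dist (G s) (g (gapL S s)) < ε / 2 := h3
    linarith
  rw [continuousAt_iff_continuous_left_right]
  constructor
  · by_cases hc : ∃ u ∈ S, u < t ∧ ∀ w ∈ S, u < w → w < t → False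
    · obtain ⟨u, hu, hut, hemp⟩ := hc
      have h3 := hgap u hu t ht hut hemp
      have h4 : Icc u t ∈ 𝓝[≤] t := Icc_mem_nhdsLE hut
      exact ((hcont u t).continuousWithinAt (s := Iic t) (x := t)).congr_of_eventuallyEq
        (h3.eventuallyEq_of_mem h4) (h3 ⟨hut.le, le_rfl⟩)
    · push Not at hc
      rw [Metric.continuousWithinAt_iff']
      intro ε hε
      obtain ⟨η, hη, h⟩ := hsmall ε hε
      obtain ⟨w, hw, hw1, hw2⟩ : ∃ w ∈ S, t - η < w ∧ w < t := by
        by_cases h6 : t - η < gapL S (t - η / 2)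
        · exact ⟨_, (hL _).1, h6, by have := (hL (t - η / 2)).2; linarith⟩
        · obtain ⟨w, hw, h7, h8, -⟩ := hc (gapL S (t - η / 2)) (hL _).1
            (by have := (hL (t - η / 2)).2; linarith)
          refine ⟨w, hw, ?_, h8⟩
          by_contra hcon
          have := le_gapL hw (show w ≤ t - η / 2 by linarith)
          linarith
      filter_upwards [Icc_mem_nhdsLE hw2] with s hs
      refine h s (hw1.trans_le (le_gapL hw hs.1)) ?_
      have := gapR_le ht hs.2
      linarith
  · by_cases hc : ∃ u ∈ S, t < u ∧ ∀ w ∈ S, t < w → w < u → False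
    · obtain ⟨u, hu, hut, hemp⟩ := hc
      have h3 := hgap t ht u hu hut hemp
      have h4 : Icc t u ∈ 𝓝[≥] t := Icc_mem_nhdsGE hut
      exact ((hcont t u).continuousWithinAt (s := Ici t) (x := t)).congr_of_eventuallyEq
        (h3.eventuallyEq_of_mem h4) (h3 ⟨le_rfl, hut.le⟩)
    · push Not at hc
      rw [Metric.continuousWithinAt_iff']
      intro ε hε
      obtain ⟨η, hη, h⟩ := hsmall ε hε
      obtain ⟨w, hw, hw1, hw2⟩ : ∃ w ∈ S, w < t + η ∧ t < w := by
        by_cases h6 : gapR S (t + η / 2) < t + η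
        · exact ⟨_, (hR _).1, h6, by have := (hR (t + η / 2)).2; linarith⟩
        · obtain ⟨w, hw, h7, h8, -⟩ := hc (gapR S (t + η / 2)) (hR _).1
            (by have := (hR (t + η / 2)).2; linarith)
          refine ⟨w, hw, ?_, h7⟩
          by_contra hcon
          have := gapR_le hw (show t + η / 2 ≤ w by linarith)
          linarith
      filter_upwards [Icc_mem_nhdsGE hw2] with s hs
      refine h s ?_ ((gapR_le hw hs.2).trans_lt hw1)
      have := le_gapL ht hs.1
      linarith

lemma ext_line {S : Set ℝ} (hS : IsCompact S) {g : ℝ → Y} (hg : ContinuousOn g S) :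
    ∃ G : ℝ → Y, Continuous G ∧ EqOn G g S := by
  rcases S.eq_empty_or_nonempty with rfl | hne
  · exact ⟨fun _ => g 0, continuous_const, fun x hx => absurd hx (notMem_empty x)⟩
  obtain ⟨a, ha, hamin⟩ := hS.exists_isLeast hne
  obtain ⟨b, hb, hbmax⟩ := hS.exists_isGreatest hne
  set c : ℝ → ℝ := fun t => max a (min t b) with hc
  have hcc : Continuous c := by fun_prop
  have hab : a ≤ b := hamin hb
  have hcS : EqOn c id S := fun t ht => by
    simp only [hc, id, min_eq_left (hbmax ht), max_eq_right (hamin ht)]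
  have hmaps : MapsTo c (S ∪ (Iic a ∪ Ici b)) S := by
    rintro t (ht | ht | ht)
    · rw [hcS ht]; exact ht
    · rw [mem_Iic] at ht
      simp only [hc, min_eq_left (ht.trans hab), max_eq_left ht]; exact ha
    · rw [mem_Ici] at ht
      simp only [hc, min_eq_right ht, max_eq_right hab]; exact hb
  obtain ⟨G, hG, hGS⟩ := ext_line_of_unbounded (S := S ∪ (Iic a ∪ Ici b)) (g := g ∘ c)
    (hS.isClosed.union (isClosed_Iic.union isClosed_Ici))
    (fun t => ⟨min t a, Or.inr (Or.inl (mem_Iic.2 (min_le_right _ _))), mem_Iic.2 (min_le_left _ _)⟩)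
    (fun t => ⟨max t b, Or.inr (Or.inr (mem_Ici.2 (le_max_right _ _))), mem_Ici.2 (le_max_left _ _)⟩)
    (hg.comp hcc.continuousOn hmaps)
  refine ⟨G, hG, fun t ht => ?_⟩
  rw [hGS (Or.inl ht)]
  simp only [Function.comp, hcS ht, id]

end ExtLine

/-- A compact metrizable space maps to the line so that points with the same image lie in the same
component. The map sums up, with weights `3⁻ⁿ`, indicators of clopen sets. -/
lemma exists_real_components (M : Type*) [MetricSpace M] [CompactSpace M] :
    ∃ φ : M → ℝ, Continuous φ ∧ ∀ x y, φ x = φ y → connectedComponent x = connectedComponent y := by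
  classical
  rcases isEmpty_or_nonempty M with hM | hM
  · exact ⟨fun _ => 0, continuous_const, fun x => (hM.false x).elim⟩
  have : Countable (TopologicalSpace.Clopens M) := by
    have h : ∀ s : TopologicalSpace.Clopens M,
        ∃ t : Finset (TopologicalSpace.countableBasis M), s.1 = (SetLike.coe t).sUnion := fun s =>
      eq_sUnion_finset_of_isTopologicalBasis_of_isCompact_open _
        (TopologicalSpace.isBasis_countableBasis M) s.1 s.2.1.isCompact s.2.2
    choose t ht using h
    refine Function.Injective.countable (f := t) fun s s' hss => ?_
    ext1
    change s.carrier = s'.carrier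
    rw [ht s, ht s', hss]
  obtain ⟨U, hU⟩ := exists_surjective_nat (TopologicalSpace.Clopens M)
  let b : M → ℕ → Bool := fun x n => decide (x ∈ U n)
  have hb : ∀ n, IsLocallyConstant fun x => b x n := by
    intro n
    rw [IsLocallyConstant.iff_eventually_eq]
    intro x
    by_cases hx : x ∈ U n
    · have h1 : ∀ᶠ y in 𝓝 x, y ∈ U n := (U n).isClopen.isOpen.mem_nhds hx
      filter_upwards [h1] with y hy
      simp [b, hx, hy]
    · have h1 : ∀ᶠ y in 𝓝 x, y ∈ (U n : Set M)ᶜ := (U n).isClopen.compl.isOpen.mem_nhds hx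
      filter_upwards [h1] with y hy
      have hy2 : y ∉ U n := hy
      simp [b, hx, hy2]
  refine ⟨fun x => Cardinal.cantorFunction (1 / 3) (b x), ?_, fun x y hxy => ?_⟩
  · unfold Cardinal.cantorFunction
    refine continuous_tsum (u := fun n => (1 / 3 : ℝ) ^ n) (fun n => ?_)
      (summable_geometric_of_lt_one (by norm_num) (by norm_num)) (fun n x => ?_)
    · exact ((hb n).comp fun v : Bool => cond v ((1 / 3 : ℝ) ^ n) 0).continuous
    · unfold Cardinal.cantorFunctionAux
      cases b x n <;> simp
  · have h := Cardinal.cantorFunction_injective (by norm_num) (by norm_num) hxy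
    have hmem : ∀ s : Set M, IsClopen s → (x ∈ s ↔ y ∈ s) := by
      intro s hs
      obtain ⟨n, hn⟩ := hU ⟨s, hs⟩
      have h2 := congrFun h n
      simp only [b, hn, decide_eq_decide] at h2
      exact h2
    have : y ∈ connectedComponent x := by
      rw [connectedComponent_eq_iInter_isClopen, mem_iInter]
      exact fun s => (hmem s.1 s.2.1).1 s.2.2
    exact connectedComponent_eq this

/-- A map on a closed set with values in a Peano continuum which is constant on components extends
to the whole space. -/
theorem exists_extension_of_const_on_components {X : Type*} [MetricSpace X] [CompactSpace X]
    {M : Set X} (hM : IsClosed M) {Y : Type*} [MetricSpace Y] [CompactSpace Y]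
    [LocallyConnectedSpace Y] [PathConnectedSpace Y] {f : M → Y} (hf : Continuous f)
    (hfc : ∀ x y, connectedComponent x = connectedComponent y → f x = f y) :
    ∃ F : X → Y, Continuous F ∧ ∀ x : M, F x = f x := by
  have : CompactSpace M := isCompact_iff_compactSpace.1 hM.isCompact
  obtain ⟨φ, hφ, hφc⟩ := exists_real_components M
  obtain ⟨y0⟩ := (inferInstance : Nonempty Y)
  obtain ⟨g, hg⟩ : ∃ g : ℝ → Y, ∀ x, g (φ x) = f x := by
    refine ⟨Function.extend φ f fun _ => y0, fun x => ?_⟩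
    have : Function.FactorsThrough f φ := fun x y h => hfc x y (hφc x y h)
    exact this.extend_apply _ x
  have hgc : ContinuousOn g (range φ) := by
    rw [continuousOn_iff_continuous_domRestrict]
    have hq : IsQuotientMap (rangeFactorization φ) :=
      (hφ.subtype_mk _).isClosedMap.isQuotientMap (hφ.subtype_mk _) rangeFactorization_surjective
    rw [hq.continuous_iff]
    convert hf using 1
    ext x
    exact hg x
  obtain ⟨G, hG, hGS⟩ := ext_line (isCompact_range hφ) hgc
  obtain ⟨Φ, hΦ⟩ := ContinuousMap.exists_restrict_eq hM (⟨φ, hφ⟩ : C(M, ℝ))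
  refine ⟨G ∘ Φ, hG.comp Φ.continuous, fun x => ?_⟩
  have h1 : Φ x = φ x := congrArg (fun h : C(M, ℝ) => h x) hΦ
  rw [Function.comp, h1, hGS ⟨x, rfl⟩, hg]

/-! ### A ray winding down to a continuum -/

/-- `η` parametrises on `(0, ∞)`, by an open embedding, the complement of the closed set `L`;
it starts at a point of `L`, and its far ends accumulate at every point of `L`. The values of `η` at
negative reals are irrelevant. -/
structure Tail {X : Type*} [TopologicalSpace X] (L : Set X) (η : ℝ → X) : Prop where
  closedL : IsClosed L
  cont : Continuous η
  zero : η 0 ∈ L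
  inj : InjOn η (Ici 0)
  opn : ∀ U ⊆ Ioi (0:ℝ), IsOpen U → IsOpen (η '' U)
  notMem : ∀ t > 0, η t ∉ L
  cover : ∀ x ∉ L, ∃ t > 0, η t = x
  dense : ∀ x ∈ L, ∀ c, x ∈ closure (η '' Ioi c)

namespace Tail

variable {X : Type*} [MetricSpace X] [CompactSpace X] {L : Set X} {η : ℝ → X}

lemma mem_iff (h : Tail L η) {t c : ℝ} (ht : 0 < t) : η t ∈ L ∪ η '' Icc 0 c ↔ t ≤ c := by
  constructor
  · rintro (hl | ⟨s, hs, e⟩)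
    · exact absurd hl (h.notMem t ht)
    · rw [← h.inj hs.1 ht.le e]; exact hs.2
  · intro htc
    exact Or.inr ⟨t, ⟨ht.le, htc⟩, rfl⟩

lemma mono (c d : ℝ) (hcd : c ≤ d) : L ∪ η '' Icc 0 c ⊆ L ∪ η '' Icc 0 d :=
  union_subset_union_right _ (image_mono (Icc_subset_Icc_right hcd))

lemma exists_of_notMem (h : Tail L η) {x : X} {c : ℝ} (hx : x ∉ L ∪ η '' Icc 0 c) :
    ∃ t, c < t ∧ 0 < t ∧ η t = x := by
  obtain ⟨t, ht, rfl⟩ := h.cover x (fun hl => hx (Or.inl hl))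
  exact ⟨t, not_le.1 fun hc => hx ((h.mem_iff ht).2 hc), ht, rfl⟩

/-- A connected set meeting a segment of the ray but missing its end points stays inside. -/
lemma separation (h : Tail L η) {S : Set X} (hS : IsPreconnected S) {a b s : ℝ} (ha : 0 ≤ a)
    (haS : η a ∉ S) (hbS : η b ∉ S) (hs : s ∈ Ioo a b) (hsS : η s ∈ S) : S ⊆ η '' Ioo a b := by
  have hU : IsOpen (η '' Ioo a b) :=
    h.opn _ (fun t ht => ha.trans_lt ht.1) isOpen_Ioo
  have hV : IsOpen (η '' Icc a b)ᶜ := (isCompact_Icc.image h.cont).isClosed.isOpen_compl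
  refine hS.subset_left_of_subset_union hU hV ?_ ?_ ⟨_, hsS, s, hs, rfl⟩
  · exact disjoint_compl_right.mono_left (image_mono Ioo_subset_Icc_self)
  · intro x hx
    by_cases hx' : x ∈ η '' Icc a b
    · left
      obtain ⟨t, ht, rfl⟩ := hx'
      refine ⟨t, ⟨lt_of_le_of_ne ht.1 ?_, lt_of_le_of_ne ht.2 ?_⟩, rfl⟩
      · rintro rfl; exact haS hx
      · rintro rfl; exact hbS hx
    · exact Or.inr hx'

lemma isClosed_far (h : Tail L η) {σ : ℝ} (hσ : 0 < σ) : IsClosed (L ∪ η '' Ici σ) := by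
  have : L ∪ η '' Ici σ = (η '' Ioo 0 σ)ᶜ := by
    ext x
    constructor
    · rintro hx ⟨t, ht, rfl⟩
      rcases hx with hx | ⟨s, hs, e⟩
      · exact h.notMem t ht.1 hx
      · have := h.inj (hσ.le.trans hs) ht.1.le e
        rw [this] at hs
        exact absurd ht.2 (not_lt.2 hs)
    · intro hx
      by_cases hl : x ∈ L
      · exact Or.inl hl
      · obtain ⟨t, ht, rfl⟩ := h.cover x hl
        right
        exact ⟨t, not_lt.1 fun hc => hx ⟨t, ⟨ht, hc⟩, rfl⟩, rfl⟩
  rw [this]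
  exact (h.opn _ (fun t ht => ht.1) isOpen_Ioo).isClosed_compl

lemma isClosed_near (h : Tail L η) (c : ℝ) : IsClosed (L ∪ η '' Icc 0 c) :=
  h.closedL.union (isCompact_Icc.image h.cont).isClosed

/-- A continuous image of a compact locally connected space cannot run off along the ray: far
out the ray comes close to two distinct points of `L` again and again, so small connected
sets are trapped in bounded segments. -/
lemma bounded (h : Tail L η) (hL : L.Nontrivial) {Q : Type*} [TopologicalSpace Q] [CompactSpace Q]
    [LocallyConnectedSpace Q] {φ : Q → X} (hφ : Continuous φ) :
    ∃ c, 0 ≤ c ∧ ∀ q, φ q ∈ L ∪ η '' Icc 0 c := by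
  by_contra! hcon
  let A : ℕ → Set Q := fun n => {q | ∃ t, (n:ℝ) < t ∧ 0 < t ∧ η t = φ q}
  have hA : ∀ n, (A n).Nonempty := by
    intro n
    obtain ⟨q, hq⟩ := hcon n (Nat.cast_nonneg n)
    exact ⟨q, h.exists_of_notMem hq⟩
  obtain ⟨q, hq⟩ := IsCompact.nonempty_iInter_of_sequence_nonempty_isCompact_isClosed
    (fun n => closure (A n))
    (fun n => closure_mono fun q ⟨t, h1, h2⟩ => ⟨t, lt_trans (by push_cast; linarith) h1, h2⟩)
    (fun n => (hA n).closure) isClosed_closure.isCompact (fun n => isClosed_closure)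
  rw [mem_iInter] at hq
  obtain ⟨l, hl, hla⟩ := hL.exists_ne (φ q)
  obtain ⟨V, W, hV, hW, hqV, hlW, hVW⟩ := t2_separation hla.symm
  obtain ⟨N, hNV, hN, hNc, hqN⟩ := exists_conn_nhd (hV.preimage hφ) hqV
  have near : ∀ c, ∃ t, c < t ∧ η t ∈ W := by
    intro c
    obtain ⟨_, hx, t, ht, rfl⟩ := mem_closure_iff.1 (h.dense l hl c) W hW hlW
    exact ⟨t, ht, hx⟩
  have far : ∀ c, ∃ q' ∈ N, ∃ t, c < t ∧ 0 < t ∧ η t = φ q' := by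
    intro c
    obtain ⟨n, hn⟩ := exists_nat_gt c
    obtain ⟨q', hq', t, ht⟩ := mem_closure_iff.1 (hq n) N hN hqN
    exact ⟨q', hq', t, hn.trans ht.1, ht.2⟩
  have out : ∀ t, η t ∈ W → η t ∉ φ '' N := by
    rintro t ht ⟨x, hx, e⟩
    exact disjoint_left.1 hVW (hNV hx) (e ▸ ht)
  obtain ⟨a, ha, haW⟩ := near 0
  obtain ⟨q1, hq1, s, has, -, hs⟩ := far a
  obtain ⟨b, hb, hbW⟩ := near s
  have hsub := h.separation (hNc.image φ hφ.continuousOn) ha.le (out a haW) (out b hbW) ⟨has, hb⟩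
    ⟨q1, hq1, hs.symm⟩
  obtain ⟨q2, hq2, t, hbt, ht0, ht⟩ := far b
  obtain ⟨u, hu, e⟩ := hsub (mem_image_of_mem φ hq2)
  have := h.inj (ha.le.trans hu.1.le) ht0.le (e.trans ht.symm)
  linarith [hu.2]

/-- A continuous self-map either preserves `L` or has bounded range. -/
lemma maps_or_bounded (h : Tail L η) (hL : L.Nontrivial) (hlc : LocallyConnectedSpace L)
    {f : X → X} (hf : Continuous f) :
    MapsTo f L L ∨ ∃ c, 0 ≤ c ∧ ∀ x, f x ∈ L ∪ η '' Icc 0 c := by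
  have : CompactSpace L := isCompact_iff_compactSpace.1 h.closedL.isCompact
  by_contra! hcon
  obtain ⟨hcon, hunb⟩ := hcon
  obtain ⟨y, hyL, hy⟩ : ∃ y ∈ L, f y ∉ L := by
    by_contra! hc
    exact hcon hc
  obtain ⟨c0, hc0, hL0⟩ := h.bounded hL (hf.comp (continuous_subtype_val (p := (· ∈ L))))
  obtain ⟨ty, hty, hfy⟩ := h.cover _ hy
  have htyc : ty ≤ c0 := by
    rw [← h.mem_iff hty, hfy]; exact hL0 ⟨y, hyL⟩
  obtain ⟨c1, hc1⟩ : ∃ c1, c0 < c1 := exists_gt c0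
  have bd : ∀ a b : ℝ, ∃ c, 0 ≤ c ∧ ∀ t ∈ Icc a b, f (η t) ∈ L ∪ η '' Icc 0 c := by
    intro a b
    rcases le_or_gt a b with hab | hab
    · have : LocallyConnectedSpace (Icc a b) :=
        have := (convex_Icc a b).locallyPathConnectedSpace; inferInstance
      obtain ⟨c, hc, hcb⟩ := h.bounded hL
        (hf.comp (h.cont.comp (continuous_subtype_val (p := (· ∈ Icc a b)))))
      exact ⟨c, hc, fun t ht => hcb ⟨t, ht⟩⟩
    · exact ⟨0, le_rfl, fun t ht => absurd (ht.1.trans ht.2) (not_le.2 hab)⟩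
  have key : ∀ σ > 0, ∃ s, σ ≤ s ∧ f (η s) = η c1 := by
    intro σ hσ
    by_contra! hno
    obtain ⟨s, hs, hfs⟩ : ∃ s, σ < s ∧ f (η s) ∈ η '' Ioo 0 c1 := by
      obtain ⟨_, hx, s, hs, rfl⟩ := mem_closure_iff.1 (h.dense y hyL σ) (f ⁻¹' (η '' Ioo 0 c1))
        ((h.opn _ (fun t ht => ht.1) isOpen_Ioo).preimage hf)
        ⟨ty, ⟨hty, htyc.trans_lt hc1⟩, hfy⟩
      exact ⟨s, hs, hx⟩
    obtain ⟨c2, hc2, hb2⟩ := bd 0 σ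
    obtain ⟨x, hx⟩ := hunb (max c1 c2) (le_max_of_le_right hc2)
    obtain ⟨t, ht, ht0, hft⟩ := h.exists_of_notMem hx
    obtain ⟨s', hs'σ, hs'0, rfl⟩ : ∃ s', σ < s' ∧ 0 < s' ∧ η s' = x := by
      apply h.exists_of_notMem
      rintro (hxL | ⟨u, hu, rfl⟩)
      · exact hx (mono _ _ (hc1.le.trans (le_max_left _ _)) (hL0 ⟨x, hxL⟩))
      · exact hx (mono _ _ (le_max_right _ _) (hb2 u hu))
    obtain ⟨c3, hc3, hb3⟩ := bd (min s s') (max s s')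
    have hsm : s ∈ Icc (min s s') (max s s') := ⟨min_le_left _ _, le_max_left _ _⟩
    have hsm' : s' ∈ Icc (min s s') (max s s') := ⟨min_le_right _ _, le_max_right _ _⟩
    have htc3 : t ≤ c3 := by
      rw [← h.mem_iff ht0, hft]; exact hb3 s' hsm'
    have hsub := h.separation (S := (fun u => f (η u)) '' Icc (min s s') (max s s'))
      (isPreconnected_Icc.image _ (hf.comp h.cont).continuousOn) (a := c1) (b := c3 + 1) (s := t)
      (hc0.trans hc1.le) ?_ ?_ ⟨(le_max_left _ _).trans_lt ht, by linarith⟩ ⟨s', hsm', hft.symm⟩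
    · obtain ⟨u, hu, e⟩ := hsub ⟨s, hsm, rfl⟩
      obtain ⟨v, hv, e'⟩ := hfs
      have := h.inj ((hc0.trans hc1.le).trans hu.1.le) hv.1.le (e.trans e'.symm)
      linarith [hu.1, hv.2]
    · rintro ⟨u, hu, e⟩
      exact hno u ((le_min hs.le hs'σ.le).trans hu.1) e
    · rintro ⟨u, hu, e⟩
      have := hb3 u hu
      simp only at e
      rw [e, h.mem_iff (by linarith)] at this
      linarith
  obtain ⟨x, hx⟩ := IsCompact.nonempty_iInter_of_sequence_nonempty_isCompact_isClosed
    (fun n : ℕ => f ⁻¹' {η c1} ∩ (L ∪ η '' Ici ((n:ℝ) + 1)))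
    (fun n => inter_subset_inter_right _ (union_subset_union_right _
      (image_mono (Ici_subset_Ici.2 (by push_cast; linarith)))))
    (fun n => by
      obtain ⟨s, hs, e⟩ := key (n + 1) (by positivity)
      exact ⟨η s, e, Or.inr ⟨s, hs, rfl⟩⟩)
    ((isClosed_singleton.preimage hf).inter (h.isClosed_far (by positivity))).isCompact
    (fun n => (isClosed_singleton.preimage hf).inter (h.isClosed_far (by positivity)))
  rw [mem_iInter] at hx
  have hfx : f x = η c1 := (hx 0).1
  by_cases hxL : x ∈ L
  · have := hL0 ⟨x, hxL⟩
    simp only [Function.comp] at this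
    rw [hfx, h.mem_iff (hc0.trans_lt hc1)] at this
    linarith
  · obtain ⟨t, ht, rfl⟩ := h.cover x hxL
    obtain ⟨n, hn⟩ := exists_nat_gt t
    rcases (hx n).2 with hl | ⟨s, hs, e⟩
    · exact hxL hl
    · have hs' : (n:ℝ) + 1 ≤ s := hs
      have := h.inj (mem_Ici.2 (by linarith : (0:ℝ) ≤ s)) ht.le e
      linarith

lemma exists_bound_of_disjoint (h : Tail L η) {Q : Set X} (hQ : IsCompact Q) (hd : Disjoint Q L) :
    ∃ σ > 0, Q ⊆ η '' Ioo 0 σ := by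
  obtain ⟨n, hn⟩ := hQ.elim_directed_cover (fun n : ℕ => η '' Ioo (0:ℝ) (n + 1))
    (fun n => h.opn _ (fun t ht => ht.1) isOpen_Ioo) (by
      intro x hx
      obtain ⟨t, ht, rfl⟩ := h.cover x (disjoint_left.1 hd hx)
      obtain ⟨n, hn⟩ := exists_nat_gt t
      exact mem_iUnion.2 ⟨n, t, ⟨ht, by linarith⟩, rfl⟩)
    (directed_of_isDirected_le (fun m n hmn => image_mono (Ioo_subset_Ioo_right (by
      have : (m:ℝ) ≤ n := by exact_mod_cast hmn
      linarith))))
  exact ⟨n + 1, by positivity, hn⟩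

/-- Minimal sets stay away from the far end of the ray. -/
lemma minimal_bounded (h : Tail L η) (hL : L.Nontrivial) (hlc : LocallyConnectedSpace L)
    {M : Set X} (hM : M ∈ MSpace X) : ∃ c, 0 ≤ c ∧ M ⊆ L ∪ η '' Icc 0 c := by
  obtain ⟨hMc, f, hf, hne, hfM, hmin⟩ := hM
  rcases h.maps_or_bounded hL hlc hf with hmap | ⟨c, hc, hb⟩
  · rcases (M ∩ L).eq_empty_or_nonempty with he | hn
    · obtain ⟨σ, hσ, hM⟩ := h.exists_bound_of_disjoint hMc (disjoint_iff_inter_eq_empty.2 he)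
      exact ⟨σ, hσ.le, hM.trans ((image_mono Ioo_subset_Icc_self).trans subset_union_right)⟩
    · have := hmin (M ∩ L) inter_subset_left hn (hMc.isClosed.inter h.closedL) (by
        rintro _ ⟨x, hx, rfl⟩
        exact ⟨hfM ▸ mem_image_of_mem f hx.1, hmap hx.2⟩)
      exact ⟨0, le_rfl, (this ▸ inter_subset_right : M ⊆ L).trans subset_union_left⟩
  · refine ⟨c, hc, ?_⟩
    rw [← hfM]
    rintro _ ⟨x, -, rfl⟩
    exact hb x

end Tail

namespace Tail

section
variable {X : Type*} [MetricSpace X] [CompactSpace X] {L : Set X} {η : ℝ → X}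

lemma freePt (h : Tail L η) {t : ℝ} (ht : 0 < t) : FreePt (η t) := by
  have hi : InjOn η (Ioi 0) := h.inj.mono Ioi_subset_Ici_self
  refine ⟨η '' Ioi 0, h.opn _ subset_rfl isOpen_Ioi, ⟨t, ht, rfl⟩, Function.invFunOn η (Ioi 0),
    ?_, fun x hx y hy e => ?_⟩
  · rintro _ ⟨s, hs, rfl⟩ W hW
    rw [hi.leftInvOn_invFunOn hs] at hW
    obtain ⟨O, hOW, hO, hsO⟩ := mem_nhds_iff.1 hW
    refine mem_nhdsWithin_of_mem_nhds (Filter.mem_of_superset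
      ((h.opn (O ∩ Ioi 0) inter_subset_right (hO.inter isOpen_Ioi)).mem_nhds ⟨s, ⟨hsO, hs⟩, rfl⟩) ?_)
    rintro _ ⟨u, hu, rfl⟩
    rw [mem_preimage, hi.leftInvOn_invFunOn hu.2]
    exact hOW hu.1
  · rw [← Function.invFunOn_eq hx, ← Function.invFunOn_eq hy, e]

/-- All circles lie in `L`: a circle containing a point of the open ray would contain the
whole ray, which is impossible by boundedness. -/
lemma circle_subset (h : Tail L η) (hL : L.Nontrivial) {S : Set X} (hS : IsCircleSet S) :
    S ⊆ L := by
  intro x hx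
  by_contra hxL
  obtain ⟨t, ht, rfl⟩ := h.cover x hxL
  have hsub : Ioi (0:ℝ) ⊆ Ioi 0 ∩ η ⁻¹' S := by
    refine isPreconnected_Ioi.subset_left_of_subset_union (v := η ⁻¹' Sᶜ) ?_
      (hS.isCompact.isClosed.isOpen_compl.preimage h.cont) ?_ ?_ ⟨t, ht, ht, hx⟩
    · rw [isOpen_iff_mem_nhds]
      rintro s ⟨hs, hsS⟩
      exact Filter.inter_mem (isOpen_Ioi.mem_nhds hs)
        (h.cont.continuousAt (hS.mem_nhds_of_freePt hsS (h.freePt hs)))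
    · exact disjoint_left.2 fun s hs hs' => hs' hs.2
    · intro s hs
      by_cases hsS : η s ∈ S
      · exact Or.inl ⟨hs, hsS⟩
      · exact Or.inr hsS
  obtain ⟨e, he, -, hr⟩ := isCircleSet_iff.1 hS
  have : LocallyPathConnectedSpace UnitAddCircle :=
    (QuotientAddGroup.isOpenQuotientMap_mk.isQuotientMap).locallyPathConnectedSpace
  obtain ⟨c, hc, hb⟩ := h.bounded hL he
  have hcp : (0:ℝ) < c + 1 := by linarith
  have h1 : η (c + 1) ∈ S := (hsub hcp).2
  rw [← hr] at h1
  obtain ⟨q, hq⟩ := h1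
  have := hb q
  rw [hq, h.mem_iff hcp] at this
  linarith

lemma isConnected_near (h : Tail L η) (hLc : IsConnected L) {c : ℝ} (hc : 0 ≤ c) :
    IsConnected (L ∪ η '' Icc 0 c) := by
  refine IsConnected.union ⟨η 0, h.zero, 0, ⟨le_rfl, hc⟩, rfl⟩ hLc ?_
  exact (isConnected_Icc hc).image _ h.cont.continuousOn

lemma locConn_near (h : Tail L η) (hlc : LocallyConnectedSpace L) (c : ℝ) :
    LocallyConnectedSpace ↥(L ∪ η '' Icc 0 c) := by
  have : CompactSpace L := isCompact_iff_compactSpace.1 h.closedL.isCompact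
  have : LocallyPathConnectedSpace L := locPath_of_peano L
  have : LocallyPathConnectedSpace (Icc 0 c) := (convex_Icc 0 c).locallyPathConnectedSpace
  let F : L ⊕ Icc 0 c → ↥(L ∪ η '' Icc 0 c) := Sum.elim (fun x => ⟨x.1, Or.inl x.2⟩)
    fun t => ⟨η t.1, Or.inr ⟨t.1, t.2, rfl⟩⟩
  have hF : Continuous F := by
    refine Continuous.sumElim ?_ ?_
    · exact continuous_subtype_val.subtype_mk _
    · exact (h.cont.comp continuous_subtype_val).subtype_mk _
  have hs : Function.Surjective F := by
    rintro ⟨x, hx | ⟨t, ht, rfl⟩⟩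
    · exact ⟨Sum.inl ⟨x, hx⟩, rfl⟩
    · exact ⟨Sum.inr ⟨t, ht⟩, rfl⟩
  have := (hF.isClosedMap.isQuotientMap hF hs).locallyPathConnectedSpace
  infer_instance

lemma finite_circles_near (h : Tail L η) (hL : L.Nontrivial)
    (hfin : {C : Set X | C ⊆ L ∧ IsCircleSet C}.Finite) (c : ℝ) :
    {C : Set ↥(L ∪ η '' Icc 0 c) | IsCircleSet C}.Finite := by
  refine finite_circles_of_injective Subtype.val_injective hfin fun C hC => ?_
  have := hC.image continuous_subtype_val.continuousOn Subtype.val_injective.injOn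
  exact ⟨h.circle_subset hL this, this⟩

/-- Maps of a bounded closed set which are constant on components extend to self-maps of
the space. -/
lemma exists_extension (h : Tail L η) (hLc : IsConnected L) (hlc : LocallyConnectedSpace L)
    {M : Set X} (hM : IsClosed M) {c : ℝ} (hc : 0 ≤ c) (hMc : M ⊆ L ∪ η '' Icc 0 c) {g : M → M}
    (hg : Continuous g) (hgc : ∀ x y, connectedComponent x = connectedComponent y → g x = g y) :
    ∃ F : X → X, Continuous F ∧ ∀ x : M, F x = g x := by
  have : CompactSpace ↥(L ∪ η '' Icc 0 c) :=
    isCompact_iff_compactSpace.1 (h.isClosed_near c).isCompact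
  have := h.locConn_near hlc c
  have := locPath_of_peano ↥(L ∪ η '' Icc 0 c)
  have : ConnectedSpace ↥(L ∪ η '' Icc 0 c) :=
    isConnected_iff_connectedSpace.1 (h.isConnected_near hLc hc)
  have : PathConnectedSpace ↥(L ∪ η '' Icc 0 c) := pathConnectedSpace_iff_connectedSpace.2 this
  obtain ⟨F, hF, hFg⟩ := exists_extension_of_const_on_components hM
    (f := fun x => (⟨(g x).1, hMc (g x).2⟩ : ↥(L ∪ η '' Icc 0 c)))
    ((continuous_subtype_val.comp hg).subtype_mk _)
    (fun x y hxy => by rw [hgc x y hxy])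
  exact ⟨fun x => (F x).1, continuous_subtype_val.comp hF, fun x => congrArg Subtype.val (hFg x)⟩

end

end Tail

lemma mspace_of_isMinMap {X : Type*} [TopologicalSpace X] [T2Space X] {M : Set X}
    (hM : IsCompact M) (hne : M.Nonempty) {g : M → M} (hg : Continuous g) (hm : IsMinMap g)
    {F : X → X} (hF : Continuous F) (hFg : ∀ x : M, F x = g x) : M ∈ MSpace X := by
  have : CompactSpace M := isCompact_iff_compactSpace.1 hM
  have : Nonempty M := hne.to_subtype
  refine ⟨hM, F, hF, hne, ?_, fun N hNM hN hNc hFN => ?_⟩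
  · ext y
    constructor
    · rintro ⟨x, hx, rfl⟩
      rw [hFg ⟨x, hx⟩]; exact (g ⟨x, hx⟩).2
    · intro hy
      obtain ⟨x, hx⟩ := hm.surjective hg ⟨y, hy⟩
      exact ⟨x, x.2, by rw [hFg, hx]⟩
  · have h1 := hm (Subtype.val ⁻¹' N) (by
      obtain ⟨x, hx⟩ := hN
      exact ⟨⟨x, hNM hx⟩, hx⟩) (hNc.preimage continuous_subtype_val) (fun x hx => by
        rw [mem_preimage, ← hFg]; exact hFN ⟨x, hx, rfl⟩)
    refine hNM.antisymm fun x hx => ?_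
    have : (⟨x, hx⟩ : M) ∈ Subtype.val ⁻¹' N := by rw [h1]; trivial
    exact this

lemma MinimalSystemOn.isMinMap {X : Type*} [TopologicalSpace X] {M : Set X} {f : X → X}
    (hm : MinimalSystemOn f M) (hMc : IsClosed M) (hf : MapsTo f M M) :
    IsMinMap (hf.restrict f M M) := by
  intro N hN hNc hinv
  have h1 := hm.2.2 (Subtype.val '' N) (by rintro _ ⟨x, -, rfl⟩; exact x.2) (hN.image _)
    (hMc.isClosedMap_subtype_val _ hNc) (by
      rintro _ ⟨_, ⟨x, hx, rfl⟩, rfl⟩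
      exact ⟨_, hinv x hx, rfl⟩)
  rw [eq_univ_iff_forall]
  intro x
  have : x.1 ∈ Subtype.val '' N := by rw [h1]; exact x.2
  obtain ⟨y, hy, e⟩ := this
  rwa [← Subtype.ext e]

namespace Tail
variable {X : Type*} [MetricSpace X] [CompactSpace X] {L : Set X} {η : ℝ → X}

lemma mspace_of_cantoroid (h : Tail L η) (hLc : IsConnected L) (hlc : LocallyConnectedSpace L)
    {M : Set X} (hM : IsCantoroid M) {c : ℝ} (hc : 0 ≤ c) (hMc : M ⊆ L ∪ η '' Icc 0 c) :
    M ∈ MSpace X := by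
  obtain ⟨hne, hMk, hni, hd⟩ := hM
  have : CompactSpace M := isCompact_iff_compactSpace.1 hMk
  have : Nonempty M := hne.to_subtype
  obtain ⟨g, hg, hgm, hgc⟩ := exists_minimal_of_cantoroid hni hd
  obtain ⟨F, hF, hFg⟩ := h.exists_extension hLc hlc hMk.isClosed hc hMc hg hgc
  exact mspace_of_isMinMap hMk hne hg hgm hF hFg

lemma exists_bound_of_finite (h : Tail L η) {M : Set X} (hM : M.Finite) :
    ∃ c, 0 ≤ c ∧ M ⊆ L ∪ η '' Icc 0 c := by
  induction M, hM using Set.Finite.induction_on with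
  | empty => exact ⟨0, le_rfl, empty_subset _⟩
  | @insert a s _ _ ih =>
    obtain ⟨c, hc, hs⟩ := ih
    by_cases ha : a ∈ L
    · exact ⟨c, hc, insert_subset (Or.inl ha) hs⟩
    · obtain ⟨t, ht, rfl⟩ := h.cover a ha
      exact ⟨max c t, le_max_of_le_left hc,
        insert_subset ((h.mem_iff ht).2 (le_max_right _ _)) (hs.trans (mono _ _ (le_max_left _ _)))⟩

/-- A finite set is a periodic orbit: permute it cyclically. -/
lemma mspace_of_finite (h : Tail L η) (hLc : IsConnected L) (hlc : LocallyConnectedSpace L)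
    {M : Set X} (hM : M.Finite) (hne : M.Nonempty) : M ∈ MSpace X := by
  obtain ⟨c, hc, hMc⟩ := h.exists_bound_of_finite hM
  have : Finite M := hM
  have : Nonempty M := hne.to_subtype
  have hcard : Nat.card M ≠ 0 := Nat.card_pos.ne'
  have : NeZero (Nat.card M) := ⟨hcard⟩
  have e : M ≃ ZMod (Nat.card M) := Nonempty.some
    ((Finite.card_eq (β := ZMod (Nat.card M))).1 (Nat.card_zmod _).symm)
  let g : M → M := fun x => e.symm (e x + 1)
  have hg : Continuous g := continuous_of_discreteTopology
  have hgm : IsMinMap g := by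
    rintro N ⟨x, hx⟩ - hinv
    have key : ∀ n : ℕ, e.symm (e x + n) ∈ N := by
      intro n
      induction n with
      | zero => rwa [Nat.cast_zero, add_zero, Equiv.symm_apply_apply]
      | succ n ih =>
        have := hinv _ ih
        simp only [g, Equiv.apply_symm_apply] at this
        rw [Nat.cast_succ, ← add_assoc]; exact this
    rw [eq_univ_iff_forall]
    intro y
    have := key (e y - e x).val
    rw [ZMod.natCast_zmod_val, add_sub_cancel, Equiv.symm_apply_apply] at this
    exact this
  obtain ⟨F, hF, hFg⟩ := h.exists_extension hLc hlc hM.isClosed hc hMc hg (fun x y hxy => by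
    have hx : y ∈ connectedComponent x := by rw [hxy]; exact mem_connectedComponent
    rw [connectedComponent_eq_singleton] at hx
    rw [mem_singleton_iff.1 hx])
  exact mspace_of_isMinMap hM.isCompact hne hg hgm hF hFg

lemma isArc (h : Tail L η) {c : ℝ} (hc : 0 < c) : IsArc (η '' Icc 0 c) := by
  have hc' : (0:ℝ) ≤ 1 := zero_le_one
  let F : Icc (0:ℝ) 1 → X := fun t => η (c * t)
  have hF : Continuous F := h.cont.comp (continuous_const.mul continuous_subtype_val)
  have hi : Function.Injective F := fun s t e =>
    Subtype.ext (mul_left_cancel₀ hc.ne'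
      (h.inj (mem_Ici.2 (mul_nonneg hc.le s.2.1)) (mul_nonneg hc.le t.2.1) e))
  have hr : range F = η '' Icc 0 c := by
    ext x
    constructor
    · rintro ⟨t, rfl⟩
      exact ⟨c * t, ⟨mul_nonneg hc.le t.2.1, by nlinarith [t.2.2]⟩, rfl⟩
    · rintro ⟨t, ht, rfl⟩
      refine ⟨⟨t / c, div_nonneg ht.1 hc.le, (div_le_one hc).2 ht.2⟩, ?_⟩
      simp only [F]
      rw [mul_div_cancel₀ _ hc.ne']
  have hemb : IsEmbedding F := (hF.isClosedEmbedding hi).isEmbedding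
  exact ⟨((hemb.toHomeomorph.trans (Homeomorph.setCongr hr))).symm⟩

lemma exists_bound_of_arc (h : Tail L η) (hL : L.Nontrivial) {A : Set X} (hA : IsArc A) :
    ∃ c, 0 ≤ c ∧ A ⊆ L ∪ η '' Icc 0 c := by
  obtain ⟨e⟩ := hA
  have := (convex_Icc (0:ℝ) 1).locallyPathConnectedSpace
  obtain ⟨c, hc, hb⟩ := h.bounded hL (continuous_subtype_val.comp e.symm.continuous)
  refine ⟨c, hc, fun x hx => ?_⟩
  have := hb (e ⟨x, hx⟩)
  simpa using this

end Tail

section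
variable {X : Type*} [MetricSpace X] [CompactSpace X] {L J : Set X} {r : X}

lemma tail_of_tendsto (hC : ClassC L J {r}) (hL : L.Nontrivial) (hrL : r ∈ L) (E : ℝ ≃ₜ J)
    (hE : Filter.Tendsto (fun s => (E s : X)) Filter.atBot (𝓝 r)) :
    ∃ η : ℝ → X, Tail L η ∧ η 0 = r ∧ η '' Ioi 0 = J := by
  classical
  let η : ℝ → X := fun t => if 0 < t then (E (Real.log t) : X) else r
  have hpos : ∀ t, 0 < t → η t = E (Real.log t) := fun t ht => if_pos ht
  have hneg : ∀ t, t ≤ 0 → η t = r := fun t ht => if_neg (not_lt.2 ht)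
  have hJL : ∀ x ∈ J, x ∉ L := fun x hx hl => disjoint_left.1 hC.disjLJ hl hx
  have hcont : Continuous η := by
    rw [continuous_iff_continuousAt]
    intro t
    rcases lt_trichotomy t 0 with ht | rfl | ht
    · have : η =ᶠ[𝓝 t] fun _ => r :=
        (eventually_lt_nhds ht).mono fun s hs => hneg s hs.le
      exact (continuousAt_const).congr this.symm
    · rw [continuousAt_iff_continuous_left'_right']
      have h0 : η 0 = r := hneg 0 le_rfl
      constructor
      · have : η =ᶠ[𝓝[<] 0] fun _ => r :=
          eventually_mem_nhdsWithin.mono fun s hs => hneg s (le_of_lt hs)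
        rw [ContinuousWithinAt, h0]
        exact tendsto_const_nhds.congr' this.symm
      · have : η =ᶠ[𝓝[>] 0] fun s => (E (Real.log s) : X) :=
          eventually_mem_nhdsWithin.mono fun s hs => hpos s hs
        rw [ContinuousWithinAt, h0]
        exact (hE.comp Real.tendsto_log_nhdsGT_zero).congr' this.symm
    · have : η =ᶠ[𝓝 t] fun s => (E (Real.log s) : X) :=
        (eventually_gt_nhds ht).mono fun s hs => hpos s hs
      refine ContinuousAt.congr ?_ this.symm
      exact (continuous_subtype_val.comp E.continuous).continuousAt.comp
        (Real.continuousAt_log ht.ne')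
  have himg : ∀ U ⊆ Ioi (0:ℝ), η '' U = (fun s => (E s : X)) '' (Real.exp ⁻¹' U) := by
    intro U hU
    ext x
    constructor
    · rintro ⟨t, ht, rfl⟩
      refine ⟨Real.log t, ?_, (hpos t (hU ht)).symm⟩
      rw [mem_preimage, Real.exp_log (hU ht)]; exact ht
    · rintro ⟨s, hs, rfl⟩
      refine ⟨Real.exp s, hs, ?_⟩
      rw [hpos _ (Real.exp_pos s), Real.log_exp]
  have hJ : η '' Ioi 0 = J := by
    rw [himg _ subset_rfl]
    ext x
    constructor
    · rintro ⟨s, -, rfl⟩; exact (E s).2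
    · intro hx
      exact ⟨E.symm ⟨x, hx⟩, Real.exp_pos _, by simp⟩
  have hmemJ : ∀ t, 0 < t → η t ∈ J := fun t ht => hJ ▸ mem_image_of_mem η ht
  have h0 : η 0 = r := hneg 0 le_rfl
  have hdense' : ∀ x ∈ L, x ≠ r → ∀ c, x ∈ closure (η '' Ioi c) := by
    intro x hx hxr c
    have h1 : x ∈ closure J := hC.denseJ x
    have hJ2 : J ⊆ η '' Icc 0 (max c 1) ∪ η '' Ioi c := by
      rw [← hJ, ← image_union]
      apply image_mono
      intro t ht
      rcases le_or_gt t (max c 1) with h | h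
      · exact Or.inl ⟨le_of_lt ht, h⟩
      · exact Or.inr ((le_max_left _ _).trans_lt h)
    have h2 := closure_mono hJ2 h1
    rw [closure_union, (isCompact_Icc.image hcont).isClosed.closure_eq] at h2
    rcases h2 with ⟨t, ht, rfl⟩ | h2
    · rcases ht.1.eq_or_lt with h | h
      · subst h; exact absurd h0 hxr
      · exact absurd hx (hJL _ (hmemJ t h))
    · exact h2
  have hrcl : r ∈ closure (L \ {r}) := by
    by_contra hr
    obtain ⟨l, hl, hlr⟩ := hL.exists_ne r
    obtain ⟨y, hyL, hy1, hy2⟩ := hC.connL.isPreconnected (closure (L \ {r}))ᶜ {r}ᶜ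
      isClosed_closure.isOpen_compl isOpen_compl_singleton
      (fun x _ => by
        by_cases hx : x = r
        · left; rw [hx]; exact hr
        · exact Or.inr hx) ⟨r, hrL, hr⟩ ⟨l, hl, hlr⟩
    exact hy1 (subset_closure ⟨hyL, hy2⟩)
  refine ⟨η, ⟨hC.compactL.isClosed, hcont, h0 ▸ hrL, ?_, ?_, ?_, ?_, ?_⟩, h0, hJ⟩
  · intro s hs t ht e
    rcases (mem_Ici.1 hs).eq_or_lt with rfl | hs'
    · rcases (mem_Ici.1 ht).eq_or_lt with h | ht'
      · exact h
      · exact absurd (h0 ▸ hrL : η 0 ∈ L) (e ▸ hJL _ (hmemJ t ht'))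
    · rcases (mem_Ici.1 ht).eq_or_lt with rfl | ht'
      · exact absurd (h0 ▸ hrL : η 0 ∈ L) (e ▸ hJL _ (hmemJ s hs'))
      · rw [hpos s hs', hpos t ht'] at e
        exact Real.log_injOn_pos hs' ht' (E.injective (Subtype.ext e))
  · intro U hU hUo
    rw [himg U hU]
    exact (hC.openJ.isOpenEmbedding_subtypeVal.comp E.isOpenEmbedding).isOpenMap _
      (hUo.preimage Real.continuous_exp)
  · exact fun t ht => hJL _ (hmemJ t ht)
  · intro x hx
    have hxJ : x ∈ J := by
      have : x ∈ L ∪ J ∪ {r} := by rw [hC.union_eq]; trivial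
      rcases this with (h | h) | h
      · exact absurd h hx
      · exact h
      · rw [mem_singleton_iff.1 h] at hx; exact absurd hrL hx
    rw [← hJ] at hxJ
    exact hxJ
  · intro x hx c
    by_cases hxr : x = r
    · rw [hxr]
      exact closure_minimal (fun y hy => hdense' y hy.1 hy.2 c) isClosed_closure hrcl
    · exact hdense' x hx hxr c

lemma tendsto_of_strictAnti {β : ℝ → ℝ} (hJ : r ∉ J) (E : ℝ ≃ₜ J) (hβ : Continuous β)
    (ha : StrictAnti β) (ht : Filter.Tendsto (fun u => (E (β u) : X)) Filter.atTop (𝓝 r)) :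
    Filter.Tendsto (fun s => (E s : X)) Filter.atBot (𝓝 r) := by
  have hbot : Filter.Tendsto β Filter.atTop Filter.atBot := by
    rcases tendsto_of_antitone ha.antitone with h | ⟨l, hl⟩
    · exact h
    · have h1 : Filter.Tendsto (fun u => (E (β u) : X)) Filter.atTop (𝓝 (E l)) :=
        ((continuous_subtype_val.comp E.continuous).tendsto l).comp hl
      exact absurd (tendsto_nhds_unique ht h1 ▸ (E l).2) hJ
  intro U hU
  obtain ⟨u0, hu0⟩ := Filter.mem_atTop_sets.1 (ht hU)
  refine Filter.mem_map.2 (Filter.mem_atBot_sets.2 ⟨β u0, fun s hs => ?_⟩)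
  obtain ⟨v, hv, hvu⟩ := ((hbot.eventually (Filter.eventually_le_atBot s)).and
    (Filter.eventually_ge_atTop u0)).exists
  obtain ⟨u, hu, rfl⟩ := intermediate_value_Icc' hvu hβ.continuousOn ⟨hv, hs⟩
  exact hu0 u hu.1

/-- If the right end of the continuum is a point `r` of `L`, the free interval is a ray issuing from
`r` and winding down to `L`. -/
theorem exists_tail (hC : ClassC L J {r}) (hL : L.Nontrivial) (hrL : r ∈ L) :
    ∃ η : ℝ → X, Tail L η ∧ η 0 = r ∧ η '' Ioi 0 = J := by
  have hrJ : r ∉ J := fun h => disjoint_left.1 hC.disjLJ hrL h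
  obtain ⟨E⟩ : Nonempty (ℝ ≃ₜ J) := by
    obtain ⟨e⟩ := hC.freeJ
    have a : ↥(Ioo (-1:ℝ) 1) ≃ₜ ↥(Ioo (0:ℝ) 1) :=
      (affineHomeomorph (1/2:ℝ) (1/2) (by norm_num)).subtype (fun x => by
        simp only [affineHomeomorph_apply, mem_Ioo]
        constructor
        · rintro ⟨h1, h2⟩; constructor <;> linarith
        · rintro ⟨h1, h2⟩; constructor <;> linarith)
    exact ⟨(orderIsoIooNegOneOne ℝ).toHomeomorph.trans (a.trans e.symm)⟩
  obtain ⟨JL, JR, hU, -, ⟨b⟩, -, -, hcR, hclR⟩ := hC.rays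
  have hJR : JR ⊆ J := hU ▸ subset_union_right
  have hlim : Filter.Tendsto (fun t : ℝ => (b.symm ⟨max t 0, mem_Ici.2 (le_max_right t 0)⟩ : X))
      Filter.atTop (𝓝 r) := by
    intro U hU
    obtain ⟨V, hVU, hV, hrV⟩ := mem_nhds_iff.1 hU
    have hK : IsCompact (({r} ∪ JR) \ V) := hcR.diff hV
    have hKJ : ({r} ∪ JR) \ V ⊆ JR := by
      rintro x ⟨hx | hx, hxV⟩
      · rw [mem_singleton_iff.1 hx] at hxV; exact absurd hrV hxV
      · exact hx
    have hK' : IsCompact ((fun x => (b x : ℝ)) '' ((↑) ⁻¹' (({r} ∪ JR) \ V) : Set JR)) := by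
      refine IsCompact.image ?_ (continuous_subtype_val.comp b.continuous)
      exact (IsInducing.subtypeVal.isCompact_preimage_iff (by rwa [Subtype.range_coe])).2 hK
    obtain ⟨B, hB⟩ := hK'.bddAbove
    refine Filter.mem_map.2 (Filter.mem_atTop_sets.2 ⟨max B 0 + 1, fun t ht => ?_⟩)
    have ht0 : max t 0 = t := max_eq_left ((le_max_right B 0).trans (by linarith))
    refine hVU ?_
    by_contra hn
    have := hB ⟨b.symm ⟨max t 0, mem_Ici.2 (le_max_right t 0)⟩, ⟨Or.inr (Subtype.prop _), hn⟩, rfl⟩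
    simp only [Homeomorph.apply_symm_apply] at this
    linarith [le_max_left B 0]
  let β : ℝ → ℝ := fun u => E.symm ⟨b.symm ⟨Real.exp u, (Real.exp_pos u).le⟩, hJR (Subtype.prop _)⟩
  have hβ : Continuous β := by
    refine E.symm.continuous.comp (Continuous.subtype_mk ?_ _)
    exact continuous_subtype_val.comp (b.symm.continuous.comp (Real.continuous_exp.subtype_mk _))
  have hβi : Function.Injective β := by
    intro u v e
    have h1 := congrArg Subtype.val (E.symm.injective e)
    have h2 := congrArg Subtype.val (b.symm.injective (Subtype.ext h1))
    exact Real.exp_injective h2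
  have hβE : ∀ u, (E (β u) : X) = b.symm ⟨Real.exp u, (Real.exp_pos u).le⟩ := fun u => by
    simp only [β, Homeomorph.apply_symm_apply]
  have hβt : Filter.Tendsto (fun u => (E (β u) : X)) Filter.atTop (𝓝 r) := by
    refine (hlim.comp Real.tendsto_exp_atTop).congr fun u => ?_
    rw [hβE]
    simp only [Function.comp]
    congr 3
    exact max_eq_left (Real.exp_pos u).le
  rcases hβ.strictMono_of_inj hβi with hm | ha
  · let E' : ℝ ≃ₜ J := (Homeomorph.neg ℝ).trans E
    refine tail_of_tendsto hC hL hrL E' (tendsto_of_strictAnti (β := fun u => - β u) hrJ E' hβ.neg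
      hm.neg ?_)
    refine hβt.congr fun u => ?_
    simp [E']
  · exact tail_of_tendsto hC hL hrL E (tendsto_of_strictAnti hrJ E hβ ha hβt)

end

/-! ### Unions of circles are minimal sets -/

/-- Near a point `k 0` of a circle, a space with finitely many circles is cut into two sides, and a map to
the circle group supported on one side near `k 0` winds once around the circle. Up to a
real-valued correction it is inverse to the parametrisation `k`. -/
lemma exists_winding {Y : Type*} [MetricSpace Y] [CompactSpace Y] [LocallyConnectedSpace Y]
    (hfin : {C : Set Y | IsCircleSet C}.Finite) {k : UnitAddCircle → Y} (hk : Continuous k)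
    (hi : Function.Injective k) {N : Set Y} (hN : IsOpen N) (h0 : k 0 ∈ N) :
    ∃ u : Y → UnitAddCircle, Continuous u ∧ (∀ y ∉ N, u y = 0) ∧
      ∃ θ : UnitAddCircle → ℝ, Continuous θ ∧ ∀ q, u (k q) + (θ q : UnitAddCircle) = q := by
  classical
  have := locPath_of_peano Y
  obtain ⟨ρ, hρ, hno⟩ := exists_ball_no_circle hfin (k 0)
  set p := k 0 with hp
  set V : Set Y := Metric.ball p ρ ∩ N
  have hV : IsOpen V := Metric.isOpen_ball.inter hN
  have hpV : p ∈ V := ⟨Metric.mem_ball_self hρ, h0⟩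
  set κ : ℝ → Y := fun s => k (s : UnitAddCircle) with hκ
  have hκc : Continuous κ := hk.comp (AddCircle.continuous_mk' 1)
  have hκ0 : κ 0 = p := rfl
  have hκ1 : κ 1 = p := by
    simp only [hκ, hp]; congr 1; exact AddCircle.coe_period 1
  have hper : ∀ s, κ (s - 1) = κ s := fun s => by
    simp only [hκ]; congr 1
    rw [AddCircle.coe_sub, AddCircle.coe_period, sub_zero]
  have hκi : ∀ a s t, s ∈ Ico a (a + 1) → t ∈ Ico a (a + 1) → κ s = κ t → s = t := by
    intro a s t hs ht e
    exact (AddCircle.coe_eq_coe_iff_of_mem_Ico (p := (1:ℝ)) hs ht).1 (hi e)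
  obtain ⟨δ, hδ, hδ4, hδV⟩ : ∃ δ > 0, δ ≤ 1 / 4 ∧ ∀ s ∈ Icc (-δ) δ, κ s ∈ V := by
    obtain ⟨d, hd, hdV⟩ := Metric.mem_nhds_iff.1
      ((hV.preimage hκc).mem_nhds (show (0:ℝ) ∈ κ ⁻¹' V from hpV))
    refine ⟨min (d / 2) (1 / 4), by positivity, min_le_right _ _, fun s hs => hdV ?_⟩
    rw [Metric.mem_ball, dist_zero_right, Real.norm_eq_abs]
    have := min_le_left (d / 2) (1 / 4)
    have := abs_le.2 hs
    linarith
  have hne : ∀ s, s ≠ 0 → -1 < s → s < 1 → κ s ≠ p := by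
    intro s hs h1 h2 e
    rcases lt_or_gt_of_ne hs with h | h
    · have := hκi (-1) s (-1) ⟨h1.le, by linarith⟩ ⟨le_rfl, by norm_num⟩
        (by rw [e, show (-1:ℝ) = 0 - 1 by norm_num, hper, hκ0])
      linarith
    · exact hs (hκi 0 s 0 ⟨h.le, by linarith⟩ ⟨le_rfl, by norm_num⟩ e)
  set B : Set Y := connectedComponentIn (V \ {p}) (κ δ) with hB
  have hVp : IsOpen (V \ {p}) := hV.sdiff isClosed_singleton
  have hBo : IsOpen B := hVp.connectedComponentIn
  have hBV : B ⊆ V \ {p} := connectedComponentIn_subset _ _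
  have hmem : ∀ s ∈ Icc (-δ) δ, s ≠ 0 → κ s ∈ V \ {p} := fun s hs h =>
    ⟨hδV s hs, hne s h (by linarith [hs.1]) (by linarith [hs.2])⟩
  have hδB : κ δ ∈ B := mem_connectedComponentIn (hmem δ ⟨by linarith, le_rfl⟩ hδ.ne')
  have hright : ∀ s ∈ Ioc 0 δ, κ s ∈ B := by
    have : κ '' Ioc 0 δ ⊆ B := by
      refine (isPreconnected_Ioc.image _ hκc.continuousOn).subset_connectedComponentIn
        ⟨δ, ⟨hδ, le_rfl⟩, rfl⟩ ?_
      rintro _ ⟨s, hs, rfl⟩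
      exact hmem s ⟨by linarith [hs.1], hs.2⟩ hs.1.ne'
    exact fun s hs => this ⟨s, hs, rfl⟩
  have hleft : ∀ s ∈ Ico (-δ) 0, κ s ∉ B := by
    intro s hs hsB
    have hmB : κ (-δ) ∈ B := by
      have : κ '' Ico (-δ) 0 ⊆ B := by
        rw [hB, connectedComponentIn_eq hsB]
        refine (isPreconnected_Ico.image _ hκc.continuousOn).subset_connectedComponentIn
          ⟨s, hs, rfl⟩ ?_
        rintro _ ⟨t, ht, rfl⟩
        exact hmem t ⟨ht.1, by linarith [ht.2]⟩ ht.2.ne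
      exact this ⟨-δ, ⟨le_rfl, by linarith⟩, rfl⟩
    -- an arc around `p` would close up to a small circle
    obtain ⟨β, hβ, hβ0, hβ1, hβB⟩ := exists_arc_in hBo isPreconnected_connectedComponentIn hmB hδB
      (fun e => by
        have := hκi (-δ) _ _ ⟨le_rfl, by linarith⟩ ⟨by linarith, by linarith⟩ e
        linarith)
    let α : ℝ → Y := fun t => κ (-δ + 2 * δ * t)
    have hα : IsArcFn α := by
      refine ⟨hκc.comp (by fun_prop), fun s hs t ht e => ?_⟩
      have h1 : ∀ t ∈ Icc (0:ℝ) 1, -δ + 2 * δ * t ∈ Ico (-δ) (-δ + 1) := fun t ht =>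
        ⟨by nlinarith [ht.1], by nlinarith [ht.2]⟩
      have := hκi (-δ) _ _ (h1 s hs) (h1 t ht) e
      have h2 : 2 * δ * s = 2 * δ * t := by linarith
      exact mul_left_cancel₀ (by positivity) h2
    have hαV : ∀ t ∈ Icc (0:ℝ) 1, α t ∈ V := fun t ht =>
      hδV _ ⟨by nlinarith [ht.1], by nlinarith [ht.2]⟩
    obtain ⟨t, ht, htα⟩ : ∃ t ∈ Icc (0:ℝ) 1, β t ∉ α '' Icc 0 1 := by
      by_contra! hcon
      have hcl : ∀ a b, IsClosed (α '' Icc a b) := fun a b => (isCompact_Icc.image hα.1).isClosed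
      obtain ⟨y, ⟨t, ht, rfl⟩, ⟨a, ha, ea⟩, ⟨b, hb, eb⟩⟩ := isPreconnected_closed_iff.1
        (isPreconnected_Icc.image β hβ.1.continuousOn) (α '' Icc 0 (1/2)) (α '' Icc (1/2) 1)
        (hcl _ _) (hcl _ _) (by
          rintro _ ⟨t, ht, rfl⟩
          obtain ⟨s, hs, e⟩ := hcon t ht
          rcases le_total s (1/2) with h | h
          · exact Or.inl ⟨s, ⟨hs.1, h⟩, e⟩
          · exact Or.inr ⟨s, ⟨h, hs.2⟩, e⟩)
        ⟨β 0, ⟨0, ⟨le_rfl, zero_le_one⟩, rfl⟩, 0, ⟨le_rfl, by norm_num⟩, by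
          simp only [α]; rw [hβ0, mul_zero, add_zero]⟩
        ⟨β 1, ⟨1, ⟨zero_le_one, le_rfl⟩, rfl⟩, 1, ⟨by norm_num, le_rfl⟩, by
          simp only [α]; rw [hβ1]; congr 1; ring⟩
      have hab : a = b := hα.2 ⟨ha.1, by linarith [ha.2]⟩ ⟨by linarith [hb.1], hb.2⟩
        (ea.trans eb.symm)
      have ha2 : a = 1 / 2 := le_antisymm ha.2 (hab ▸ hb.1)
      have : β t = p := by
        rw [← ea, ha2, ← hκ0]; simp only [α]; congr 1; ring
      exact (hBV (hβB t)).2 this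
    obtain ⟨C, hC, hCs⟩ := theta hα hβ
      ⟨0, ⟨le_rfl, zero_le_one⟩, by simp only [α]; rw [hβ0, mul_zero, add_zero]⟩
      ⟨1, ⟨zero_le_one, le_rfl⟩, by simp only [α]; rw [hβ1]; congr 1; ring⟩ ht htα
    refine hno C hC fun y hy => ?_
    rcases hCs hy with ⟨s, hs, rfl⟩ | ⟨s, -, rfl⟩
    · exact (hαV s hs).1
    · exact (hBV (hβB s)).1.1
  obtain ⟨ε, hε, hεV, hεκ⟩ : ∃ ε > 0, Metric.ball p ε ⊆ V ∧
      ∀ s ∈ Icc δ (1 - δ), ε ≤ dist (κ s) p := by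
    have hK : IsOpen (κ '' Icc δ (1 - δ))ᶜ := (isCompact_Icc.image hκc).isClosed.isOpen_compl
    obtain ⟨ε, hε, hs⟩ := Metric.isOpen_iff.1 (hV.inter hK) p ⟨hpV, by
      rintro ⟨s, hs, e⟩
      exact hne s (by linarith [hs.1]) (by linarith [hs.1]) (by linarith [hs.2]) e⟩
    refine ⟨ε, hε, fun y hy => (hs hy).1, fun s hs' => not_lt.1 fun hlt => (hs hlt).2 ⟨s, hs', rfl⟩⟩
  let m : Y → ℝ := fun y => min (dist y p / ε) 1
  have hm : Continuous m := by fun_prop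
  have hm1 : ∀ y, ε ≤ dist y p → m y = 1 := fun y hy => min_eq_right ((one_le_div hε).2 hy)
  have hmp : m p = 0 := by simp [m]
  have hone : ((1:ℝ) : UnitAddCircle) = 0 := AddCircle.coe_period 1
  have hpB : p ∉ B := fun h => (hBV h).2 rfl
  let u : Y → UnitAddCircle := B.piecewise (fun y => (m y : UnitAddCircle)) fun _ => 0
  have huB : ∀ y ∈ B, u y = (m y : UnitAddCircle) := fun y hy => piecewise_eq_of_mem _ _ _ hy
  have huB' : ∀ y ∉ B, u y = 0 := fun y hy => piecewise_eq_of_notMem _ _ _ hy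
  have hu : Continuous u := by
    refine Continuous.piecewise (fun a ha => ?_) ((AddCircle.continuous_mk' 1).comp hm)
      continuous_const
    rw [hBo.frontier_eq] at ha
    by_cases hap : a = p
    · rw [hap, hmp]; rfl
    · have haV : a ∉ V := by
        intro haV
        have haA : a ∈ connectedComponentIn (V \ {p}) a := mem_connectedComponentIn ⟨haV, hap⟩
        obtain ⟨y, hy1, hy2⟩ := mem_closure_iff.1 ha.1 _ (hVp.connectedComponentIn (x := a)) haA
        refine ha.2 ?_
        rw [hB, connectedComponentIn_eq hy2, ← connectedComponentIn_eq hy1]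
        exact haA
      rw [hm1 a (not_lt.1 fun h => haV (hεV h)), hone]
  refine ⟨u, hu, fun y hy => huB' y fun h => hy (hBV h).1.2, ?_⟩
  let ψ : ℝ → ℝ := fun s => s - if s ≤ 1 / 2 then m (κ s) else 1
  have hψ : Continuous ψ := by
    refine continuous_id.sub (Continuous.if_le (hm.comp hκc) continuous_const continuous_id
      continuous_const fun s hs => ?_)
    exact hm1 _ (hεκ _ ⟨by linarith, by linarith⟩)
  have hψ0 : ψ 0 = 0 := by
    simp only [ψ]; rw [if_pos (by norm_num), hκ0, hmp, sub_zero]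
  have hψ1 : ψ 1 = 0 := by
    simp only [ψ]; rw [if_neg (by norm_num), sub_self]
  refine ⟨AddCircle.liftIco 1 0 ψ,
    AddCircle.liftIco_zero_continuous (hψ0.trans hψ1.symm) hψ.continuousOn, fun q => ?_⟩
  obtain ⟨⟨s, hs⟩, rfl⟩ := (AddCircle.equivIco (1:ℝ) 0).symm.surjective q
  have hq : ((AddCircle.equivIco (1:ℝ) 0).symm ⟨s, hs⟩ : UnitAddCircle) = (s : UnitAddCircle) := rfl
  rw [hq, AddCircle.liftIco_coe_apply hs]
  rw [zero_add] at hs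
  change u (κ s) + _ = _
  have key : u (κ s) = ((if s ≤ 1 / 2 then m (κ s) else 1 : ℝ) : UnitAddCircle) := by
    rcases hs.1.eq_or_lt with rfl | hs0
    · rw [if_pos (by norm_num), hκ0, hmp, huB' _ hpB]; rfl
    · rcases le_or_gt s δ with h1 | h1
      · rw [if_pos (by linarith), huB _ (hright s ⟨hs0, h1⟩)]
      · rcases le_or_gt s (1 - δ) with h2 | h2
        · have h3 := hm1 _ (hεκ s ⟨h1.le, h2⟩)
          rw [h3, ite_self, hone]
          by_cases hb : κ s ∈ B
          · rw [huB _ hb, h3, hone]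
          · exact huB' _ hb
        · rw [if_neg (by linarith), hone, huB']
          rw [← hper]
          exact hleft _ ⟨by linarith, by linarith [hs.2]⟩
  rw [key, ← AddCircle.coe_add]
  congr 1
  simp only [ψ]
  ring

/-- A circle-valued map on a closed set containing `L` extends to the whole space: it extends to a
neighbourhood of `L`, and what remains is an extension problem on a segment of the ray. -/
lemma Tail.exists_circle_extension {X : Type*} [MetricSpace X] [CompactSpace X] {L : Set X}
    {η : ℝ → X} (h : Tail L η) {K : Set X} (hK : IsClosed K) (hLK : L ⊆ K)
    {w : X → UnitAddCircle} (hw : ContinuousOn w K) :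
    ∃ W : X → UnitAddCircle, Continuous W ∧ EqOn W w K := by
  classical
  have : LocallyPathConnectedSpace UnitAddCircle :=
    (QuotientAddGroup.isOpenQuotientMap_mk.isQuotientMap).locallyPathConnectedSpace
  let e : UnitAddCircle ≃ₜ Real.Angle :=
    AddCircle.homeomorphAddCircle 1 (2 * Real.pi) one_ne_zero (by positivity)
  have htc : Continuous (fun θ : Real.Angle => (θ.toCircle : ℂ)) :=
    continuous_subtype_val.comp AddCircle.homeomorphCircle'.continuous
  let z : C(K, ℂ) := ⟨fun x => ((e (w x)).toCircle : ℂ),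
    htc.comp (e.continuous.comp (continuousOn_iff_continuous_domRestrict.1 hw))⟩
  obtain ⟨Z, hZ⟩ := ContinuousMap.exists_restrict_eq hK z
  have hZK : ∀ x ∈ K, Z x = ((e (w x)).toCircle : ℂ) := fun x hx =>
    DFunLike.congr_fun hZ ⟨x, hx⟩
  let P : X → UnitAddCircle := fun x => e.symm ((Complex.arg (Z x) : ℝ) : Real.Angle)
  have hP : ∀ x, Z x ≠ 0 → ContinuousAt P x := fun x hx =>
    e.symm.continuous.continuousAt.comp
      ((Complex.continuousAt_arg_coe_angle hx).comp Z.continuous.continuousAt)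
  have hPK : ∀ x ∈ K, P x = w x := by
    intro x hx
    simp only [P]
    rw [hZK x hx, Real.Angle.arg_toCircle, e.symm_apply_apply]
  have hZ0 : ∀ x ∈ K, Z x ≠ 0 := fun x hx => by
    rw [hZK x hx]; exact Circle.coe_ne_zero _
  obtain ⟨σ, hσ, hQ⟩ := h.exists_bound_of_disjoint
    (isClosed_singleton.preimage Z.continuous).isCompact (Q := Z ⁻¹' {0})
    (disjoint_left.2 fun x hx hxL => hZ0 x (hLK hxL) hx)
  set A := L ∪ η '' Ici σ with hA
  have hAc : IsClosed A := h.isClosed_far hσ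
  have hAη : ∀ t, 0 < t → t < σ → η t ∉ A := by
    rintro t ht0 htσ (hl | ⟨s, hs, e⟩)
    · exact h.notMem t ht0 hl
    · have := h.inj (hσ.le.trans hs) ht0.le e
      have := mem_Ici.1 hs
      linarith
  have hA0 : ∀ x ∈ A, Z x ≠ 0 := by
    intro x hx h0
    obtain ⟨t, ht, rfl⟩ := hQ h0
    exact hAη t ht.1 ht.2 hx
  set S : Set ℝ := Icc 0 σ ∩ (η ⁻¹' K ∪ {σ}) with hS
  have hSc : IsCompact S :=
    isCompact_Icc.inter_right ((hK.preimage h.cont).union isClosed_singleton)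
  have hSZ : ∀ t ∈ S, Z (η t) ≠ 0 := by
    rintro t ⟨-, ht | rfl⟩
    · exact hZ0 _ ht
    · exact hA0 _ (Or.inr ⟨t, mem_Ici.2 le_rfl, rfl⟩)
  obtain ⟨G, hG, hGS⟩ := ext_line hSc (g := P ∘ η) (fun t ht =>
    ((hP _ (hSZ t ht)).comp h.cont.continuousAt).continuousWithinAt)
  obtain ⟨τ, hτ, hτη⟩ := exists_continuous_inverse isCompact_Icc (h.cont.continuousOn (s := Icc 0 σ))
    (h.inj.mono Icc_subset_Ici_self)
  let W : X → UnitAddCircle := fun x => if x ∈ A then P x else G (τ x)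
  have hWη : ∀ t ∈ Icc 0 σ, W (η t) = G t := by
    intro t ht
    by_cases hx : η t ∈ A
    · simp only [W, if_pos hx]
      refine (hGS ⟨ht, ?_⟩).symm
      rcases ht.1.eq_or_lt with rfl | h0
      · exact Or.inl (hLK h.zero)
      · rcases ht.2.eq_or_lt with rfl | h1
        · exact Or.inr rfl
        · exact absurd hx (hAη t h0 h1)
    · simp only [W, if_neg hx, hτη t ht]
  refine ⟨W, ?_, ?_⟩
  · have hcov : (univ : Set X) = A ∪ η '' Icc 0 σ := by
      refine (eq_univ_of_forall fun x => ?_).symm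
      by_cases hx : x ∈ L
      · exact Or.inl (Or.inl hx)
      · obtain ⟨t, ht, rfl⟩ := h.cover x hx
        rcases le_total t σ with h1 | h1
        · exact Or.inr ⟨t, ⟨ht.le, h1⟩, rfl⟩
        · exact Or.inl (Or.inr ⟨t, h1, rfl⟩)
    rw [← continuousOn_univ, hcov]
    refine ContinuousOn.union_of_isClosed ?_ ?_ hAc (isCompact_Icc.image h.cont).isClosed
    · have hPA : ContinuousOn P A := fun x hx => (hP x (hA0 x hx)).continuousWithinAt
      exact hPA.congr fun x hx => if_pos hx
    · refine (hG.comp_continuousOn hτ).congr ?_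
      rintro _ ⟨t, ht, rfl⟩
      simp only [Function.comp, hWη t ht, hτη t ht]
  · intro x hx
    by_cases hxA : x ∈ A
    · simp only [W, if_pos hxA, hPK x hx]
    · obtain ⟨t, ht, rfl⟩ := h.cover x (fun hl => hxA (Or.inl hl))
      have htσ : t < σ := not_le.1 fun hc => hxA (Or.inr ⟨t, hc, rfl⟩)
      rw [hWη t ⟨ht.le, htσ.le⟩, hGS ⟨⟨ht.le, htσ.le⟩, Or.inl hx⟩]
      exact hPK _ hx

/-- The inverse of a parametrisation of a circle in `L` extends to a circle-valued map of the whole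
space, trivial outside a given neighbourhood of the circle. -/
lemma Tail.exists_param_inverse {X : Type*} [MetricSpace X] [CompactSpace X] {L : Set X}
    {η : ℝ → X} (h : Tail L η) (hlc : LocallyConnectedSpace L)
    (hfin : {C | C ⊆ L ∧ IsCircleSet C}.Finite) {k : UnitAddCircle → X} (hk : Continuous k)
    (hi : Function.Injective k) (hkL : ∀ q, k q ∈ L) {N : Set X} (hN : IsOpen N)
    (hkN : ∀ q, k q ∈ N) :
    ∃ v : X → UnitAddCircle, Continuous v ∧ (∀ x ∉ N, v x = 0) ∧ ∀ q, v (k q) = q := by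
  classical
  have : CompactSpace L := isCompact_iff_compactSpace.1 h.closedL.isCompact
  have hfinL : {C : Set L | IsCircleSet C}.Finite :=
    finite_circles_of_injective Subtype.val_injective hfin fun C hC =>
      ⟨Subtype.coe_image_subset L C,
        hC.image continuous_subtype_val.continuousOn Subtype.val_injective.injOn⟩
  obtain ⟨u, hu, hu0, θ, hθ, huθ⟩ := exists_winding hfinL (k := fun q => (⟨k q, hkL q⟩ : L))
    (hk.subtype_mk _) (fun a b e => hi (congrArg Subtype.val e))
    (hN.preimage continuous_subtype_val) (hkN 0)
  let w : X → UnitAddCircle := fun x => if hx : x ∈ L then u ⟨x, hx⟩ else 0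
  have hwL : ∀ x : L, w x = u x := fun x => dif_pos x.2
  have hwN : ∀ x ∈ Nᶜ, w x = 0 := by
    intro x hx
    by_cases hl : x ∈ L
    · simp only [w, dif_pos hl]; exact hu0 _ hx
    · simp only [w, dif_neg hl]
  have hw : ContinuousOn w (L ∪ Nᶜ) := by
    refine ContinuousOn.union_of_isClosed ?_ ?_ h.closedL hN.isClosed_compl
    · rw [continuousOn_iff_continuous_domRestrict]
      exact hu.congr fun x => (hwL x).symm
    · exact continuousOn_const.congr hwN
  obtain ⟨W, hW, hWw⟩ := h.exists_circle_extension (h.closedL.union hN.isClosed_compl)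
    subset_union_left hw
  have hce : IsClosedEmbedding k := hk.isClosedEmbedding hi
  obtain ⟨T, hT⟩ := ContinuousMap.exists_extension hce (⟨θ, hθ⟩ : C(UnitAddCircle, ℝ))
  have hTk : ∀ q, T (k q) = θ q := fun q => DFunLike.congr_fun hT q
  obtain ⟨b, hb0, hb1, -⟩ := exists_continuous_zero_one_of_isClosed hN.isClosed_compl
    hce.isClosed_range (disjoint_left.2 (by rintro _ hx ⟨q, rfl⟩; exact hx (hkN q)))
  refine ⟨fun x => W x + ((b x * T x : ℝ) : UnitAddCircle), hW.add
    ((AddCircle.continuous_mk' 1).comp (b.continuous.mul T.continuous)), ?_, ?_⟩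
  · intro x hx
    have h0 : b x = 0 := hb0 hx
    beta_reduce
    rw [hWw (Or.inr hx), hwN x hx, h0, zero_mul, zero_add]
    rfl
  · intro q
    have h1 : b (k q) = 1 := hb1 ⟨q, rfl⟩
    beta_reduce
    rw [hWw (Or.inl (hkL q)), h1, one_mul, hTk]
    exact (congrArg (· + (θ q : UnitAddCircle)) (hwL ⟨k q, hkL q⟩)).trans (huθ q)

/-- Prescribed constants on finitely many disjoint closed sets extend to a continuous map into a
Peano continuum. -/
lemma exists_extension_of_consts {X : Type*} [MetricSpace X] [CompactSpace X] {Y : Type*}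
    [MetricSpace Y] [CompactSpace Y] [LocallyConnectedSpace Y] [PathConnectedSpace Y] {ι : Type*}
    [Finite ι] {K : ι → Set X} (hK : ∀ i, IsClosed (K i))
    (hd : Pairwise (Function.onFun Disjoint K)) (y : ι → Y) :
    ∃ F : X → Y, Continuous F ∧ ∀ i, ∀ x ∈ K i, F x = y i := by
  classical
  set M := ⋃ i, K i with hM
  have hMc : IsClosed M := isClosed_iUnion_of_finite hK
  have hex : ∀ x : M, ∃ i, x.1 ∈ K i := fun x => mem_iUnion.1 x.2
  choose j hj using hex
  have hju : ∀ (x : M) i, x.1 ∈ K i → j x = i := by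
    intro x i hx
    by_contra hne
    exact disjoint_left.1 (hd hne) (hj x) hx
  have hlc : IsLocallyConstant j := by
    rw [IsLocallyConstant.iff_isOpen_fiber]
    intro i
    have : j ⁻¹' {i} = (⋃ l : {l // l ≠ i}, (Subtype.val ⁻¹' K l.1 : Set M))ᶜ := by
      ext x
      simp only [mem_preimage, mem_singleton_iff, mem_compl_iff, mem_iUnion, not_exists]
      constructor
      · rintro rfl ⟨l, hl⟩ hx
        exact hl (hju x l hx).symm
      · intro hx
        by_contra hne
        exact hx ⟨j x, hne⟩ (hj x)
    rw [this]
    exact (isClosed_iUnion_of_finite fun l : {l // l ≠ i} =>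
      (hK l.1).preimage continuous_subtype_val).isOpen_compl
  obtain ⟨F, hF, hFj⟩ := exists_extension_of_const_on_components hMc (f := fun x => y (j x))
    ((IsLocallyConstant.comp hlc y).continuous) (fun a b hab => by
      have hb : b ∈ connectedComponent a := by rw [hab]; exact mem_connectedComponent
      rw [hlc.apply_eq_of_isPreconnected isPreconnected_connectedComponent hb
        mem_connectedComponent])
  refine ⟨F, hF, fun i x hx => ?_⟩
  have hxM : x ∈ M := mem_iUnion.2 ⟨i, hx⟩
  rw [hFj ⟨x, hxM⟩, hju ⟨x, hxM⟩ i hx]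

/-- Closed curves `k i` indexed by a finite cyclic group form together a minimal set
of any map acting as `k i q ↦ k (i + 1) (q + a)` with an irrational angle `a`. -/
lemma minimalSystemOn_of_rotation {X : Type*} [TopologicalSpace X] {n : ℕ} [NeZero n]
    {k : ZMod n → UnitAddCircle → X} (hk : ∀ i, Continuous (k i)) {a : ℝ} (ha : Irrational a)
    {F : X → X} (hF : ∀ i q, F (k i q) = k (i + 1) (q + (a : UnitAddCircle))) :
    MinimalSystemOn F (⋃ i, range (k i)) := by
  refine ⟨⟨k 0 0, mem_iUnion.2 ⟨0, 0, rfl⟩⟩, ?_, ?_⟩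
  · apply Subset.antisymm
    · rintro _ ⟨x, hx, rfl⟩
      obtain ⟨i, q, rfl⟩ := mem_iUnion.1 hx
      exact mem_iUnion.2 ⟨i + 1, _, (hF i q).symm⟩
    · intro x hx
      obtain ⟨i, q, rfl⟩ := mem_iUnion.1 hx
      refine ⟨k (i - 1) (q - a), mem_iUnion.2 ⟨_, _, rfl⟩, ?_⟩
      rw [hF, sub_add_cancel, sub_add_cancel]
  · intro N hNM hne hN hFN
    refine Subset.antisymm hNM ?_
    obtain ⟨x, hx⟩ := hne
    obtain ⟨i, q, rfl⟩ := mem_iUnion.1 (hNM hx)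
    have orb : ∀ m : ℕ, k (i + m) (q + m • (a : UnitAddCircle)) ∈ N := by
      intro m
      induction m with
      | zero => simpa using hx
      | succ m ih =>
        have := hFN (mem_image_of_mem F ih)
        rw [hF] at this
        rwa [Nat.cast_succ, succ_nsmul, ← add_assoc, ← add_assoc]
    intro y hy
    obtain ⟨j, r, rfl⟩ := mem_iUnion.1 hy
    set m := (j - i).val with hm
    have orb2 : ∀ t : ℕ, k j (q + m • (a : UnitAddCircle) +
        t • ((n * a : ℝ) : UnitAddCircle)) ∈ N := by
      intro t
      have h1 := orb (m + t * n)
      have h2 : i + ((m + t * n : ℕ) : ZMod n) = j := by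
        push_cast
        rw [hm, ZMod.natCast_zmod_val, ZMod.natCast_self]
        ring
      have h3 : ((n * a : ℝ) : UnitAddCircle) = n • (a : UnitAddCircle) := by
        rw [← AddCircle.coe_nsmul, nsmul_eq_mul]
      rwa [h2, add_nsmul, mul_nsmul', ← h3, ← add_assoc] at h1
    have hd : DenseRange (· • ((n * a : ℝ) : UnitAddCircle) : ℕ → UnitAddCircle) := by
      rw [← denseRange_zsmul_iff_nsmul, AddCircle.denseRange_zsmul_coe_iff, div_one]
      exact ha.natCast_mul (NeZero.ne n)
    have hcl : IsClosed {s | k j (q + m • (a : UnitAddCircle) + s) ∈ N} :=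
      hN.preimage ((hk j).comp (continuous_const.add continuous_id))
    have hall := hd.closure_range.symm.subset.trans
      (hcl.closure_subset_iff.2 (range_subset_iff.2 orb2))
    have := hall (mem_univ (r - (q + m • (a : UnitAddCircle))))
    rwa [mem_ofPred_eq, add_sub_cancel] at this

lemma Tail.mspace_of_circles {X : Type*} [MetricSpace X] [CompactSpace X] {L : Set X}
    {η : ℝ → X} (h : Tail L η) (hL : L.Nontrivial) (hLc : IsConnected L)
    (hlc : LocallyConnectedSpace L) (hfin : {C | C ⊆ L ∧ IsCircleSet C}.Finite) {M : Set X}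
    (hM : FinUnionDisjCircles M) : M ∈ MSpace X := by
  classical
  obtain ⟨n, C₀, hn, hC₀, hd₀, rfl⟩ := hM
  have : NeZero n := ⟨hn.ne'⟩
  set C : ZMod n → Set X := fun i => C₀ ((ZMod.finEquiv n).symm i) with hCdef
  have hd : Pairwise (Function.onFun Disjoint C) := fun i j hij =>
    hd₀ fun e => hij ((ZMod.finEquiv n).symm.injective e)
  have hU : ⋃ i, C₀ i = ⋃ i, C i :=
    ((ZMod.finEquiv n).symm.surjective.iUnion_comp C₀).symm
  have hC : ∀ i, IsCircleSet (C i) := fun i => hC₀ _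
  rw [hU]
  choose k hk hki hkC using fun i => isCircleSet_iff.1 (hC i)
  have hkL : ∀ i q, k i q ∈ L := fun i q =>
    h.circle_subset hL (hC i) (hkC i ▸ mem_range_self q)
  have hkCm : ∀ i q, k i q ∈ C i := fun i q => hkC i ▸ mem_range_self q
  have hCc : ∀ i, IsClosed (C i) := fun i => (hC i).isCompact.isClosed
  have := (convex_Icc (0:ℝ) n).locallyPathConnectedSpace
  have : PathConnectedSpace (Icc (0:ℝ) n) := isPathConnected_iff_pathConnectedSpace.1
    ((convex_Icc (0:ℝ) n).isPathConnected ⟨0, le_rfl, Nat.cast_nonneg n⟩)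
  -- A continuous function taking the value `i` on the circle `C i` separates the circles.
  obtain ⟨I, hI, hIC⟩ := exists_extension_of_consts hCc hd
    (fun i => (⟨i.val, Nat.cast_nonneg _, Nat.cast_le.2 (ZMod.val_lt i).le⟩ : Icc (0:ℝ) n))
  have hI' : Continuous fun x => (I x : ℝ) := continuous_subtype_val.comp hI
  set K : ZMod n → Set X := fun i => {x | |(I x : ℝ) - i.val| ≤ 1 / 4} with hK
  set N : ZMod n → Set X := fun i => {x | |(I x : ℝ) - i.val| < 1 / 4} with hN
  have hKc : ∀ i, IsClosed (K i) := fun i =>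
    isClosed_le (hI'.sub continuous_const).abs continuous_const
  have hNo : ∀ i, IsOpen (N i) := fun i =>
    isOpen_lt (hI'.sub continuous_const).abs continuous_const
  have hNK : ∀ i, N i ⊆ K i := fun i x hx => le_of_lt (show |(I x : ℝ) - i.val| < 1 / 4 from hx)
  have huniq : ∀ i j x, x ∈ K i → x ∈ K j → i = j := by
    intro i j x hi hj
    have hi' := abs_le.1 (show |(I x : ℝ) - i.val| ≤ 1 / 4 from hi)
    have hj' := abs_le.1 (show |(I x : ℝ) - j.val| ≤ 1 / 4 from hj)
    apply ZMod.val_injective n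
    by_contra hne
    rcases lt_or_gt_of_ne hne with hlt | hlt
    · have : (i.val : ℝ) + 1 ≤ j.val := by exact_mod_cast hlt
      linarith [hi'.1, hj'.2, hi'.2, hj'.1]
    · have : (j.val : ℝ) + 1 ≤ i.val := by exact_mod_cast hlt
      linarith [hi'.1, hj'.2, hi'.2, hj'.1]
  have hKd : Pairwise (Function.onFun Disjoint K) := fun i j hij =>
    disjoint_left.2 fun x hi hj => hij (huniq i j x hi hj)
  have hkN : ∀ i q, k i q ∈ N i := by
    intro i q
    have : I (k i q) = _ := hIC i _ (hkCm i q)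
    simp only [hN, mem_ofPred_eq, this, sub_self, abs_zero]
    norm_num
  choose v hv hv0 hvk using fun i =>
    h.exists_param_inverse hlc hfin (hk i) (hki i) (hkL i) (hNo i) (hkN i)
  have : CompactSpace L := isCompact_iff_compactSpace.1 h.closedL.isCompact
  have := locPath_of_peano L
  have : ConnectedSpace L := isConnected_iff_connectedSpace.1 hLc
  have : PathConnectedSpace L := pathConnectedSpace_iff_connectedSpace.2 this
  set a : UnitAddCircle := ((√2 : ℝ) : UnitAddCircle) with ha
  obtain ⟨H, hH, hHK⟩ := exists_extension_of_consts hKc hKd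
    (fun i => (⟨k (i + 1) a, hkL _ _⟩ : L))
  let F : X → X := fun x =>
    if hx : ∃ i, x ∈ N i then k (hx.choose + 1) (v hx.choose x + a) else H x
  have hFK : ∀ i, ∀ x ∈ K i, F x = k (i + 1) (v i x + a) := by
    intro i x hx
    by_cases he : ∃ j, x ∈ N j
    · have : he.choose = i := huniq _ _ x (hNK _ he.choose_spec) hx
      simp only [F, dif_pos he, this]
    · simp only [F, dif_neg he]
      rw [hHK i x hx, hv0 i x fun hxi => he ⟨i, hxi⟩, zero_add]
  have hFcont : Continuous F := by
    have hcov : (univ : Set X) = (⋃ i, K i) ∪ (⋃ i, N i)ᶜ := by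
      refine (eq_univ_of_forall fun x => ?_).symm
      by_cases hx : x ∈ ⋃ i, N i
      · exact Or.inl (iUnion_mono hNK hx)
      · exact Or.inr hx
    rw [← continuousOn_univ, hcov]
    refine ContinuousOn.union_of_isClosed ?_ ?_ (isClosed_iUnion_of_finite hKc)
      (isOpen_iUnion hNo).isClosed_compl
    · refine (locallyFinite_of_finite K).continuousOn_iUnion hKc fun i => ?_
      exact ((hk _).comp ((hv i).add continuous_const)).continuousOn.congr (hFK i)
    · refine (continuous_subtype_val.comp hH).continuousOn.congr fun x hx => ?_
      exact dif_neg fun he => hx (mem_iUnion.2 he)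
  have hmin := minimalSystemOn_of_rotation hk irrational_sqrt_two (F := F) (fun i q => by
    rw [hFK i _ (hNK i (hkN i q)), hvk])
  simp only [hkC] at hmin
  exact ⟨isCompact_iUnion fun i => (hC i).isCompact, F, hFcont, hmin⟩

/-! ### The characterisation -/

lemma IsCantoroid.image {Y Z : Type*} [TopologicalSpace Y] [TopologicalSpace Z] {M : Set Y}
    (hM : IsCantoroid M) {f : Y → Z} (hf : IsEmbedding f) : IsCantoroid (f '' M) := by
  obtain ⟨hne, hMk, hni, hd⟩ := hM
  have e : M ≃ₜ f '' M := hf.homeomorphImage M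
  refine ⟨hne.image f, hMk.image hf.continuous, fun y hy => ?_, ?_⟩
  · refine hni (e.symm y) ?_
    have := hy.preimage e.continuous
    rwa [show e ⁻¹' {y} = {e.symm y} by
      ext x
      rw [mem_preimage, mem_singleton_iff, mem_singleton_iff, e.eq_symm_apply]] at this
  · refine (e.surjective.denseRange.dense_image e.continuous hd).mono ?_
    rintro _ ⟨x, hx, rfl⟩
    refine Subset.antisymm (fun y hy => ?_) (singleton_subset_iff.2 mem_connectedComponent)
    have h1 := e.symm.continuous.image_connectedComponent_subset (e x) (mem_image_of_mem _ hy)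
    rw [e.symm_apply_apply] at h1
    have h2 : e.symm y ∈ ({x} : Set M) := Eq.mp (congrArg (e.symm y ∈ ·) hx) h1
    rw [mem_singleton_iff, ← mem_singleton_iff.1 h2, e.apply_symm_apply]

lemma FinUnionDisjCircles.image {Y Z : Type*} [TopologicalSpace Y] [T2Space Y]
    [TopologicalSpace Z] [T2Space Z] {M : Set Y} (hM : FinUnionDisjCircles M) {f : Y → Z}
    (hf : Continuous f) (hi : Function.Injective f) : FinUnionDisjCircles (f '' M) := by
  obtain ⟨n, C, hn, hC, hd, rfl⟩ := hM
  exact ⟨n, fun i => f '' C i, hn, fun i => (hC i).image hf.continuousOn hi.injOn,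
    fun i j hij => (disjoint_image_iff hi).2 (hd hij), image_iUnion⟩

lemma FinUnionDisjCircles.infinite {X : Type*} [TopologicalSpace X] [T2Space X] {M : Set X}
    (hM : FinUnionDisjCircles M) : M.Infinite := by
  obtain ⟨n, C, hn, hC, -, rfl⟩ := hM
  exact (hC ⟨0, hn⟩).infinite.mono (subset_iUnion C _)

lemma IsCantoroid.infinite {X : Type*} [TopologicalSpace X] [T2Space X] {M : Set X}
    (hM : IsCantoroid M) : M.Infinite := by
  intro hfin
  have : Finite M := hfin.to_subtype
  obtain ⟨x, hx⟩ := hM.1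
  exact hM.2.2.1 ⟨x, hx⟩ (isOpen_discrete _)

lemma IsCantoroid.not_circles {X : Type*} [TopologicalSpace X] [T2Space X] {M : Set X}
    (hM : IsCantoroid M) : ¬ FinUnionDisjCircles M := by
  rintro ⟨n, C, hn, hC, -, rfl⟩
  have : Nonempty ↥(⋃ i, C i) := hM.1.to_subtype
  obtain ⟨x, hx⟩ := hM.2.2.2.nonempty
  obtain ⟨i, hi⟩ := mem_iUnion.1 x.2
  have hpre : IsPreconnected (Subtype.val ⁻¹' C i : Set ↥(⋃ i, C i)) := by
    rw [← IsInducing.subtypeVal.isPreconnected_image, Subtype.image_preimage_coe,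
      inter_eq_right.2 (subset_iUnion C i)]
    exact (hC i).isConnected.isPreconnected
  refine (hC i).infinite ((finite_singleton x.1).subset fun y hy => ?_)
  have h1 : (⟨y, mem_iUnion.2 ⟨i, hy⟩⟩ : ↥(⋃ i, C i)) ∈ connectedComponent x :=
    hpre.subset_connectedComponent hi hy
  have h2 := Eq.mp (congrArg ((⟨y, mem_iUnion.2 ⟨i, hy⟩⟩ : ↥(⋃ i, C i)) ∈ ·) hx) h1
  exact congrArg Subtype.val h2

lemma IsMinMap.of_factor {A B : Type*} [TopologicalSpace A] [TopologicalSpace B] {r : A → A}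
    {g : B → B} (hr : IsMinMap r) {ψ : A → B} (hψ : Continuous ψ) (hs : Function.Surjective ψ)
    (hc : ∀ x, g (ψ x) = ψ (r x)) : IsMinMap g := by
  intro N hN hNc hinv
  have h1 := hr (ψ ⁻¹' N) (hN.preimage hs) (hNc.preimage hψ) (fun x hx => by
    rw [mem_preimage, ← hc]; exact hinv _ hx)
  rw [eq_univ_iff_forall]
  intro y
  obtain ⟨x, rfl⟩ := hs y
  have : x ∈ ψ ⁻¹' N := by rw [h1]; trivial
  exact this

/-- An infinite minimal set lies in a compact locally connected subspace with finitely many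
circles, to which the dichotomy for minimal maps applies. -/
lemma Tail.cantoroid_or_circles_of_mem {X : Type*} [MetricSpace X] [CompactSpace X] {L : Set X}
    {η : ℝ → X} (h : Tail L η) (hL : L.Nontrivial) (hlc : LocallyConnectedSpace L)
    (hfin : {C | C ⊆ L ∧ IsCircleSet C}.Finite) {M : Set X} (hM : M ∈ MSpace X)
    (hinf : M.Infinite) : IsCantoroid M ∨ FinUnionDisjCircles M := by
  obtain ⟨c, hc, hMc⟩ := h.minimal_bounded hL hlc hM
  obtain ⟨hMk, f, hf, hm⟩ := hM
  have hmaps : MapsTo f M M := fun x hx => hm.2.1 ▸ mem_image_of_mem f hx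
  have : CompactSpace ↥(L ∪ η '' Icc 0 c) :=
    isCompact_iff_compactSpace.1 (h.isClosed_near c).isCompact
  have := h.locConn_near hlc c
  set M' : Set ↥(L ∪ η '' Icc 0 c) := Subtype.val ⁻¹' M with hM'
  have hval : Subtype.val '' M' = M := by
    rw [hM', Subtype.image_preimage_coe, inter_eq_right.2 hMc]
  let g : M' → M' := fun x => ⟨⟨f x.1.1, hMc (hmaps x.2)⟩, hmaps x.2⟩
  have hg : Continuous g :=
    ((hf.comp (continuous_subtype_val.comp continuous_subtype_val)).subtype_mk _).subtype_mk _
  have hgm : IsMinMap g := (hm.isMinMap hMk.isClosed hmaps).of_factor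
    (ψ := fun x => ⟨⟨x.1, hMc x.2⟩, x.2⟩) ((continuous_subtype_val.subtype_mk _).subtype_mk _)
    (fun y => ⟨⟨y.1.1, y.2⟩, rfl⟩) (fun x => rfl)
  have hinf' : M'.Infinite := fun hf' => hinf (hval ▸ hf'.image _)
  rcases cantoroid_or_circles (h.finite_circles_near hL hfin c)
    (hMk.isClosed.preimage continuous_subtype_val) hinf' hg hgm with hcase | hcase
  · exact Or.inl (hval ▸ hcase.image IsEmbedding.subtypeVal)
  · exact Or.inr (hval ▸ hcase.image continuous_subtype_val Subtype.val_injective)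

/-- If `X = L ∪ J ∪ R ∈ 𝒞`, `R` a singleton, `L` a nondegenerate local
dendrite, `R ⊆ L`, then `M ∈ 𝓜(X)` iff exactly one of the following holds:
(1) `M` is a nonempty finite set; (2) `M` is a union of finitely many pairwise disjoint
circles; (3) `M` is a cantoroid contained in `L ∪ A` for some arc `A` with
`R ⊆ A ⊊ R ∪ J`. -/
theorem stmt6 {X : Type*} [TopologicalSpace X] [CompactSpace X] [ConnectedSpace X]
    [TopologicalSpace.MetrizableSpace X] {L J R : Set X} (hC : ClassC L J R)
    (hR : ∃ x, R = {x}) (hL : L.Nontrivial) (hRL : R ⊆ L) (hLd : IsLocalDendrite L) :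
    ∀ M : Set X, M ∈ MSpace X ↔
      (((M.Finite ∧ M.Nonempty) ∧ ¬ FinUnionDisjCircles M ∧
         ¬ (IsCantoroid M ∧ ∃ A : Set X, IsArc A ∧ R ⊆ A ∧ A ⊆ R ∪ J ∧ A ≠ R ∪ J ∧
              M ⊆ L ∪ A)) ∨
       (FinUnionDisjCircles M ∧ ¬ (M.Finite ∧ M.Nonempty) ∧
         ¬ (IsCantoroid M ∧ ∃ A : Set X, IsArc A ∧ R ⊆ A ∧ A ⊆ R ∪ J ∧ A ≠ R ∪ J ∧
              M ⊆ L ∪ A)) ∨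
       ((IsCantoroid M ∧ ∃ A : Set X, IsArc A ∧ R ⊆ A ∧ A ⊆ R ∪ J ∧ A ≠ R ∪ J ∧
           M ⊆ L ∪ A) ∧
         ¬ (M.Finite ∧ M.Nonempty) ∧ ¬ FinUnionDisjCircles M)) := by
  letI : MetricSpace X := TopologicalSpace.metrizableSpaceMetric X
  obtain ⟨r, rfl⟩ := hR
  obtain ⟨-, hLc, hlc, hfin⟩ := hLd
  obtain ⟨η, h, hη0, hηJ⟩ := exists_tail hC hL (hRL rfl)
  intro M
  have arc : ∀ c : ℝ, ∃ A : Set X, IsArc A ∧ {r} ⊆ A ∧ A ⊆ {r} ∪ J ∧ A ≠ {r} ∪ J ∧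
      L ∪ η '' Icc 0 c ⊆ L ∪ A := by
    intro c
    have hc : (0:ℝ) < max c 1 := lt_max_of_lt_right one_pos
    refine ⟨η '' Icc 0 (max c 1), h.isArc hc, ?_, ?_, ?_, Tail.mono _ _ (le_max_left _ _)⟩
    · rintro _ rfl
      exact ⟨0, ⟨le_rfl, hc.le⟩, hη0⟩
    · rintro _ ⟨t, ht, rfl⟩
      rcases ht.1.eq_or_lt with rfl | ht0
      · exact Or.inl hη0
      · exact Or.inr (hηJ ▸ mem_image_of_mem η ht0)
    · intro heq
      have hpos : (0:ℝ) < max c 1 + 1 := by linarith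
      have hmem : η (max c 1 + 1) ∈ ({r} ∪ J : Set X) :=
        Or.inr (hηJ ▸ mem_image_of_mem η hpos)
      rw [← heq] at hmem
      have := (h.mem_iff hpos).1 (Or.inr hmem)
      linarith
  constructor
  · intro hM
    by_cases hf : M.Finite
    · exact Or.inl ⟨⟨hf, hM.2.choose_spec.2.1⟩, fun h2 => h2.infinite hf,
        fun h3 => h3.1.infinite hf⟩
    · right
      rcases h.cantoroid_or_circles_of_mem hL hlc hfin hM hf with h3 | h2
      · right
        obtain ⟨c, -, hMc⟩ := h.minimal_bounded hL hlc hM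
        obtain ⟨A, h1, h2, h4, h5, h6⟩ := arc c
        exact ⟨⟨h3, A, h1, h2, h4, h5, hMc.trans h6⟩, fun hf' => hf hf'.1, h3.not_circles⟩
      · exact Or.inl ⟨h2, fun hf' => hf hf'.1, fun h3 => h3.1.not_circles h2⟩
  · rintro (⟨⟨hf, hne⟩, -, -⟩ | ⟨h2, -, -⟩ | ⟨⟨h3, A, hA, -, -, -, hMA⟩, -, -⟩)
    · exact h.mspace_of_finite hLc hlc hf hne
    · exact h.mspace_of_circles hL hLc hlc hfin h2
    · obtain ⟨c, hc, hAc⟩ := h.exists_bound_of_arc hL hA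
      exact h.mspace_of_cantoroid hLc hlc h3 hc
        (hMA.trans (union_subset subset_union_left hAc))
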